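/- Let p ∈ (7/3, 8/3) and let γ ∈ W^{3p/2−2,2}(ℝ/ℤ,ℝⁿ) be injective, parametrized by arc-length, and a stationary point of E_{p,2} with respect to fixed length, i.e. assume there exists λ ∈ ℝ such that δE_{p,2}(γ;h) + λ ∫_{ℝ/ℤ} ⟨γ'(u), h'(u)⟩ du = 0 for all h ∈ C^∞(ℝ/ℤ,ℝⁿ). Then γ ∈ C^∞(ℝ/ℤ,ℝⁿ). -/

import Mathlib

open MeasureTheory Set Filter Topology
open scoped ENNReal

noncomputable section

/-- The area `|a ∧ b|` of the parallelogram spanned by `a, b ∈ ℝⁿ`. -/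
def wedgeNorm {n : ℕ} (a b : EuclideanSpace ℝ (Fin n)) : ℝ :=
  Real.sqrt (‖a‖ ^ 2 * ‖b‖ ^ 2 - (inner ℝ a b : ℝ) ^ 2)

/-- `1 / R^{p,q}(x,y,z) = |(y-x) ∧ (z-x)|^q / (|y-z| |y-x| |z-x|)^p`. -/
def invR {n : ℕ} (p q : ℝ) (x y z : EuclideanSpace ℝ (Fin n)) : ℝ :=
  wedgeNorm (y - x) (z - x) ^ q / (‖y - z‖ * ‖y - x‖ * ‖z - x‖) ^ p

/-- The generalized integral Menger curvature `E_{p,q}` of a closed curve,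
modelled by a `1`-periodic function together with its derivative,
the parameter domain `ℝ/ℤ` being represented by `[0,1)`; values in `[0,∞]`. -/
def menger {n : ℕ} (p q : ℝ) (γ γ' : ℝ → EuclideanSpace ℝ (Fin n)) : ℝ≥0∞ :=
  ∫⁻ u₁ in Ico (0:ℝ) 1, ∫⁻ u₂ in Ico (0:ℝ) 1, ∫⁻ u₃ in Ico (0:ℝ) 1,
    ENNReal.ofReal (‖γ' u₁‖ * ‖γ' u₂‖ * ‖γ' u₃‖ * invR p q (γ u₁) (γ u₂) (γ u₃))

/-- Injectivity of a `1`-periodic curve as a map on `ℝ/ℤ`. -/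
def InjCircle {n : ℕ} (γ : ℝ → EuclideanSpace ℝ (Fin n)) : Prop :=
  ∀ u v : ℝ, γ u = γ v → ∃ k : ℤ, v = u + k

/-- Distance on `ℝ/ℤ`. -/
def circleDist (u v : ℝ) : ℝ := ⨅ k : ℤ, |u - v - (k : ℝ)|

/-- The `ρ`-th power of the Sobolev–Slobodeckiĭ seminorm `[f]_{W^{1+s,ρ}}`
of a periodic function with derivative `f'`; values in `[0,∞]`. -/
def sobSemiPow {n : ℕ} (s ρ : ℝ) (f' : ℝ → EuclideanSpace ℝ (Fin n)) : ℝ≥0∞ :=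
  ∫⁻ u in Ico (0:ℝ) 1, ∫⁻ w in Icc (-(1/2) : ℝ) (1/2),
    ENNReal.ofReal (‖f' (u + w) - f' u‖ ^ ρ / |w| ^ (1 + ρ * s))

/-- The norm `‖f‖_{W^{1+s,ρ}} = ‖f‖_{W^{1,ρ}} + [f]_{W^{1+s,ρ}}`. -/
def sobNorm {n : ℕ} (s ρ : ℝ) (f f' : ℝ → EuclideanSpace ℝ (Fin n)) : ℝ :=
  (∫ u in Ico (0:ℝ) 1, ‖f u‖ ^ ρ) ^ (1/ρ) + (∫ u in Ico (0:ℝ) 1, ‖f' u‖ ^ ρ) ^ (1/ρ)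
    + (sobSemiPow s ρ f').toReal ^ (1/ρ)

/-- `γ` is a closed `W^{1,1}` curve with weak derivative `γ'`:
both are `1`-periodic, `γ'` is measurable and `γ` is the primitive of `γ'`. -/
structure CurvePair {n : ℕ} (γ γ' : ℝ → EuclideanSpace ℝ (Fin n)) : Prop where
  periodic : Function.Periodic γ 1
  periodic' : Function.Periodic γ' 1
  meas' : Measurable γ'
  primitive : ∀ u, γ u = γ 0 + ∫ t in (0:ℝ)..u, γ' t

/-- The `k`-th Fourier coefficient `f̂_k ∈ ℂⁿ` of a `1`-periodic function. -/
def fourierCoef {n : ℕ} (f : ℝ → EuclideanSpace ℝ (Fin n)) (k : ℤ) :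
    EuclideanSpace ℂ (Fin n) :=
  (WithLp.equiv 2 (Fin n → ℂ)).symm fun j =>
    ∫ x in Ico (0:ℝ) 1, (f x j : ℂ) *
      Complex.exp (-(((2 * Real.pi * (k : ℝ) * x : ℝ) : ℂ) * Complex.I))

/-!
A Sobolev curve is a weighted Hartley series whose coefficients form a point of a Hilbert space,
and near an injective unit-speed curve the Menger energy is a smooth functional of that point. Add
to it the Dirichlet energy with the Lagrange multiplier and a penalty that vanishes to second order
on unit-speed curves. At an injective unit-speed curve the Hessian of the sum satisfies a Gårding
inequality: it is coercive up to finitely many frequencies. A stationary curve `γ` is a critical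
point, and since the energy is invariant under translation of the parameter, so is every point of
the orbit `τ ↦ γ (· + τ)`. The low frequencies of this orbit depend smoothly on `τ`. By the inverse
function theorem, the gradient of the energy together with the low frequencies locally determines a
curve smoothly, so the orbit is smooth in `τ`; evaluating it at a point of the circle shows that `γ`
is smooth.
-/

open scoped BoundedContinuousFunction

/-! ### Critical orbits of coercive functionals -/

theorem contDiffAt_of_contDiffAt_comp {𝕜 T X Y : Type*} [RCLike 𝕜] [NormedAddCommGroup T]
    [NormedSpace 𝕜 T] [NormedAddCommGroup X] [NormedSpace 𝕜 X] [CompleteSpace X]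
    [NormedAddCommGroup Y] [NormedSpace 𝕜 Y] {m : WithTop ℕ∞} {Ψ : X → Y} {o : T → X} {τ₀ : T}
    {e : X ≃L[𝕜] Y} (hΨ : ContDiffAt 𝕜 m Ψ (o τ₀)) (he : HasFDerivAt Ψ (e : X →L[𝕜] Y) (o τ₀))
    (hm : m ≠ 0) (ho : ContinuousAt o τ₀) (hΨo : ContDiffAt 𝕜 m (fun τ => Ψ (o τ)) τ₀) :
    ContDiffAt 𝕜 m o τ₀ := by
  have hleft := (hΨ.hasStrictFDerivAt' he hm).eventually_left_inverse
  refine (ContDiffAt.comp τ₀ (hΨ.to_localInverse he hm) hΨo).congr_of_eventuallyEq ?_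
  filter_upwards [ho.eventually hleft] with τ hτ using hτ.symm

theorem exists_continuousLinearEquiv_of_isCoercive {X : Type*} [NormedAddCommGroup X]
    [InnerProductSpace ℝ X] [CompleteSpace X] {B : X →L[ℝ] X →L[ℝ] ℝ} (hB : IsCoercive B) :
    ∃ e : X ≃L[ℝ] (X →L[ℝ] ℝ), (e : X →L[ℝ] (X →L[ℝ] ℝ)) = B := by
  refine ⟨hB.continuousLinearEquivOfBilin.trans
    (InnerProductSpace.toDual ℝ X).toContinuousLinearEquiv, ?_⟩
  ext v w
  exact hB.continuousLinearEquivOfBilin_apply v w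

-- Apply the inverse function theorem to `G' + P`, which agrees with `P` along the orbit.
theorem contDiffAt_orbit_of_coercive {T X : Type*} [NormedAddCommGroup T] [NormedSpace ℝ T]
    [NormedAddCommGroup X] [InnerProductSpace ℝ X] [CompleteSpace X] {G : X → ℝ} {o : T → X}
    {τ₀ : T} (hG : ContDiffAt ℝ (⊤ : ℕ∞) G (o τ₀)) (ho : ContinuousAt o τ₀)
    (hcrit : ∀ᶠ τ in 𝓝 τ₀, fderiv ℝ G (o τ) = 0) (P : X →L[ℝ] X)
    (hP : ContDiffAt ℝ (⊤ : ℕ∞) (fun τ => P (o τ)) τ₀)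
    (hco : ∃ c > 0, ∀ h, c * ‖h‖ ^ 2 ≤ fderiv ℝ (fderiv ℝ G) (o τ₀) h h + inner ℝ (P h) h) :
    ContDiffAt ℝ (⊤ : ℕ∞) o τ₀ := by
  have hdG : ContDiffAt ℝ (⊤ : ℕ∞) (fderiv ℝ G) (o τ₀) := hG.fderiv_right le_rfl
  let D : X →L[ℝ] (X →L[ℝ] ℝ) := (innerSL ℝ).comp P
  obtain ⟨c, hc, hcoercive⟩ := hco
  have hB : IsCoercive (fderiv ℝ (fderiv ℝ G) (o τ₀) + D) :=
    ⟨c, hc, fun h => by simpa [D, pow_two, mul_assoc] using hcoercive h⟩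
  obtain ⟨e, he⟩ := exists_continuousLinearEquiv_of_isCoercive hB
  refine contDiffAt_of_contDiffAt_comp (Ψ := fun x => fderiv ℝ G x + D x) (e := e)
    (hdG.add D.contDiff.contDiffAt) ?_ (by simp) ho ?_
  · rw [he]
    exact (hdG.differentiableAt (by simp)).hasFDerivAt.add D.hasFDerivAt
  · refine ((innerSL ℝ (E := X)).contDiff.contDiffAt.comp τ₀ hP).congr_of_eventuallyEq ?_
    filter_upwards [hcrit] with τ hτ
    simp [hτ, D]

/-! ### Real powers of bounded continuous functions -/

section RealPowers

variable {α : Type*} [TopologicalSpace α]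

theorem boundedContinuousFunction_exp_apply (y : α →ᵇ ℝ) (z : α) :
    (NormedSpace.exp y) z = Real.exp (y z) := by
  let evalAt : (α →ᵇ ℝ) →+* ℝ :=
    { toFun := fun y => y z
      map_one' := rfl
      map_mul' := fun _ _ => rfl
      map_zero' := rfl
      map_add' := fun _ _ => rfl }
  have hcont : Continuous evalAt := continuous_eval_const z
  rw [Real.exp_eq_exp_ℝ]
  exact NormedSpace.map_exp evalAt hcont y

theorem exists_continuousLinearEquiv_exp_smul {A : Type*} [NormedCommRing A] [NormedAlgebra ℝ A]
    [CompleteSpace A] (y : A) :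
    ∃ e : A ≃L[ℝ] A, (e : A →L[ℝ] A) = NormedSpace.exp y • (1 : A →L[ℝ] A) := by
  let _ := NormedAlgebra.restrictScalars ℚ ℝ A
  have hinv : ∀ y : A, NormedSpace.exp y * NormedSpace.exp (-y) = 1 := fun y => by
    rw [← NormedSpace.exp_add, add_neg_cancel, NormedSpace.exp_zero]
  refine ⟨ContinuousLinearEquiv.equivOfInverse (NormedSpace.exp y • (1 : A →L[ℝ] A))
    (NormedSpace.exp (-y) • (1 : A →L[ℝ] A)) (fun x => ?_) fun x => ?_, rfl⟩
  · change NormedSpace.exp (-y) * (NormedSpace.exp y * x) = x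
    rw [mul_left_comm, ← mul_assoc, hinv, one_mul]
  · change NormedSpace.exp y * (NormedSpace.exp (-y) * x) = x
    rw [← mul_assoc, hinv, one_mul]

theorem exists_exp_eq_of_le (q : α →ᵇ ℝ) {c : ℝ} (hc : 0 < c) (hq : ∀ z, c ≤ q z) :
    ∃ y : α →ᵇ ℝ, NormedSpace.exp y = q := by
  have hpos : ∀ z, 0 < q z := fun z => hc.trans_le (hq z)
  refine ⟨BoundedContinuousFunction.ofNormedAddCommGroup (fun z => Real.log (q z))
    (q.continuous.log fun z => (hpos z).ne') (max |Real.log c| |Real.log ‖q‖|) fun z => ?_, ?_⟩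
  · exact abs_le_max_abs_abs (Real.log_le_log hc (hq z))
      (Real.log_le_log (hpos z) ((le_abs_self _).trans (q.norm_coe_le_norm z)))
  · ext z
    exact (boundedContinuousFunction_exp_apply _ z).trans (Real.exp_log (hpos z))

theorem exists_contDiffAt_exp_eq (q₀ : α →ᵇ ℝ) {c : ℝ} (hc : 0 < c) (hq : ∀ z, c ≤ q₀ z) :
    ∃ ℓ : (α →ᵇ ℝ) → (α →ᵇ ℝ), ContDiffAt ℝ (⊤ : ℕ∞) ℓ q₀ ∧
      ∀ᶠ q in 𝓝 q₀, NormedSpace.exp (ℓ q) = q := by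
  obtain ⟨y₀, rfl⟩ := exists_exp_eq_of_le q₀ hc hq
  obtain ⟨e, he⟩ := exists_continuousLinearEquiv_exp_smul y₀
  have hexp : ContDiffAt ℝ (⊤ : ℕ∞) (NormedSpace.exp : (α →ᵇ ℝ) → (α →ᵇ ℝ)) y₀ :=
    (NormedSpace.exp_analytic (𝕂 := ℝ) y₀).contDiffAt
  have hd : HasFDerivAt (NormedSpace.exp : (α →ᵇ ℝ) → (α →ᵇ ℝ))
      (e : (α →ᵇ ℝ) →L[ℝ] (α →ᵇ ℝ)) y₀ := by
    rw [he]
    exact (hasStrictFDerivAt_exp (𝕂 := ℝ)).hasFDerivAt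
  have htop : ((⊤ : ℕ∞) : WithTop ℕ∞) ≠ 0 := by simp
  exact ⟨hexp.localInverse hd htop, hexp.to_localInverse hd htop,
    (hexp.hasStrictFDerivAt' hd htop).eventually_right_inverse⟩

theorem exists_contDiffAt_rpow (q₀ : α →ᵇ ℝ) {c : ℝ} (hc : 0 < c) (hq : ∀ z, c ≤ q₀ z) (a : ℝ) :
    ∃ ρ : (α →ᵇ ℝ) → (α →ᵇ ℝ), ContDiffAt ℝ (⊤ : ℕ∞) ρ q₀ ∧
      ∀ᶠ q in 𝓝 q₀, ∀ z, ρ q z = q z ^ a := by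
  obtain ⟨ℓ, hℓ, hexp⟩ := exists_contDiffAt_exp_eq q₀ hc hq
  refine ⟨fun q => NormedSpace.exp (a • ℓ q), ContDiffAt.comp (g := NormedSpace.exp) q₀
    (NormedSpace.exp_analytic (𝕂 := ℝ) _).contDiffAt (hℓ.const_smul a), ?_⟩
  filter_upwards [hexp] with q h z
  have hz : Real.exp (ℓ q z) = q z := by
    rw [← boundedContinuousFunction_exp_apply, h]
  rw [boundedContinuousFunction_exp_apply, ← hz, ← Real.exp_mul, mul_comm]
  rfl

end RealPowers

/-! ### Hessians -/

section Hessian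

variable {X Z F : Type*} [NormedAddCommGroup X] [NormedSpace ℝ X] [NormedAddCommGroup Z]
  [NormedSpace ℝ Z] [NormedAddCommGroup F] [NormedSpace ℝ F]

theorem hasDerivAt_comp_line {g : Z → F} {z h : Z} {t : ℝ}
    (hg : DifferentiableAt ℝ g (z + t • h)) :
    HasDerivAt (fun t : ℝ => g (z + t • h)) (fderiv ℝ g (z + t • h) h) t := by
  refine hg.hasFDerivAt.comp_hasDerivAt t ?_
  simpa using ((hasDerivAt_id t).smul_const h).const_add z

theorem hasDerivAt_comp_line_zero {g : Z → F} {z : Z} (hg : DifferentiableAt ℝ g z) (h : Z) :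
    HasDerivAt (fun t : ℝ => g (z + t • h)) (fderiv ℝ g z h) 0 := by
  have hz : z + (0 : ℝ) • h = z := by simp
  have hline := hasDerivAt_comp_line (t := 0) (h := h) (by rwa [hz])
  rwa [hz] at hline

theorem differentiableAt_fderiv_of_contDiffAt {g : Z → F} {z : Z} (hg : ContDiffAt ℝ 2 g z) :
    DifferentiableAt ℝ (fderiv ℝ g) z :=
  (hg.fderiv_right (m := 1) (by norm_num)).differentiableAt one_ne_zero

theorem eventually_differentiableAt_of_contDiffAt {g : Z → F} {z : Z} (hg : ContDiffAt ℝ 2 g z) :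
    ∀ᶠ y in 𝓝 z, DifferentiableAt ℝ g y :=
  (hg.eventually (by simp)).mono fun _ hy => hy.differentiableAt two_ne_zero

theorem fderiv_fderiv_apply_self {g : Z → F} {z : Z} (hg : ContDiffAt ℝ 2 g z) (h : Z) :
    fderiv ℝ (fderiv ℝ g) z h h = deriv (deriv fun t : ℝ => g (z + t • h)) 0 := by
  have hz : z + (0 : ℝ) • h = z := by simp
  have hline : Tendsto (fun t : ℝ => z + t • h) (𝓝 0) (𝓝 z) := by
    have : ContinuousAt (fun t : ℝ => z + t • h) 0 := by fun_prop
    rwa [ContinuousAt, hz] at this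
  have hderiv : deriv (fun t : ℝ => g (z + t • h)) =ᶠ[𝓝 0] fun t => fderiv ℝ g (z + t • h) h := by
    filter_upwards [hline.eventually (eventually_differentiableAt_of_contDiffAt hg)] with t ht
    exact (hasDerivAt_comp_line ht).deriv
  have hdiff : DifferentiableAt ℝ (fderiv ℝ g) (z + (0 : ℝ) • h) := by
    rw [hz]
    exact differentiableAt_fderiv_of_contDiffAt hg
  have hderiv₂ : HasDerivAt (fun t : ℝ => fderiv ℝ g (z + t • h) h)
      (fderiv ℝ (fderiv ℝ g) (z + (0 : ℝ) • h) h h) 0 :=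
    (ContinuousLinearMap.apply ℝ F h).hasFDerivAt.comp_hasDerivAt 0 (hasDerivAt_comp_line hdiff)
  rw [hderiv.deriv_eq, hderiv₂.deriv, hz]

theorem fderiv_fderiv_apply_self_of_eq_eval {g : Z → ℝ} {z h : Z} (hg : ContDiffAt ℝ 2 g z)
    (P : Polynomial ℝ) (hP : ∀ t : ℝ, g (z + t • h) = P.eval t) :
    fderiv ℝ (fderiv ℝ g) z h h = 2 * P.coeff 2 := by
  have hderiv : deriv (fun t : ℝ => g (z + t • h)) = fun t => P.derivative.eval t := by
    rw [funext hP]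
    exact funext fun t => P.deriv
  rw [fderiv_fderiv_apply_self hg, hderiv, Polynomial.deriv, ← Polynomial.coeff_zero_eq_eval_zero,
    Polynomial.coeff_derivative, Polynomial.coeff_derivative]
  push_cast
  ring

theorem fderiv_fderiv_comp_clm (T : X →L[ℝ] Z) {g : Z → F} {x : X}
    (hg : ContDiffAt ℝ 2 g (T x)) (h k : X) :
    fderiv ℝ (fderiv ℝ fun x => g (T x)) x h k = fderiv ℝ (fderiv ℝ g) (T x) (T h) (T k) := by
  have hfderiv : (fderiv ℝ fun x => g (T x)) =ᶠ[𝓝 x] fun x => (fderiv ℝ g (T x)).comp T := by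
    filter_upwards [T.continuous.continuousAt.eventually
      (eventually_differentiableAt_of_contDiffAt hg)] with y hy
    exact (hy.hasFDerivAt.comp y T.hasFDerivAt).fderiv
  have hfderiv₂ : HasFDerivAt (fun x => (fderiv ℝ g (T x)).comp T)
      (((ContinuousLinearMap.compL ℝ X Z F).flip T).comp
        ((fderiv ℝ (fderiv ℝ g) (T x)).comp T)) x :=
    ((ContinuousLinearMap.compL ℝ X Z F).flip T).hasFDerivAt.comp x
      ((differentiableAt_fderiv_of_contDiffAt hg).hasFDerivAt.comp x T.hasFDerivAt)
  rw [hfderiv.fderiv_eq, hfderiv₂.fderiv]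
  rfl

theorem fderiv_fderiv_add_const_mul {f g : Z → ℝ} {z : Z} (hf : ContDiffAt ℝ 2 f z)
    (hg : ContDiffAt ℝ 2 g z) (c : ℝ) :
    fderiv ℝ (fderiv ℝ fun y => f y + c * g y) z =
      fderiv ℝ (fderiv ℝ f) z + c • fderiv ℝ (fderiv ℝ g) z := by
  have hfderiv : (fderiv ℝ fun y => f y + c * g y) =ᶠ[𝓝 z]
      fun y => fderiv ℝ f y + c • fderiv ℝ g y := by
    filter_upwards [eventually_differentiableAt_of_contDiffAt hf,
      eventually_differentiableAt_of_contDiffAt hg] with y hfy hgy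
    exact (hfy.hasFDerivAt.add (hgy.hasFDerivAt.const_mul c)).fderiv
  rw [hfderiv.fderiv_eq]
  exact ((differentiableAt_fderiv_of_contDiffAt hf).hasFDerivAt.add
    ((differentiableAt_fderiv_of_contDiffAt hg).hasFDerivAt.const_smul c)).fderiv

end Hessian

/-! ### The Hartley basis -/

/-- The Hartley functions `cas (2πku)`, where `cas = cos + sin`: a real orthonormal basis of
`L²(ℝ/ℤ)` whose elements are permuted up to scalars by differentiation. -/
def hartley (k : ℤ) (u : ℝ) : ℝ :=
  Real.cos (2 * Real.pi * k * u) + Real.sin (2 * Real.pi * k * u)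

theorem abs_hartley_le (k : ℤ) (u : ℝ) : |hartley k u| ≤ 2 :=
  (abs_add_le _ _).trans
    ((add_le_add (Real.abs_cos_le_one _) (Real.abs_sin_le_one _)).trans_eq one_add_one_eq_two)

theorem continuous_hartley (k : ℤ) : Continuous (hartley k) := by
  unfold hartley
  fun_prop

theorem hartley_neg (k : ℤ) (u : ℝ) :
    hartley (-k) u = Real.cos (2 * Real.pi * k * u) - Real.sin (2 * Real.pi * k * u) := by
  simp [hartley, sub_eq_add_neg]

theorem hartley_add (k : ℤ) (u h : ℝ) : hartley k (u + h) =
    Real.cos (2 * Real.pi * k * h) * hartley k u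
      + Real.sin (2 * Real.pi * k * h) * hartley (-k) u := by
  rw [hartley_neg]
  simp only [hartley, mul_add, Real.cos_add, Real.sin_add]
  ring

theorem cos_two_pi_mul_int (m : ℤ) : Real.cos (2 * Real.pi * m) = 1 := by
  rw [mul_comm, Real.cos_int_mul_two_pi]

theorem sin_two_pi_mul_int (m : ℤ) : Real.sin (2 * Real.pi * m) = 0 := by
  have h := Real.sin_int_mul_pi (m * 2)
  push_cast at h
  rw [← h]
  ring_nf

theorem hartley_periodic (k : ℤ) : Function.Periodic (hartley k) 1 := fun u => by
  rw [hartley_add, mul_one, cos_two_pi_mul_int, sin_two_pi_mul_int, one_mul, zero_mul, add_zero]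

theorem hasDerivAt_hartley (k : ℤ) (u : ℝ) :
    HasDerivAt (hartley k) (2 * Real.pi * k * hartley (-k) u) u := by
  have hphase : HasDerivAt (fun u : ℝ => 2 * Real.pi * k * u) (2 * Real.pi * k) u := by
    simpa using (hasDerivAt_id u).const_mul (2 * Real.pi * k)
  refine (hphase.cos.add hphase.sin).congr_deriv ?_
  rw [hartley_neg]
  ring

theorem two_pi_mul_intCast_ne_zero {m : ℤ} (hm : m ≠ 0) : 2 * Real.pi * (m : ℝ) ≠ 0 :=
  mul_ne_zero (by positivity) (Int.cast_ne_zero.2 hm)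

theorem integral_cos_two_pi_mul_int (m : ℤ) :
    ∫ u in (0 : ℝ)..1, Real.cos (2 * Real.pi * m * u) = if m = 0 then 1 else 0 := by
  split_ifs with hm
  · simp [hm]
  · rw [intervalIntegral.integral_comp_mul_left Real.cos (two_pi_mul_intCast_ne_zero hm)]
    simp [sin_two_pi_mul_int]

theorem integral_sin_two_pi_mul_int (m : ℤ) :
    ∫ u in (0 : ℝ)..1, Real.sin (2 * Real.pi * m * u) = 0 := by
  rcases eq_or_ne m 0 with rfl | hm
  · simp
  · rw [intervalIntegral.integral_comp_mul_left Real.sin (two_pi_mul_intCast_ne_zero hm)]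
    simp [cos_two_pi_mul_int]

theorem integral_hartley_mul_hartley (k j : ℤ) :
    ∫ u in (0 : ℝ)..1, hartley k u * hartley j u = if k = j then 1 else 0 := by
  have hprod : ∀ u : ℝ, hartley k u * hartley j u =
      Real.cos (2 * Real.pi * ((k - j : ℤ) : ℝ) * u)
        + Real.sin (2 * Real.pi * ((k + j : ℤ) : ℝ) * u) := fun u => by
    push_cast
    simp only [hartley, mul_sub, mul_add, sub_mul, add_mul, Real.cos_sub, Real.sin_add]
    ring
  simp_rw [hprod]
  rw [intervalIntegral.integral_add (Continuous.intervalIntegrable (by fun_prop) _ _)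
    (Continuous.intervalIntegrable (by fun_prop) _ _), integral_cos_two_pi_mul_int,
    integral_sin_two_pi_mul_int, add_zero]
  simp only [sub_eq_zero]

theorem abs_cos_sub_one_le (x : ℝ) : |Real.cos x - 1| ≤ 2 := by
  rw [abs_le]
  constructor <;> linarith [Real.neg_one_le_cos x, Real.cos_le_one x]

theorem cos_sub_one_sq_add_sin_sq (x : ℝ) :
    (Real.cos x - 1) ^ 2 + Real.sin x ^ 2 = 2 - 2 * Real.cos x := by
  linarith [Real.sin_sq_add_cos_sq x]

/-! ### Hartley series and their Fourier multipliers -/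

theorem summable_norm_sq_of_summable_norm {ι E : Type*} [SeminormedAddCommGroup E] {b : ι → E}
    (hb : Summable fun k => ‖b k‖) : Summable fun k => ‖b k‖ ^ 2 := by
  refine Summable.of_nonneg_of_le (fun k => by positivity) (fun k => ?_)
    (hb.mul_left (∑' k, ‖b k‖))
  rw [pow_two]
  exact mul_le_mul_of_nonneg_right (hb.le_tsum k fun j _ => norm_nonneg _) (norm_nonneg _)

theorem summable_symbol_sq_mul_norm_sq {ι E : Type*} [SeminormedAddCommGroup E] {b : ι → E}
    {α β : ι → ℝ} {C : ℝ} (hb : Summable fun k => ‖b k‖) (hα : ∀ k, |α k| ≤ C)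
    (hβ : ∀ k, |β k| ≤ C) : Summable fun k => (α k ^ 2 + β k ^ 2) * ‖b k‖ ^ 2 := by
  refine Summable.of_nonneg_of_le (fun k => by positivity) (fun k => ?_)
    ((summable_norm_sq_of_summable_norm hb).mul_left (C ^ 2 + C ^ 2))
  have hα2 := sq_le_sq' (neg_le_of_abs_le (hα k)) (le_of_abs_le (hα k))
  have hβ2 := sq_le_sq' (neg_le_of_abs_le (hβ k)) (le_of_abs_le (hβ k))
  gcongr

section HartleySeries

variable {V : Type*} [NormedAddCommGroup V] [NormedSpace ℝ V] {b : ℤ → V} {α β : ℤ → ℝ} {C : ℝ}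

/-- The Hartley series with coefficients `b`. -/
def hartleySeries (b : ℤ → V) (u : ℝ) : V := ∑' k, hartley k u • b k

/-- The action on Hartley coefficients of the Fourier multiplier with symbol `α + iβ`; the
multiplier preserves real functions when `α` is even and `β` is odd. -/
def hartleyMultiplier (α β : ℤ → ℝ) (b : ℤ → V) (k : ℤ) : V := α k • b k - β k • b (-k)

theorem norm_hartley_smul_le (k : ℤ) (u : ℝ) (x : V) : ‖hartley k u • x‖ ≤ 2 * ‖x‖ := by
  rw [norm_smul]
  exact mul_le_mul_of_nonneg_right (abs_hartley_le k u) (norm_nonneg _)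

theorem summable_norm_hartleyMultiplier (hb : Summable fun k => ‖b k‖) (hα : ∀ k, |α k| ≤ C)
    (hβ : ∀ k, |β k| ≤ C) : Summable fun k => ‖hartleyMultiplier α β b k‖ := by
  refine Summable.of_nonneg_of_le (fun _ => norm_nonneg _) (fun k => ?_)
    ((hb.mul_left C).add ((hb.comp_injective neg_injective).mul_left C))
  refine (norm_sub_le _ _).trans ?_
  rw [norm_smul, norm_smul]
  exact add_le_add (mul_le_mul_of_nonneg_right (hα k) (norm_nonneg _))
    (mul_le_mul_of_nonneg_right (hβ k) (norm_nonneg _))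

variable [CompleteSpace V]

theorem summable_hartley_smul (hb : Summable fun k => ‖b k‖) (u : ℝ) :
    Summable fun k => hartley k u • b k :=
  Summable.of_norm_bounded (hb.mul_left 2) fun k => norm_hartley_smul_le k u _

theorem hartleySeries_add (hb : Summable fun k => ‖b k‖) (u h : ℝ) :
    hartleySeries b (u + h) = hartleySeries (hartleyMultiplier
      (fun k => Real.cos (2 * Real.pi * k * h)) (fun k => Real.sin (2 * Real.pi * k * h)) b) u := by
  have hcos : Summable fun k : ℤ => hartley k u • (Real.cos (2 * Real.pi * k * h) • b k) := by
    refine summable_hartley_smul (Summable.of_nonneg_of_le (fun _ => norm_nonneg _)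
      (fun k => ?_) hb) u
    rw [norm_smul]
    exact mul_le_of_le_one_left (norm_nonneg _) (Real.abs_cos_le_one _)
  have hsin : Summable fun k : ℤ => hartley k u • (Real.sin (2 * Real.pi * k * h) • b (-k)) := by
    refine summable_hartley_smul (Summable.of_nonneg_of_le (fun _ => norm_nonneg _)
      (fun k => ?_) (hb.comp_injective neg_injective)) u
    rw [norm_smul]
    exact mul_le_of_le_one_left (norm_nonneg _) (Real.abs_sin_le_one _)
  have hreflect : ∀ k : ℤ, hartley (-k) u • (Real.sin (2 * Real.pi * ((-k : ℤ) : ℝ) * h) • b (- -k))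
      = -((Real.sin (2 * Real.pi * k * h) * hartley (-k) u) • b k) := fun k => by
    simp only [neg_neg, Int.cast_neg, mul_neg, neg_mul, Real.sin_neg, neg_smul, smul_neg, smul_smul,
      mul_comm (hartley (-k) u)]
  have hsin_neg := hsin.comp_injective (neg_injective (G := ℤ))
  simp only [Function.comp_def, hreflect] at hsin_neg
  simp only [hartleySeries, hartleyMultiplier, smul_sub]
  rw [hcos.tsum_sub hsin, ← tsum_comp_neg fun k : ℤ =>
    hartley k u • (Real.sin (2 * Real.pi * k * h) • b (-k))]
  simp_rw [hreflect]
  rw [← hcos.tsum_sub hsin_neg]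
  refine tsum_congr fun k => ?_
  rw [sub_neg_eq_add, hartley_add, add_smul, smul_smul, mul_comm (hartley k u)]

theorem hartleySeries_add_sub (hb : Summable fun k => ‖b k‖) (u h : ℝ) :
    hartleySeries b (u + h) - hartleySeries b u = hartleySeries (hartleyMultiplier
      (fun k => Real.cos (2 * Real.pi * k * h) - 1)
      (fun k => Real.sin (2 * Real.pi * k * h)) b) u := by
  rw [hartleySeries_add hb, hartleySeries, hartleySeries, ← Summable.tsum_sub
    (summable_hartley_smul (summable_norm_hartleyMultiplier hb
      (fun k => Real.abs_cos_le_one _) (fun k => Real.abs_sin_le_one _)) u)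
    (summable_hartley_smul hb u)]
  refine tsum_congr fun k => ?_
  rw [← smul_sub]
  simp only [hartleyMultiplier]
  module

end HartleySeries

section Parseval

variable {V : Type*} [NormedAddCommGroup V] [InnerProductSpace ℝ V] {b : ℤ → V} {α β : ℤ → ℝ}
  {C : ℝ}

theorem integral_norm_sq_sum_hartley (F : Finset ℤ) (b : ℤ → V) :
    ∫ u in (0 : ℝ)..1, ‖∑ k ∈ F, hartley k u • b k‖ ^ 2 = ∑ k ∈ F, ‖b k‖ ^ 2 := by
  have hexpand : ∀ u : ℝ, ‖∑ k ∈ F, hartley k u • b k‖ ^ 2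
      = ∑ k ∈ F, ∑ j ∈ F, (hartley k u * hartley j u) * inner ℝ (b k) (b j) := fun u => by
    simp_rw [← real_inner_self_eq_norm_sq, sum_inner, inner_sum, real_inner_smul_left,
      real_inner_smul_right, mul_assoc]
  have hc := continuous_hartley
  simp_rw [hexpand]
  rw [intervalIntegral.integral_finsetSum fun k _ =>
    Continuous.intervalIntegrable (by fun_prop) _ _]
  refine Finset.sum_congr rfl fun k hk => ?_
  rw [intervalIntegral.integral_finsetSum fun j _ =>
    Continuous.intervalIntegrable (by fun_prop) _ _]
  simp_rw [intervalIntegral.integral_mul_const, integral_hartley_mul_hartley]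
  simp [hk]

theorem hasSum_norm_sq_hartleyMultiplier (hα : ∀ k, α (-k) = α k) (hβ : ∀ k, β (-k) = -β k)
    (hs : Summable fun k => (α k ^ 2 + β k ^ 2) * ‖b k‖ ^ 2) :
    HasSum (fun k => ‖hartleyMultiplier α β b k‖ ^ 2) (∑' k, (α k ^ 2 + β k ^ 2) * ‖b k‖ ^ 2) := by
  set f : ℤ → ℝ := fun k => ‖hartleyMultiplier α β b k‖ ^ 2
  set g : ℤ → ℝ := fun k => (α k ^ 2 + β k ^ 2) * ‖b k‖ ^ 2
  have hpair : ∀ k, f k + f (-k) = g k + g (-k) := fun k => by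
    simp only [f, g, hartleyMultiplier]
    rw [neg_neg, hα, hβ, norm_sub_sq_real, norm_sub_sq_real]
    simp only [real_inner_smul_left, real_inner_smul_right, norm_smul, mul_pow, Real.norm_eq_abs,
      sq_abs, norm_neg, neg_smul, inner_neg_right]
    rw [real_inner_comm (b k) (b (-k))]
    ring
  have hgneg : Summable fun k => g (-k) := hs.comp_injective neg_injective
  have hf : Summable f := by
    refine Summable.of_nonneg_of_le (fun k => sq_nonneg _) (fun k => ?_) (hs.add hgneg)
    rw [← hpair]
    exact le_add_of_nonneg_right (sq_nonneg _)
  have hfneg : Summable fun k => f (-k) := hf.comp_injective neg_injective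
  have hfsum := hf.tsum_add hfneg
  have hgsum := hs.tsum_add hgneg
  rw [tsum_comp_neg] at hfsum hgsum
  simp_rw [hpair] at hfsum
  have htsum : ∑' k, g k = ∑' k, f k := by linarith
  exact htsum ▸ hf.hasSum

variable [CompleteSpace V]

theorem integral_norm_sq_hartleySeries (hb : Summable fun k => ‖b k‖) :
    ∫ u in (0 : ℝ)..1, ‖hartleySeries b u‖ ^ 2 = ∑' k, ‖b k‖ ^ 2 := by
  have hc := continuous_hartley
  have hlim : Tendsto (fun F : Finset ℤ => ∫ u in (0 : ℝ)..1, ‖∑ k ∈ F, hartley k u • b k‖ ^ 2)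
      atTop (𝓝 (∫ u in (0 : ℝ)..1, ‖hartleySeries b u‖ ^ 2)) := by
    refine intervalIntegral.tendsto_integral_filter_of_dominated_convergence
      (fun _ => (∑' k, 2 * ‖b k‖) ^ 2) ?_ ?_ ?_ ?_
    · exact Eventually.of_forall fun F => Continuous.aestronglyMeasurable (by fun_prop)
    · refine Eventually.of_forall fun F => Eventually.of_forall fun u _ => ?_
      rw [norm_pow, norm_norm]
      refine pow_le_pow_left₀ (norm_nonneg _) ?_ 2
      refine (norm_sum_le _ _).trans
        ((Finset.sum_le_sum fun k _ => norm_hartley_smul_le k u _).trans ?_)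
      exact (hb.mul_left 2).sum_le_tsum F fun k _ => by positivity
    · simp
    · exact Eventually.of_forall fun u _ => (summable_hartley_smul hb u).hasSum.norm.pow 2
  refine tendsto_nhds_unique hlim ?_
  simp_rw [integral_norm_sq_sum_hartley]
  exact (summable_norm_sq_of_summable_norm hb).hasSum

theorem integral_norm_sq_hartleySeries_hartleyMultiplier (hb : Summable fun k => ‖b k‖)
    (hα : ∀ k, |α k| ≤ C) (hβ : ∀ k, |β k| ≤ C) (hα' : ∀ k, α (-k) = α k)
    (hβ' : ∀ k, β (-k) = -β k) :
    ∫ u in (0 : ℝ)..1, ‖hartleySeries (hartleyMultiplier α β b) u‖ ^ 2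
      = ∑' k, (α k ^ 2 + β k ^ 2) * ‖b k‖ ^ 2 := by
  have hsum := summable_symbol_sq_mul_norm_sq hb hα hβ
  rw [integral_norm_sq_hartleySeries (summable_norm_hartleyMultiplier hb hα hβ)]
  exact (hasSum_norm_sq_hartleyMultiplier hα' hβ' hsum).tsum_eq

end Parseval

/-! ### Square summable coefficients -/

section SquareSummable

variable {ι α V : Type*} [TopologicalSpace α] [NormedAddCommGroup V]

theorem hasSum_norm_sq (a : lp (fun _ : ι => V) 2) : HasSum (fun k => ‖a k‖ ^ 2) (‖a‖ ^ 2) := by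
  simpa using lp.hasSum_norm (p := 2) (by norm_num) a

theorem summable_mul_norm {c : ι → ℝ} (hc : Summable fun k => c k ^ 2)
    (a : lp (fun _ : ι => V) 2) :
    Summable (fun k => |c k| * ‖a k‖) ∧ ∑' k, |c k| * ‖a k‖ ≤ √(∑' k, c k ^ 2) * ‖a‖ := by
  obtain ⟨hsum, hle⟩ := Real.summable_and_inner_le_Lp_mul_Lq_tsum_of_nonneg (p := 2) (q := 2)
    (f := fun k => |c k|) (g := fun k => ‖a k‖) Real.HolderConjugate.two_two
    (fun _ => abs_nonneg _) (fun _ => norm_nonneg _)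
    (by simpa using hc) (by simpa using (hasSum_norm_sq a).summable)
  have hnorm : ∑' k, ‖a k‖ ^ (2 : ℝ) = ‖a‖ ^ 2 := by simpa using (hasSum_norm_sq a).tsum_eq
  refine ⟨hsum, hle.trans_eq ?_⟩
  rw [hnorm, ← Real.sqrt_eq_rpow, ← Real.sqrt_eq_rpow, Real.sqrt_sq (norm_nonneg _)]
  simp

variable [NormedSpace ℝ V] [CompleteSpace V]

/-- The synthesis operator `a ↦ ∑ e_k a_k` from square summable coefficients to bounded continuous
functions, for functions `e_k` dominated by a square summable sequence `c_k`. -/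
def seriesCLM (e : ι → α → ℝ) (c : ι → ℝ) (he : ∀ k, Continuous (e k))
    (hec : ∀ k u, |e k u| ≤ |c k|) (hc : Summable fun k => c k ^ 2) :
    lp (fun _ : ι => V) 2 →L[ℝ] (α →ᵇ V) :=
  have hle : ∀ (a : lp (fun _ : ι => V) 2) k u, ‖e k u • a k‖ ≤ |c k| * ‖a k‖ := fun a k u => by
    rw [norm_smul]
    exact mul_le_mul_of_nonneg_right (hec k u) (norm_nonneg _)
  have hs : ∀ (a : lp (fun _ : ι => V) 2) u, Summable fun k => e k u • a k := fun a u =>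
    Summable.of_norm_bounded (summable_mul_norm hc a).1 fun k => hle a k u
  LinearMap.mkContinuous
    { toFun := fun a => BoundedContinuousFunction.ofNormedAddCommGroup
        (fun u => ∑' k, e k u • a k)
        (continuous_tsum (fun k => (he k).smul continuous_const)
          (summable_mul_norm hc a).1 fun k u => hle a k u)
        (∑' k, |c k| * ‖a k‖)
        (fun u => tsum_of_norm_bounded (summable_mul_norm hc a).1.hasSum fun k => hle a k u)
      map_add' := fun a b => by
        ext1 u
        simp only [BoundedContinuousFunction.coe_ofNormedAddCommGroup,
          BoundedContinuousFunction.coe_add, Pi.add_apply, lp.coeFn_add, smul_add]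
        exact (hs a u).tsum_add (hs b u)
      map_smul' := fun r a => by
        ext1 u
        simp only [BoundedContinuousFunction.coe_ofNormedAddCommGroup,
          BoundedContinuousFunction.coe_smul, Pi.smul_apply, lp.coeFn_smul, RingHom.id_apply]
        rw [← tsum_const_smul'' r]
        exact tsum_congr fun k => smul_comm _ _ _ }
    (√(∑' k, c k ^ 2)) (fun a =>
      (BoundedContinuousFunction.norm_ofNormedAddCommGroup_le _
        (tsum_nonneg fun k => by positivity)
        (fun u => tsum_of_norm_bounded (summable_mul_norm hc a).1.hasSum fun k =>
          hle a k u)).trans (summable_mul_norm hc a).2)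

theorem seriesCLM_apply {e : ι → α → ℝ} {c : ι → ℝ}
    (he : ∀ k, Continuous (e k)) (hec : ∀ k u, |e k u| ≤ |c k|)
    (hc : Summable fun k => c k ^ 2) (a : lp (fun _ : ι => V) 2) (u : α) :
    seriesCLM e c he hec hc a u = ∑' k, e k u • a k := rfl

end SquareSummable

/-! ### Sobolev curves -/

/-- The weight `(1 + k²)^(-s/2)` which turns square summable coefficients into those of a
function of class `W^{s,2}`. -/
def sobolevWeight (s : ℝ) (k : ℤ) : ℝ := (1 + (k : ℝ) ^ 2) ^ (-s / 2)

theorem sobolevWeight_pos (s : ℝ) (k : ℤ) : 0 < sobolevWeight s k := by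
  unfold sobolevWeight
  positivity

theorem sobolevWeight_sq (s : ℝ) (k : ℤ) : sobolevWeight s k ^ 2 = (1 + (k : ℝ) ^ 2) ^ (-s) := by
  rw [sobolevWeight, ← Real.rpow_mul_natCast (by positivity)]
  congr 1
  push_cast
  ring

theorem sobolevWeight_neg (s : ℝ) (k : ℤ) : sobolevWeight s (-k) = sobolevWeight s k := by
  simp [sobolevWeight]

theorem summable_one_add_sq_rpow {r : ℝ} (hr : 1 / 2 < r) :
    Summable fun k : ℤ => (1 + (k : ℝ) ^ 2) ^ (-r) := by
  refine Summable.of_norm_bounded_eventually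
    (Real.summable_abs_int_rpow (b := 2 * r) (by linarith)) ?_
  filter_upwards [(Set.finite_singleton (0 : ℤ)).compl_mem_cofinite] with k hk
  have hk0 : (k : ℝ) ≠ 0 := Int.cast_ne_zero.2 hk
  have hpow : |(k : ℝ)| ^ (-(2 * r)) = ((k : ℝ) ^ 2) ^ (-r) := by
    rw [← sq_abs, ← Real.rpow_natCast, ← Real.rpow_mul (abs_nonneg _)]
    congr 1
    push_cast
    ring
  rw [Real.norm_of_nonneg (by positivity), hpow]
  exact Real.rpow_le_rpow_of_nonpos (by positivity) (by linarith) (by linarith)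

theorem summable_velocityWeight_sq {s : ℝ} (hs : 3 / 2 < s) :
    Summable fun k : ℤ => (4 * Real.pi * k * sobolevWeight s k) ^ 2 := by
  refine Summable.of_nonneg_of_le (fun _ => by positivity) (fun k => ?_)
    ((summable_one_add_sq_rpow (r := s - 1) (by linarith)).mul_left ((4 * Real.pi) ^ 2))
  have hsplit : (1 + (k : ℝ) ^ 2) ^ (-(s - 1)) = (1 + (k : ℝ) ^ 2) * (1 + (k : ℝ) ^ 2) ^ (-s) := by
    rw [show -(s - 1) = 1 + -s by ring, Real.rpow_add (by positivity), Real.rpow_one]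
  rw [hsplit, mul_pow, mul_pow, sobolevWeight_sq, mul_assoc]
  exact mul_le_mul_of_nonneg_left (mul_le_mul_of_nonneg_right (by linarith) (by positivity))
    (by positivity)

theorem summable_positionWeight_sq {s : ℝ} (hs : 1 / 2 < s) :
    Summable fun k : ℤ => (2 * sobolevWeight s k) ^ 2 := by
  simp_rw [mul_pow, sobolevWeight_sq]
  exact (summable_one_add_sq_rpow hs).mul_left _

/-- Square summable families of Hartley coefficients; through `sobolevCurve` this Hilbert space
parametrizes the space `W^{s,2}(ℝ/ℤ, V)`. -/
abbrev HartleyCoeff (V : Type*) [NormedAddCommGroup V] := lp (fun _ : ℤ => V) 2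

section SobolevCurve

variable {V : Type*} [NormedAddCommGroup V] [NormedSpace ℝ V] {s : ℝ}

/-- The Hartley coefficients of `sobolevCurve hs a`. -/
def positionCoeff (s : ℝ) (a : HartleyCoeff V) (k : ℤ) : V := sobolevWeight s k • a k

/-- The Hartley coefficients of the derivative of `sobolevCurve hs a`. -/
def velocityCoeff (s : ℝ) (a : HartleyCoeff V) (k : ℤ) : V :=
  (-(2 * Real.pi * k * sobolevWeight s k)) • a (-k)

theorem summable_norm_positionCoeff (hs : 1 / 2 < s) (a : HartleyCoeff V) :
    Summable fun k => ‖positionCoeff s a k‖ := by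
  refine Summable.of_nonneg_of_le (fun _ => norm_nonneg _) (fun k => ?_)
    (summable_mul_norm (summable_positionWeight_sq hs) a).1
  rw [positionCoeff, norm_smul, Real.norm_eq_abs, abs_mul, abs_two, mul_assoc]
  exact le_mul_of_one_le_left (by positivity) one_le_two

theorem summable_norm_velocityCoeff (hs : 3 / 2 < s) (a : HartleyCoeff V) :
    Summable fun k => ‖velocityCoeff s a k‖ := by
  refine Summable.of_nonneg_of_le (fun _ => norm_nonneg _) (fun k => ?_)
    ((summable_mul_norm (summable_velocityWeight_sq hs) a).1.comp_injective
      (neg_injective (G := ℤ)))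
  simp only [velocityCoeff, norm_smul, Real.norm_eq_abs, Function.comp_apply, Int.cast_neg,
    sobolevWeight_neg, abs_mul, abs_neg, abs_two]
  gcongr
  norm_num

variable [CompleteSpace V]

/-- The curve of class `W^{s,2}` with weighted Hartley coefficients `a`. -/
def sobolevCurve (hs : 3 / 2 < s) : HartleyCoeff V →L[ℝ] (ℝ →ᵇ V) :=
  seriesCLM (fun k u => sobolevWeight s k * hartley k u) (fun k => 2 * sobolevWeight s k)
    (fun k => continuous_const.mul (continuous_hartley k))
    (fun k u => by
      rw [abs_mul, abs_mul, mul_comm, abs_two]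
      exact mul_le_mul_of_nonneg_right (abs_hartley_le k u) (abs_nonneg _))
    (summable_positionWeight_sq (by linarith))

theorem abs_velocity_term_le (s : ℝ) (k : ℤ) (u : ℝ) :
    |2 * Real.pi * k * sobolevWeight s k * hartley (-k) u|
      ≤ |4 * Real.pi * k * sobolevWeight s k| := by
  have hfour : |4 * Real.pi * k * sobolevWeight s k|
      = |2 * Real.pi * k * sobolevWeight s k| * 2 := by
    rw [← abs_two (α := ℝ), ← abs_mul, abs_two]
    ring_nf
  rw [abs_mul, hfour]
  exact mul_le_mul_of_nonneg_left (abs_hartley_le (-k) u) (abs_nonneg _)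

/-- The derivative of the curve with weighted Hartley coefficients `a`. -/
def sobolevVelocity (hs : 3 / 2 < s) : HartleyCoeff V →L[ℝ] (ℝ →ᵇ V) :=
  seriesCLM (fun k u => 2 * Real.pi * k * sobolevWeight s k * hartley (-k) u)
    (fun k => 4 * Real.pi * k * sobolevWeight s k)
    (fun _ => continuous_const.mul (continuous_hartley _)) (abs_velocity_term_le s)
    (summable_velocityWeight_sq hs)

variable (hs : 3 / 2 < s) (a : HartleyCoeff V)

theorem sobolevCurve_apply (u : ℝ) : sobolevCurve hs a u = hartleySeries (positionCoeff s a) u := by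
  rw [sobolevCurve, seriesCLM_apply]
  refine tsum_congr fun k => ?_
  rw [positionCoeff, smul_smul, mul_comm]

theorem sobolevVelocity_apply (u : ℝ) :
    sobolevVelocity hs a u = hartleySeries (velocityCoeff s a) u := by
  rw [sobolevVelocity, seriesCLM_apply, ← tsum_comp_neg]
  refine tsum_congr fun k => ?_
  simp only [neg_neg, velocityCoeff, smul_smul, sobolevWeight_neg, Int.cast_neg]
  ring_nf

theorem hasDerivAt_sobolevCurve (u : ℝ) :
    HasDerivAt (sobolevCurve hs a) (sobolevVelocity hs a u) u := by
  have hterm : ∀ (k : ℤ) (u : ℝ), (2 * Real.pi * k * hartley (-k) u) • positionCoeff s a k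
      = (2 * Real.pi * k * sobolevWeight s k * hartley (-k) u) • a k := fun k u => by
    rw [positionCoeff, smul_smul]
    ring_nf
  have hderiv := hasDerivAt_tsum (𝕜 := ℝ) (g := fun k u => hartley k u • positionCoeff s a k)
    (summable_mul_norm (summable_velocityWeight_sq hs) a).1
    (fun k u => (hasDerivAt_hartley k u).smul_const _) (fun k u => ?_)
    (summable_hartley_smul (summable_norm_positionCoeff (by linarith) a) 0) u
  · simp_rw [hterm] at hderiv
    exact hderiv.congr_of_eventuallyEq (Eventually.of_forall (sobolevCurve_apply hs a))
  · rw [hterm, norm_smul]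
    exact mul_le_mul_of_nonneg_right (abs_velocity_term_le s k u) (norm_nonneg _)

theorem sobolevCurve_periodic : Function.Periodic (sobolevCurve hs a) 1 := fun u => by
  simp_rw [sobolevCurve_apply, hartleySeries, hartley_periodic _ u]

theorem sobolevVelocity_periodic : Function.Periodic (sobolevVelocity hs a) 1 := fun u => by
  simp_rw [sobolevVelocity_apply, hartleySeries, hartley_periodic _ u]

end SobolevCurve

theorem integral_norm_sq_sobolevVelocity_sub {V : Type*} [NormedAddCommGroup V]
    [InnerProductSpace ℝ V] [CompleteSpace V] {s : ℝ} (hs : 3 / 2 < s) (a : HartleyCoeff V)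
    (h : ℝ) :
    ∫ u in (0 : ℝ)..1, ‖sobolevVelocity hs a (u + h) - sobolevVelocity hs a u‖ ^ 2 =
      ∑' k : ℤ, (2 - 2 * Real.cos (2 * Real.pi * k * h)) *
        ((2 * Real.pi * k * sobolevWeight s k) ^ 2 * ‖a k‖ ^ 2) := by
  have hb := summable_norm_velocityCoeff hs a
  simp_rw [sobolevVelocity_apply, hartleySeries_add_sub hb]
  rw [integral_norm_sq_hartleySeries_hartleyMultiplier hb (C := 2)
    (fun k => abs_cos_sub_one_le _) (fun k => (Real.abs_sin_le_one _).trans one_le_two)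
    (fun k => by simp) (fun k => by simp), ← tsum_comp_neg]
  refine tsum_congr fun k => ?_
  simp only [velocityCoeff, neg_neg, norm_smul, Real.norm_eq_abs, mul_pow, sq_abs, Int.cast_neg,
    mul_neg, neg_mul, Real.cos_neg, Real.sin_neg, sobolevWeight_neg, neg_sq,
    cos_sub_one_sq_add_sin_sq]

/-! ### The measure on configurations -/

/-- Pairs `(a, b)` of arc lengths adjacent to the point opposite to the longest of the three arcs
into which a configuration divides the circle. -/
def arcPairs : Set (ℝ × ℝ) := {z | 0 < z.1 ∧ 0 < z.2 ∧ 2 * z.1 + z.2 ≤ 1 ∧ z.1 + 2 * z.2 < 1}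

/-- The singular weight `a^(2-p) b^(2-p) (a+b)^(-p)` of the energy: near the diagonal the integrand
of the Menger energy is this weight times the squared area spanned by the mean velocities. -/
def arcDensity (p : ℝ) (z : ℝ × ℝ) : ℝ := z.1 ^ (2 - p) * z.2 ^ (2 - p) * (z.1 + z.2) ^ (-p)

/-- The measure on pairs of adjacent arc lengths with density `arcDensity p`. -/
def arcMeasure (p : ℝ) : Measure (ℝ × ℝ) :=
  (volume.restrict arcPairs).withDensity fun z => ENNReal.ofReal (arcDensity p z)

/-- The weighted measure on configurations; `(u, a, b)` stands for the points `u - a, u, u + b`. -/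
def configMeasure (p : ℝ) : Measure (ℝ × ℝ × ℝ) :=
  (volume.restrict (Ico (0 : ℝ) 1)).prod (arcMeasure p)

theorem measurableSet_arcPairs : MeasurableSet arcPairs :=
  (measurableSet_lt measurable_const measurable_fst).inter
    ((measurableSet_lt measurable_const measurable_snd).inter
      ((measurableSet_le ((measurable_fst.const_mul 2).add measurable_snd) measurable_const).inter
        (measurableSet_lt (measurable_fst.add (measurable_snd.const_mul 2)) measurable_const)))

theorem measurable_arcDensity (p : ℝ) : Measurable (arcDensity p) := by
  unfold arcDensity
  fun_prop

theorem arcDensity_swap (p a b : ℝ) : arcDensity p (a, b) = arcDensity p (b, a) := by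
  simp only [arcDensity]
  rw [add_comm a b]
  ring

instance (p : ℝ) : SigmaFinite (arcMeasure p) := by
  unfold arcMeasure
  infer_instance

instance (p : ℝ) : SigmaFinite (configMeasure p) := by
  unfold configMeasure
  infer_instance

theorem ae_arcMeasure (p : ℝ) : ∀ᵐ z ∂arcMeasure p, z ∈ arcPairs :=
  (withDensity_absolutelyContinuous _ _).ae_le (ae_restrict_mem measurableSet_arcPairs)

theorem ae_configMeasure (p : ℝ) : ∀ᵐ z ∂configMeasure p, z.2 ∈ arcPairs :=
  Measure.quasiMeasurePreserving_snd.ae (ae_arcMeasure p)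

theorem lintegral_arcMeasure (p : ℝ) {φ : ℝ × ℝ → ℝ≥0∞} (hφ : Measurable φ) :
    ∫⁻ z, φ z ∂arcMeasure p = ∫⁻ z in arcPairs, ENNReal.ofReal (arcDensity p z) * φ z := by
  rw [arcMeasure,
    lintegral_withDensity_eq_lintegral_mul _ (measurable_arcDensity p).ennreal_ofReal hφ]
  rfl

theorem lintegral_configMeasure (p : ℝ) {F : ℝ × ℝ × ℝ → ℝ≥0∞} (hF : Measurable F) :
    ∫⁻ z, F z ∂configMeasure p = ∫⁻ y, (∫⁻ u in Ico (0 : ℝ) 1, F (u, y)) ∂arcMeasure p :=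
  lintegral_prod_symm' F hF

theorem lintegral_Ioc_rpow {r c : ℝ} (hr : -1 < r) (hc : 0 ≤ c) :
    ∫⁻ x in Ioc 0 c, ENNReal.ofReal (x ^ r) = ENNReal.ofReal (c ^ (r + 1) / (r + 1)) := by
  have hint := intervalIntegral.intervalIntegrable_rpow' (a := 0) (b := c) hr
  rw [intervalIntegrable_iff_integrableOn_Ioc_of_le hc] at hint
  rw [← ofReal_integral_eq_lintegral_ofReal hint, ← intervalIntegral.integral_of_le hc,
    integral_rpow (Or.inl hr), Real.zero_rpow (by linarith), sub_zero]
  filter_upwards [ae_restrict_mem measurableSet_Ioc] with x hx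
  exact Real.rpow_nonneg hx.1.le _

theorem lintegral_Ioi_rpow {r c : ℝ} (hr : r < -1) (hc : 0 < c) :
    ∫⁻ x in Ioi c, ENNReal.ofReal (x ^ r) = ENNReal.ofReal (-c ^ (r + 1) / (r + 1)) := by
  rw [← ofReal_integral_eq_lintegral_ofReal (integrableOn_Ioi_rpow_of_lt hr hc),
    integral_Ioi_rpow_of_lt hr hc]
  filter_upwards [ae_restrict_mem measurableSet_Ioi] with x hx
  exact Real.rpow_nonneg (hc.trans hx).le _

section ArcDensityBounds

variable {p : ℝ}

theorem lintegral_Ioc_arcDensity_le (hp0 : 0 ≤ p) (hp3 : p < 3) {b : ℝ} (hb : 0 < b) :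
    ∫⁻ a in Ioc 0 b, ENNReal.ofReal (arcDensity p (a, b)) ≤
      ENNReal.ofReal (1 / (3 - p) * b ^ (5 - 3 * p)) := by
  calc ∫⁻ a in Ioc 0 b, ENNReal.ofReal (arcDensity p (a, b))
      ≤ ∫⁻ a in Ioc 0 b, ENNReal.ofReal (b ^ (2 - p) * b ^ (-p))
          * ENNReal.ofReal (a ^ (2 - p)) := by
        refine setLIntegral_mono (by fun_prop) fun a ha => ?_
        have ha0 : 0 < a := ha.1
        rw [← ENNReal.ofReal_mul (by positivity)]
        refine ENNReal.ofReal_le_ofReal ?_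
        calc a ^ (2 - p) * b ^ (2 - p) * (a + b) ^ (-p)
            ≤ a ^ (2 - p) * b ^ (2 - p) * b ^ (-p) :=
              mul_le_mul_of_nonneg_left (Real.rpow_le_rpow_of_nonpos hb (by linarith)
                (by linarith)) (by positivity)
          _ = b ^ (2 - p) * b ^ (-p) * a ^ (2 - p) := by ring
    _ = ENNReal.ofReal (1 / (3 - p) * b ^ (5 - 3 * p)) := by
        have hexp : b ^ (5 - 3 * p) = b ^ (2 - p) * b ^ (-p) * b ^ (2 - p + 1) := by
          rw [← Real.rpow_add hb, ← Real.rpow_add hb]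
          ring_nf
        rw [lintegral_const_mul _ (by fun_prop), lintegral_Ioc_rpow (by linarith) hb.le,
          ← ENNReal.ofReal_mul (by positivity), hexp, show 3 - p = 2 - p + 1 by ring]
        ring_nf

theorem lintegral_Ioi_arcDensity_le (hp : 3 / 2 < p) {b : ℝ} (hb : 0 < b) :
    ∫⁻ a in Ioi b, ENNReal.ofReal (arcDensity p (a, b)) ≤
      ENNReal.ofReal (1 / (2 * p - 3) * b ^ (5 - 3 * p)) := by
  calc ∫⁻ a in Ioi b, ENNReal.ofReal (arcDensity p (a, b))
      ≤ ∫⁻ a in Ioi b, ENNReal.ofReal (b ^ (2 - p)) * ENNReal.ofReal (a ^ (2 - 2 * p)) := by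
        refine setLIntegral_mono (by fun_prop) fun a ha => ?_
        have ha0 : 0 < a := hb.trans ha
        rw [← ENNReal.ofReal_mul (by positivity)]
        refine ENNReal.ofReal_le_ofReal ?_
        calc a ^ (2 - p) * b ^ (2 - p) * (a + b) ^ (-p)
            ≤ a ^ (2 - p) * b ^ (2 - p) * a ^ (-p) :=
              mul_le_mul_of_nonneg_left (Real.rpow_le_rpow_of_nonpos ha0 (by linarith)
                (by linarith)) (by positivity)
          _ = b ^ (2 - p) * a ^ (2 - 2 * p) := by
              rw [show 2 - 2 * p = (2 - p) + (-p) by ring, Real.rpow_add ha0]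
              ring
    _ = ENNReal.ofReal (1 / (2 * p - 3) * b ^ (5 - 3 * p)) := by
        have hexp : b ^ (5 - 3 * p) = b ^ (2 - p) * b ^ (2 - 2 * p + 1) := by
          rw [← Real.rpow_add hb]
          ring_nf
        rw [lintegral_const_mul _ (by fun_prop), lintegral_Ioi_rpow (by linarith) hb,
          ← ENNReal.ofReal_mul (by positivity), hexp,
          show 2 * p - 3 = -(2 - 2 * p + 1) by ring, div_neg]
        ring_nf

/-- The constant in the one-dimensional marginal bound for `arcMeasure p`. -/
def marginalConst (p : ℝ) : ℝ := 1 / (3 - p) + 1 / (2 * p - 3)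

theorem marginalConst_nonneg (hp : 3 / 2 < p) (hp3 : p < 3) : 0 ≤ marginalConst p :=
  add_nonneg (one_div_nonneg.2 (by linarith)) (one_div_nonneg.2 (by linarith))

theorem lintegral_arcDensity_le (hp : 3 / 2 < p) (hp3 : p < 3) {b : ℝ} (hb : 0 < b) :
    ∫⁻ a in Ioi (0 : ℝ), ENNReal.ofReal (arcDensity p (a, b)) ≤
      ENNReal.ofReal (marginalConst p * b ^ (5 - 3 * p)) := by
  have hnear : 0 ≤ 1 / (3 - p) := one_div_nonneg.2 (by linarith)
  have hfar : 0 ≤ 1 / (2 * p - 3) := one_div_nonneg.2 (by linarith)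
  have hpow := Real.rpow_nonneg hb.le (5 - 3 * p)
  rw [← Ioc_union_Ioi_eq_Ioi hb.le, lintegral_union measurableSet_Ioi
    (Ioc_disjoint_Ioi le_rfl), marginalConst, add_mul,
    ENNReal.ofReal_add (mul_nonneg hnear hpow) (mul_nonneg hfar hpow)]
  exact add_le_add (lintegral_Ioc_arcDensity_le (by linarith) hp3 hb)
    (lintegral_Ioi_arcDensity_le hp hb)

theorem lintegral_lintegral_arcDensity_mul_le (hp : 3 / 2 < p) (hp3 : p < 3) {φ : ℝ → ℝ≥0∞}
    (hφ : Measurable φ) :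
    ∫⁻ b in Ioi (0 : ℝ), ∫⁻ a in Ioi (0 : ℝ), ENNReal.ofReal (arcDensity p (a, b)) * φ b ≤
      ENNReal.ofReal (marginalConst p) *
        ∫⁻ b in Ioi (0 : ℝ), ENNReal.ofReal (b ^ (5 - 3 * p)) * φ b := by
  have hdens := measurable_arcDensity p
  rw [← lintegral_const_mul _ (by fun_prop)]
  refine setLIntegral_mono (by fun_prop) fun b hb => ?_
  rw [lintegral_mul_const _ (by fun_prop), ← mul_assoc,
    ← ENNReal.ofReal_mul (marginalConst_nonneg hp hp3)]
  gcongr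
  exact lintegral_arcDensity_le hp hp3 hb

theorem lintegral_arcMeasure_le (p : ℝ) {φ : ℝ × ℝ → ℝ≥0∞} (hφ : Measurable φ) :
    ∫⁻ z, φ z ∂arcMeasure p ≤ ∫⁻ z, ENNReal.ofReal (arcDensity p z) * φ z
      ∂((volume.restrict (Ioi (0 : ℝ))).prod (volume.restrict (Ioi (0 : ℝ)))) := by
  rw [lintegral_arcMeasure p hφ, Measure.prod_restrict, ← Measure.volume_eq_prod]
  exact lintegral_mono_set fun z hz => ⟨hz.1, hz.2.1⟩

theorem lintegral_arcMeasure_snd_le (hp : 3 / 2 < p) (hp3 : p < 3) {φ : ℝ → ℝ≥0∞}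
    (hφ : Measurable φ) : ∫⁻ z, φ z.2 ∂arcMeasure p ≤ ENNReal.ofReal (marginalConst p) *
      ∫⁻ b in Ioi (0 : ℝ), ENNReal.ofReal (b ^ (5 - 3 * p)) * φ b := by
  have hdens := measurable_arcDensity p
  refine (lintegral_arcMeasure_le p (by fun_prop)).trans ?_
  rw [lintegral_prod_symm _ (by fun_prop)]
  exact lintegral_lintegral_arcDensity_mul_le hp hp3 hφ

theorem lintegral_arcMeasure_fst_le (hp : 3 / 2 < p) (hp3 : p < 3) {φ : ℝ → ℝ≥0∞}
    (hφ : Measurable φ) : ∫⁻ z, φ z.1 ∂arcMeasure p ≤ ENNReal.ofReal (marginalConst p) *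
      ∫⁻ b in Ioi (0 : ℝ), ENNReal.ofReal (b ^ (5 - 3 * p)) * φ b := by
  have hdens := measurable_arcDensity p
  refine (lintegral_arcMeasure_le p (by fun_prop)).trans ?_
  rw [lintegral_prod _ (by fun_prop)]
  refine le_of_eq_of_le (lintegral_congr fun b => lintegral_congr fun a => ?_)
    (lintegral_lintegral_arcDensity_mul_le hp hp3 hφ)
  rw [arcDensity_swap]

end ArcDensityBounds

section ScaledIntegral

variable {r κ : ℝ}

theorem lintegral_Ioc_rpow_mul_sq (hr : -3 < r) (hκ : 0 < κ) :
    ∫⁻ b in Ioc 0 κ⁻¹, ENNReal.ofReal (b ^ r * (κ * b) ^ 2) =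
      ENNReal.ofReal (1 / (r + 3) * κ ^ (-r - 1)) := by
  have hfactor : ∀ b ∈ Ioc 0 κ⁻¹, ENNReal.ofReal (b ^ r * (κ * b) ^ 2) =
      ENNReal.ofReal (κ ^ 2) * ENNReal.ofReal (b ^ (r + 2)) := fun b hb => by
    rw [← ENNReal.ofReal_mul (by positivity), Real.rpow_add hb.1, Real.rpow_two]
    ring_nf
  rw [setLIntegral_congr_fun measurableSet_Ioc hfactor, lintegral_const_mul _ (by fun_prop),
    lintegral_Ioc_rpow (by linarith) (inv_pos.2 hκ).le, ← ENNReal.ofReal_mul (by positivity),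
    Real.inv_rpow hκ.le, ← Real.rpow_neg hκ.le, show r + 2 + 1 = r + 3 by ring,
    show -r - 1 = 2 + -(r + 3) by ring, Real.rpow_add hκ, Real.rpow_two]
  ring_nf

theorem lintegral_Ioi_const_mul_rpow (hr : r < -1) (hκ : 0 < κ) {c : ℝ} (hc : 0 ≤ c) :
    ∫⁻ b in Ioi κ⁻¹, ENNReal.ofReal c * ENNReal.ofReal (b ^ r) =
      ENNReal.ofReal (c / -(r + 1) * κ ^ (-r - 1)) := by
  rw [lintegral_const_mul _ (by fun_prop), lintegral_Ioi_rpow hr (inv_pos.2 hκ),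
    ← ENNReal.ofReal_mul hc, Real.inv_rpow hκ.le, ← Real.rpow_neg hκ.le,
    show -r - 1 = -(r + 1) by ring, div_neg]
  ring_nf

theorem lintegral_rpow_mul_min_le (hr1 : -3 < r) (hr2 : r < -1) (hκ : 0 < κ) :
    ∫⁻ b in Ioi (0 : ℝ), ENNReal.ofReal (b ^ r) * ENNReal.ofReal (min 4 ((κ * b) ^ 2)) ≤
      ENNReal.ofReal ((1 / (r + 3) + 4 / -(r + 1)) * κ ^ (-r - 1)) := by
  have hnear : 0 ≤ 1 / (r + 3) := one_div_nonneg.2 (by linarith)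
  have hfar : 0 ≤ 4 / -(r + 1) := div_nonneg (by norm_num) (by linarith)
  rw [← Ioc_union_Ioi_eq_Ioi (inv_pos.2 hκ).le, lintegral_union measurableSet_Ioi
    (Ioc_disjoint_Ioi le_rfl), add_mul, ENNReal.ofReal_add (by positivity) (by positivity),
    ← lintegral_Ioc_rpow_mul_sq hr1 hκ, ← lintegral_Ioi_const_mul_rpow hr2 hκ zero_le_four]
  refine add_le_add (setLIntegral_mono (by fun_prop) fun b hb => ?_)
    (setLIntegral_mono (by fun_prop) fun b _ => ?_)
  · rw [← ENNReal.ofReal_mul (Real.rpow_nonneg hb.1.le _)]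
    exact ENNReal.ofReal_le_ofReal
      (mul_le_mul_of_nonneg_left (min_le_right _ _) (Real.rpow_nonneg hb.1.le _))
  · rw [mul_comm]
    gcongr
    exact min_le_left _ _

end ScaledIntegral

/-! ### Oscillation of the velocity -/

section MeanOscillation

variable {V : Type*} [NormedAddCommGroup V]

/-- The mean of `‖f - f u‖` over the segment from `u` to `u + v`. -/
def meanOsc (f : ℝ → V) (u v : ℝ) : ℝ :=
  ∫ t in (0 : ℝ)..1, ‖f (u + t * v) - f u‖

theorem continuous_meanOsc {f : ℝ → V} (hf : Continuous f) :
    Continuous fun z : ℝ × ℝ => meanOsc f z.1 z.2 := by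
  refine intervalIntegral.continuous_parametric_intervalIntegral_of_continuous' ?_ 0 1
  unfold Function.uncurry
  fun_prop

theorem meanOsc_nonneg (f : ℝ → V) (u v : ℝ) : 0 ≤ meanOsc f u v :=
  intervalIntegral.integral_nonneg zero_le_one fun _ _ => norm_nonneg _

end MeanOscillation

theorem sq_integral_le_integral_sq {g : ℝ → ℝ} (hg : Continuous g) :
    (∫ t in (0 : ℝ)..1, g t) ^ 2 ≤ ∫ t in (0 : ℝ)..1, g t ^ 2 := by
  set m := ∫ t in (0 : ℝ)..1, g t with hm
  have hvariance : 0 ≤ ∫ t in (0 : ℝ)..1, (g t - m) ^ 2 :=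
    intervalIntegral.integral_nonneg zero_le_one fun _ _ => sq_nonneg _
  have hexpand : ∀ t, (g t - m) ^ 2 = g t ^ 2 - 2 * m * g t + m ^ 2 := fun t => by ring
  simp_rw [hexpand] at hvariance
  rw [intervalIntegral.integral_add (Continuous.intervalIntegrable (by fun_prop) _ _)
    (Continuous.intervalIntegrable (by fun_prop) _ _),
    intervalIntegral.integral_sub (Continuous.intervalIntegrable (by fun_prop) _ _)
    (Continuous.intervalIntegrable (by fun_prop) _ _),
    intervalIntegral.integral_const_mul, ← hm] at hvariance
  simp only [intervalIntegral.integral_const, sub_zero, one_smul] at hvariance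
  linarith

theorem two_sub_two_mul_cos_le_min (x : ℝ) : 2 - 2 * Real.cos x ≤ min 4 (x ^ 2) :=
  le_min (by linarith [Real.neg_one_le_cos x])
    (by linarith [Real.one_sub_sq_div_two_le_cos (x := x)])

theorem ofReal_intervalIntegral_eq_lintegral {g : ℝ → ℝ} (hg : Continuous g) (h0 : ∀ t, 0 ≤ g t) :
    ENNReal.ofReal (∫ t in (0 : ℝ)..1, g t) = ∫⁻ t in Ico (0 : ℝ) 1, ENNReal.ofReal (g t) := by
  rw [intervalIntegral.integral_of_le zero_le_one,
    ofReal_integral_eq_lintegral_ofReal ?_ (Eventually.of_forall h0)]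
  · exact (setLIntegral_congr Ico_ae_eq_Ioc).symm
  · exact (hg.integrableOn_Icc (a := 0) (b := 1)).mono_set Ioc_subset_Icc_self

theorem velocityWeight_sq_mul_rpow_le {s : ℝ} (hs : 0 ≤ s) {k : ℤ} (hk : k ≠ 0) :
    (2 * Real.pi * k * sobolevWeight s k) ^ 2 * |2 * Real.pi * k| ^ (2 * s - 2)
      ≤ (2 * Real.pi) ^ (2 * s) := by
  have hk0 : (k : ℝ) ≠ 0 := Int.cast_ne_zero.2 hk
  have hweight : sobolevWeight s k ^ 2 ≤ |(k : ℝ)| ^ (-(2 * s)) := by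
    have hpow : |(k : ℝ)| ^ (-(2 * s)) = ((k : ℝ) ^ 2) ^ (-s) := by
      rw [← sq_abs, ← Real.rpow_natCast, ← Real.rpow_mul (abs_nonneg _)]
      push_cast
      ring_nf
    rw [sobolevWeight_sq, hpow]
    exact Real.rpow_le_rpow_of_nonpos (by positivity) (by linarith) (by linarith)
  have habs : |2 * Real.pi * (k : ℝ)| = 2 * Real.pi * |(k : ℝ)| := by
    rw [abs_mul, abs_of_pos (by positivity)]
  calc (2 * Real.pi * k * sobolevWeight s k) ^ 2 * |2 * Real.pi * k| ^ (2 * s - 2)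
      = (2 * Real.pi * |(k : ℝ)|) ^ (2 : ℝ) * (2 * Real.pi * |(k : ℝ)|) ^ (2 * s - 2)
          * sobolevWeight s k ^ 2 := by
        rw [← habs, mul_pow, ← sq_abs (2 * Real.pi * (k : ℝ)), Real.rpow_two]
        ring
    _ ≤ (2 * Real.pi * |(k : ℝ)|) ^ (2 : ℝ) * (2 * Real.pi * |(k : ℝ)|) ^ (2 * s - 2)
          * |(k : ℝ)| ^ (-(2 * s)) := by gcongr
    _ = (2 * Real.pi) ^ (2 * s) := by
        rw [← Real.rpow_add (by positivity), show 2 + (2 * s - 2) = 2 * s by ring,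
          Real.mul_rpow (by positivity) (abs_nonneg _), mul_assoc,
          ← Real.rpow_add (abs_pos.2 hk0)]
        simp

/-- A majorant of the square of the `L²` modulus of continuity of the velocity with coefficients
`a`: the symbol `2 - 2 cos (2πkv)` of the squared difference is replaced by `min 4 (2πkv)²`. -/
def velocityModulus {V : Type*} [NormedAddCommGroup V] (s : ℝ) (a : HartleyCoeff V) (v : ℝ) :
    ℝ≥0∞ :=
  ∑' k : ℤ, ENNReal.ofReal (min 4 ((2 * Real.pi * k * v) ^ 2)) *
    ENNReal.ofReal ((2 * Real.pi * k * sobolevWeight s k) ^ 2 * ‖a k‖ ^ 2)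

section VelocityModulus

variable {V : Type*} [NormedAddCommGroup V] {s : ℝ}

theorem measurable_velocityModulus (s : ℝ) (a : HartleyCoeff V) :
    Measurable (velocityModulus s a) :=
  Measurable.tsum fun k => by fun_prop

theorem velocityModulus_neg (s : ℝ) (a : HartleyCoeff V) (v : ℝ) :
    velocityModulus s a (-v) = velocityModulus s a v := by
  simp [velocityModulus]

theorem lintegral_rpow_mul_velocityModulus_le (hs : 1 < s) (hs2 : s < 2) (a : HartleyCoeff V) :
    ∫⁻ v in Ioi (0 : ℝ), ENNReal.ofReal (v ^ (1 - 2 * s)) * velocityModulus s a v ≤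
      ENNReal.ofReal ((1 / (4 - 2 * s) + 4 / (2 * s - 2)) * (2 * Real.pi) ^ (2 * s) * ‖a‖ ^ 2) := by
  have hnear : 0 ≤ 1 / (4 - 2 * s) := one_div_nonneg.2 (by linarith)
  have hfar : 0 ≤ 4 / (2 * s - 2) := div_nonneg (by norm_num) (by linarith)
  set C := 1 / (4 - 2 * s) + 4 / (2 * s - 2)
  simp_rw [velocityModulus, ← ENNReal.tsum_mul_left]
  rw [lintegral_tsum fun k => by fun_prop, ← (hasSum_norm_sq a).tsum_eq, ← tsum_mul_left,
    ENNReal.ofReal_tsum_of_nonneg (fun k => by positivity)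
      ((hasSum_norm_sq a).summable.mul_left _)]
  refine ENNReal.tsum_le_tsum fun k => ?_
  simp_rw [← mul_assoc]
  rw [lintegral_mul_const _ (by fun_prop)]
  rcases eq_or_ne k 0 with rfl | hk
  · simp
  have hκ : 0 < |2 * Real.pi * k| := abs_pos.2 (two_pi_mul_intCast_ne_zero hk)
  have hint := lintegral_rpow_mul_min_le (r := 1 - 2 * s) (by linarith) (by linarith) hκ
  have habs : ∀ v : ℝ, (|2 * Real.pi * k| * v) ^ 2 = (2 * Real.pi * k * v) ^ 2 := fun v => by
    rw [mul_pow, sq_abs, mul_pow (2 * Real.pi * k)]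
  simp_rw [habs] at hint
  rw [show 1 - 2 * s + 3 = 4 - 2 * s by ring, show -(1 - 2 * s + 1) = 2 * s - 2 by ring,
    show -(1 - 2 * s) - 1 = 2 * s - 2 by ring] at hint
  refine (mul_le_mul_left hint _).trans ?_
  rw [← ENNReal.ofReal_mul (by positivity)]
  refine ENNReal.ofReal_le_ofReal ?_
  calc C * |2 * Real.pi * k| ^ (2 * s - 2) *
        ((2 * Real.pi * k * sobolevWeight s k) ^ 2 * ‖a k‖ ^ 2)
      = C * ((2 * Real.pi * k * sobolevWeight s k) ^ 2 * |2 * Real.pi * k| ^ (2 * s - 2))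
        * ‖a k‖ ^ 2 := by ring
    _ ≤ C * (2 * Real.pi) ^ (2 * s) * ‖a k‖ ^ 2 := by
        gcongr
        exact velocityWeight_sq_mul_rpow_le (by linarith) hk

theorem velocityModulus_mul_le (s : ℝ) (a : HartleyCoeff V) {t : ℝ} (ht : t ∈ Ico (0 : ℝ) 1)
    (v : ℝ) : velocityModulus s a (t * v) ≤ velocityModulus s a v := by
  refine ENNReal.tsum_le_tsum fun k => ?_
  gcongr ENNReal.ofReal (min 4 ?_) * _
  rw [show 2 * Real.pi * k * (t * v) = t * (2 * Real.pi * k * v) by ring, mul_pow]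
  exact mul_le_of_le_one_left (by positivity) (pow_le_one₀ ht.1 ht.2.le)

variable [InnerProductSpace ℝ V] [CompleteSpace V]

theorem lintegral_norm_sq_sobolevVelocity_sub_le (hs : 3 / 2 < s) (a : HartleyCoeff V) (h : ℝ) :
    ∫⁻ u in Ico (0 : ℝ) 1,
        ENNReal.ofReal (‖sobolevVelocity hs a (u + h) - sobolevVelocity hs a u‖ ^ 2) ≤
      velocityModulus s a h := by
  have hcont := (sobolevVelocity hs a).continuous
  have hsymbol : ∀ k : ℤ, 0 ≤ 2 - 2 * Real.cos (2 * Real.pi * k * h) := fun k => by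
    linarith [Real.cos_le_one (2 * Real.pi * k * h)]
  have hsum : Summable fun k : ℤ => (2 * Real.pi * k * sobolevWeight s k) ^ 2 * ‖a k‖ ^ 2 := by
    refine ((summable_norm_sq_of_summable_norm (summable_norm_velocityCoeff hs a)).comp_injective
      (neg_injective (G := ℤ))).congr fun k => ?_
    simp [velocityCoeff, norm_smul, mul_pow, sobolevWeight_neg]
  rw [← ofReal_intervalIntegral_eq_lintegral (by fun_prop) (fun t => by positivity),
    integral_norm_sq_sobolevVelocity_sub, ENNReal.ofReal_tsum_of_nonneg
      (fun k => mul_nonneg (hsymbol k) (by positivity))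
      (Summable.of_nonneg_of_le (fun k => mul_nonneg (hsymbol k) (by positivity))
        (fun k => mul_le_mul_of_nonneg_right ((two_sub_two_mul_cos_le_min _).trans
          (min_le_left _ _)) (by positivity)) (hsum.mul_left 4))]
  refine ENNReal.tsum_le_tsum fun k => ?_
  rw [← ENNReal.ofReal_mul (by positivity)]
  exact ENNReal.ofReal_le_ofReal
    (mul_le_mul_of_nonneg_right (two_sub_two_mul_cos_le_min _) (by positivity))

theorem lintegral_meanOsc_sobolevVelocity_sq_le (hs : 3 / 2 < s) (a : HartleyCoeff V) (v : ℝ) :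
    ∫⁻ u in Ico (0 : ℝ) 1, ENNReal.ofReal (meanOsc (sobolevVelocity hs a) u v ^ 2) ≤
      velocityModulus s a v := by
  have hcont := (sobolevVelocity hs a).continuous
  calc ∫⁻ u in Ico (0 : ℝ) 1, ENNReal.ofReal (meanOsc (sobolevVelocity hs a) u v ^ 2)
      ≤ ∫⁻ u in Ico (0 : ℝ) 1, ∫⁻ t in Ico (0 : ℝ) 1,
          ENNReal.ofReal (‖sobolevVelocity hs a (u + t * v) - sobolevVelocity hs a u‖ ^ 2) := by
        refine lintegral_mono fun u => ?_
        rw [← ofReal_intervalIntegral_eq_lintegral (by fun_prop) (fun t => by positivity)]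
        exact ENNReal.ofReal_le_ofReal (sq_integral_le_integral_sq (by fun_prop))
    _ = ∫⁻ t in Ico (0 : ℝ) 1, ∫⁻ u in Ico (0 : ℝ) 1,
          ENNReal.ofReal (‖sobolevVelocity hs a (u + t * v) - sobolevVelocity hs a u‖ ^ 2) := by
        refine lintegral_lintegral_swap (Measurable.aemeasurable ?_)
        unfold Function.uncurry
        exact (Continuous.measurable (by fun_prop)).ennreal_ofReal
    _ ≤ ∫⁻ _ in Ico (0 : ℝ) 1, velocityModulus s a v :=
        setLIntegral_mono measurable_const fun t ht =>
          (lintegral_norm_sq_sobolevVelocity_sub_le hs a _).trans (velocityModulus_mul_le s a ht v)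
    _ = velocityModulus s a v := by simp

end VelocityModulus

/-- The constant in the bound of the weighted mean square oscillation of the velocity by the
Sobolev norm of exponent `3p/2 - 2`. -/
def oscConst (p : ℝ) : ℝ :=
  marginalConst p *
    ((1 / (8 - 3 * p) + 4 / (3 * p - 6)) * (2 * Real.pi) ^ (2 * (3 * p / 2 - 2)))

section OscillationBound

variable {p : ℝ}

theorem oscConst_nonneg (hp : 7 / 3 < p) (hp' : p < 8 / 3) : 0 ≤ oscConst p := by
  have hmarginal := marginalConst_nonneg (p := p) (by linarith) (by linarith)
  have hnear : 0 ≤ 1 / (8 - 3 * p) := one_div_nonneg.2 (by linarith)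
  have hfar : 0 ≤ 4 / (3 * p - 6) := div_nonneg (by norm_num) (by linarith)
  unfold oscConst
  positivity

variable {V : Type*} [NormedAddCommGroup V]

theorem lintegral_marginal_velocityModulus_le (hp : 7 / 3 < p) (hp' : p < 8 / 3)
    (a : HartleyCoeff V) :
    ENNReal.ofReal (marginalConst p) * ∫⁻ b in Ioi (0 : ℝ),
      ENNReal.ofReal (b ^ (5 - 3 * p)) * velocityModulus (3 * p / 2 - 2) a b ≤
        ENNReal.ofReal (oscConst p * ‖a‖ ^ 2) := by
  have hint := lintegral_rpow_mul_velocityModulus_le (s := 3 * p / 2 - 2) (by linarith)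
    (by linarith) a
  rw [show 1 - 2 * (3 * p / 2 - 2) = 5 - 3 * p by ring,
    show 4 - 2 * (3 * p / 2 - 2) = 8 - 3 * p by ring,
    show 2 * (3 * p / 2 - 2) - 2 = 3 * p - 6 by ring] at hint
  rw [oscConst, mul_assoc,
    ENNReal.ofReal_mul (marginalConst_nonneg (by linarith) (by linarith))]
  gcongr

variable [InnerProductSpace ℝ V] [CompleteSpace V]

theorem lintegral_meanOsc_right_sq_le (hp : p < 8 / 3) (hs : 3 / 2 < 3 * p / 2 - 2)
    (a : HartleyCoeff V) :
    ∫⁻ z, ENNReal.ofReal (meanOsc (sobolevVelocity hs a) z.1 z.2.2 ^ 2) ∂configMeasure p ≤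
      ENNReal.ofReal (oscConst p * ‖a‖ ^ 2) := by
  have hosc := continuous_meanOsc (sobolevVelocity hs a).continuous
  have hmeas : Measurable fun z : ℝ × ℝ × ℝ =>
      ENNReal.ofReal (meanOsc (sobolevVelocity hs a) z.1 z.2.2 ^ 2) :=
    ((hosc.comp (continuous_fst.prodMk continuous_snd.snd)).measurable.pow_const 2).ennreal_ofReal
  rw [lintegral_configMeasure p hmeas]
  calc ∫⁻ z, (∫⁻ u in Ico (0 : ℝ) 1,
        ENNReal.ofReal (meanOsc (sobolevVelocity hs a) u z.2 ^ 2)) ∂arcMeasure p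
      ≤ ∫⁻ z, velocityModulus (3 * p / 2 - 2) a z.2 ∂arcMeasure p :=
        lintegral_mono fun z => lintegral_meanOsc_sobolevVelocity_sq_le hs a z.2
    _ ≤ _ := lintegral_arcMeasure_snd_le (by linarith) (by linarith)
        (measurable_velocityModulus _ a)
    _ ≤ _ := lintegral_marginal_velocityModulus_le (by linarith) hp a

theorem lintegral_meanOsc_left_sq_le (hp : p < 8 / 3) (hs : 3 / 2 < 3 * p / 2 - 2)
    (a : HartleyCoeff V) :
    ∫⁻ z, ENNReal.ofReal (meanOsc (sobolevVelocity hs a) z.1 (-z.2.1) ^ 2) ∂configMeasure p ≤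
      ENNReal.ofReal (oscConst p * ‖a‖ ^ 2) := by
  have hosc := continuous_meanOsc (sobolevVelocity hs a).continuous
  have hmeas : Measurable fun z : ℝ × ℝ × ℝ =>
      ENNReal.ofReal (meanOsc (sobolevVelocity hs a) z.1 (-z.2.1) ^ 2) :=
    ((hosc.comp (continuous_fst.prodMk continuous_snd.fst.neg)).measurable.pow_const 2)
      |>.ennreal_ofReal
  rw [lintegral_configMeasure p hmeas]
  calc ∫⁻ z, (∫⁻ u in Ico (0 : ℝ) 1,
        ENNReal.ofReal (meanOsc (sobolevVelocity hs a) u (-z.1) ^ 2)) ∂arcMeasure p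
      ≤ ∫⁻ z, velocityModulus (3 * p / 2 - 2) a z.1 ∂arcMeasure p := lintegral_mono fun z =>
        (lintegral_meanOsc_sobolevVelocity_sq_le hs a (-z.1)).trans_eq (velocityModulus_neg _ a _)
    _ ≤ _ := lintegral_arcMeasure_fst_le (by linarith) (by linarith)
        (measurable_velocityModulus _ a)
    _ ≤ _ := lintegral_marginal_velocityModulus_le (by linarith) hp a

end OscillationBound

/-! ### Difference of mean velocities -/

section MeanDifference

variable {V : Type*} [NormedAddCommGroup V] [NormedSpace ℝ V]

/-- The mean of `f` over the segment from `u` to `u + v`. -/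
def segmentMean (f : ℝ → V) (u v : ℝ) : V := ∫ t in (0 : ℝ)..1, f (u + t * v)

/-- The difference of the means of `f` over the two segments adjacent to `u`, for the configuration
`(u, a, b)`. -/
def meanDiff (f : ℝ → V) (z : ℝ × ℝ × ℝ) : V :=
  segmentMean f z.1 z.2.2 - segmentMean f z.1 (-z.2.1)

theorem continuous_segmentMean {f : ℝ → V} (hf : Continuous f) :
    Continuous fun z : ℝ × ℝ => segmentMean f z.1 z.2 := by
  refine intervalIntegral.continuous_parametric_intervalIntegral_of_continuous' ?_ 0 1
  unfold Function.uncurry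
  fun_prop

theorem continuous_meanDiff {f : ℝ → V} (hf : Continuous f) : Continuous (meanDiff f) := by
  have hmean := continuous_segmentMean hf
  exact (hmean.comp (continuous_fst.prodMk continuous_snd.snd)).sub
    (hmean.comp (continuous_fst.prodMk continuous_snd.fst.neg))

theorem smul_segmentMean_deriv [CompleteSpace V] {γ γ' : ℝ → V} (hγ' : Continuous γ')
    (hderiv : ∀ u, HasDerivAt γ (γ' u) u) (u v : ℝ) :
    v • segmentMean γ' u v = γ (u + v) - γ u := by
  have hsub := intervalIntegral.smul_integral_comp_add_mul (a := (0 : ℝ)) (b := 1) γ' v u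
  simp only [mul_zero, add_zero, mul_one] at hsub
  simp_rw [segmentMean, mul_comm _ v]
  rw [hsub]
  exact intervalIntegral.integral_eq_sub_of_hasDerivAt (fun x _ => hderiv x)
    (hγ'.intervalIntegrable _ _)

variable [CompleteSpace V] {f : ℝ → V} (hf : Continuous f)
include hf

theorem norm_segmentMean_sub_le (u v : ℝ) : ‖segmentMean f u v - f u‖ ≤ meanOsc f u v := by
  have hmean : segmentMean f u v - f u = ∫ t in (0 : ℝ)..1, (f (u + t * v) - f u) := by
    rw [intervalIntegral.integral_sub (Continuous.intervalIntegrable (by fun_prop) _ _)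
      (Continuous.intervalIntegrable (by fun_prop) _ _)]
    simp [segmentMean]
  rw [hmean]
  exact intervalIntegral.norm_integral_le_integral_norm zero_le_one

theorem norm_meanDiff_le (z : ℝ × ℝ × ℝ) :
    ‖meanDiff f z‖ ≤ meanOsc f z.1 z.2.2 + meanOsc f z.1 (-z.2.1) := by
  rw [meanDiff, ← sub_sub_sub_cancel_right _ _ (f z.1)]
  exact (norm_sub_le _ _).trans
    (add_le_add (norm_segmentMean_sub_le hf _ _) (norm_segmentMean_sub_le hf _ _))

end MeanDifference

/-- The even part of the Fourier symbol at frequency `κ` of the operator taking a curve to the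
difference of its difference quotients with steps `y` and `-x`. -/
def meanDiffSymbol (κ x y : ℝ) : ℝ :=
  y⁻¹ * (Real.cos (2 * Real.pi * κ * y) - 1) + x⁻¹ * (Real.cos (2 * Real.pi * κ * x) - 1)

/-- The odd part of the Fourier symbol whose even part is `meanDiffSymbol`. -/
def meanDiffOddSymbol (κ x y : ℝ) : ℝ :=
  y⁻¹ * Real.sin (2 * Real.pi * κ * y) - x⁻¹ * Real.sin (2 * Real.pi * κ * x)

section MeanDiffSymbol

theorem meanDiffSymbol_neg (κ x y : ℝ) : meanDiffSymbol (-κ) x y = meanDiffSymbol κ x y := by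
  simp [meanDiffSymbol]

theorem meanDiffSymbol_abs (κ x y : ℝ) : meanDiffSymbol |κ| x y = meanDiffSymbol κ x y := by
  rcases abs_choice κ with h | h <;> simp only [h, meanDiffSymbol_neg]

theorem meanDiffOddSymbol_neg (κ x y : ℝ) :
    meanDiffOddSymbol (-κ) x y = -meanDiffOddSymbol κ x y := by
  simp only [meanDiffOddSymbol, mul_neg, neg_mul, Real.sin_neg]
  ring

theorem abs_meanDiffSymbol_le (κ x y : ℝ) :
    |meanDiffSymbol κ x y| ≤ |y⁻¹| * 2 + |x⁻¹| * 2 := by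
  refine (abs_add_le _ _).trans ?_
  rw [abs_mul, abs_mul]
  gcongr <;> exact abs_cos_sub_one_le _

theorem abs_meanDiffOddSymbol_le (κ x y : ℝ) :
    |meanDiffOddSymbol κ x y| ≤ |y⁻¹| * 2 + |x⁻¹| * 2 := by
  refine (abs_sub _ _).trans ?_
  rw [abs_mul, abs_mul]
  gcongr <;> exact (Real.abs_sin_le_one _).trans one_le_two

theorem measurable_meanDiffSymbol (κ : ℝ) :
    Measurable fun z : ℝ × ℝ => meanDiffSymbol κ z.1 z.2 := by
  unfold meanDiffSymbol
  fun_prop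

end MeanDiffSymbol

section SobolevMeanDifference

variable {V : Type*} [NormedAddCommGroup V]

theorem meanDiff_sobolevVelocity [NormedSpace ℝ V] [CompleteSpace V] {s : ℝ} (hs : 3 / 2 < s)
    (a : HartleyCoeff V) {x y : ℝ} (hx : x ≠ 0) (hy : y ≠ 0) (u : ℝ) :
    meanDiff (sobolevVelocity hs a) (u, x, y) =
      hartleySeries (hartleyMultiplier (fun k => meanDiffSymbol k x y)
        (fun k => meanDiffOddSymbol k x y) (positionCoeff s a)) u := by
  have hb := summable_norm_positionCoeff (by linarith : 1 / 2 < s) a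
  have hsum : ∀ h : ℝ, Summable fun k : ℤ => hartley k u • hartleyMultiplier
      (fun k => Real.cos (2 * Real.pi * k * h) - 1) (fun k => Real.sin (2 * Real.pi * k * h))
        (positionCoeff s a) k := fun h =>
    summable_hartley_smul (summable_norm_hartleyMultiplier hb (C := 2)
      (fun k => abs_cos_sub_one_le _) (fun k => (Real.abs_sin_le_one _).trans one_le_two)) u
  have hquotient : ∀ v : ℝ, v ≠ 0 → segmentMean (sobolevVelocity hs a) u v =
      ∑' k : ℤ, v⁻¹ • hartley k u • hartleyMultiplier
        (fun k => Real.cos (2 * Real.pi * k * v) - 1) (fun k => Real.sin (2 * Real.pi * k * v))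
          (positionCoeff s a) k := fun v hv => by
    rw [(hsum v).tsum_const_smul, ← hartleySeries, ← hartleySeries_add_sub hb,
      ← sobolevCurve_apply hs, ← sobolevCurve_apply hs,
      ← smul_segmentMean_deriv (sobolevVelocity hs a).continuous (hasDerivAt_sobolevCurve hs a),
      inv_smul_smul₀ hv]
  rw [meanDiff, hquotient y hy, hquotient (-x) (neg_ne_zero.2 hx),
    ← ((hsum y).const_smul _).tsum_sub ((hsum (-x)).const_smul _)]
  refine tsum_congr fun k => ?_
  simp only [hartleyMultiplier, meanDiffSymbol, meanDiffOddSymbol, mul_neg, Real.cos_neg,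
    Real.sin_neg, inv_neg]
  module

theorem tsum_meanDiffSymbol_sq_le_lintegral [InnerProductSpace ℝ V] [CompleteSpace V] {s : ℝ}
    (hs : 3 / 2 < s) (a : HartleyCoeff V) {x y : ℝ} (hx : x ≠ 0) (hy : y ≠ 0) :
    ∑' k : ℤ, ENNReal.ofReal (meanDiffSymbol k x y ^ 2) *
        ENNReal.ofReal (sobolevWeight s k ^ 2 * ‖a k‖ ^ 2) ≤
      ∫⁻ u in Ico (0 : ℝ) 1,
        ENNReal.ofReal (‖meanDiff (sobolevVelocity hs a) (u, x, y)‖ ^ 2) := by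
  have hb := summable_norm_positionCoeff (by linarith : 1 / 2 < s) a
  have hc := continuous_meanDiff (sobolevVelocity hs a).continuous
  have heven := fun k : ℤ => abs_meanDiffSymbol_le k x y
  have hodd := fun k : ℤ => abs_meanDiffOddSymbol_le k x y
  have hsum := summable_symbol_sq_mul_norm_sq hb heven hodd
  rw [← ofReal_intervalIntegral_eq_lintegral (by fun_prop) (fun t => by positivity)]
  simp_rw [meanDiff_sobolevVelocity hs a hx hy]
  rw [integral_norm_sq_hartleySeries_hartleyMultiplier hb heven hodd
      (fun k => by rw [Int.cast_neg, meanDiffSymbol_neg])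
      (fun k => by rw [Int.cast_neg, meanDiffOddSymbol_neg]),
    ENNReal.ofReal_tsum_of_nonneg (fun k => by positivity) hsum]
  refine ENNReal.tsum_le_tsum fun k => ?_
  rw [← ENNReal.ofReal_mul (by positivity), positionCoeff, norm_smul, mul_pow, Real.norm_eq_abs,
    sq_abs]
  refine ENNReal.ofReal_le_ofReal ?_
  gcongr
  exact le_add_of_nonneg_right (by positivity)

end SobolevMeanDifference

section MultiplierLowerBound

variable {κ : ℝ}

/-- Distances which are between a quarter and three tenths of the wave length `1 / κ`. -/
def quarterWaves (κ : ℝ) : Set ℝ := Icc (1 / (4 * κ)) (3 / (10 * κ))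

theorem pos_of_mem_quarterWaves (hκ : 0 < κ) {x : ℝ} (hx : x ∈ quarterWaves κ) : 0 < x :=
  lt_of_lt_of_le (by positivity) hx.1

theorem le_of_mem_quarterWaves {x : ℝ} (hx : x ∈ quarterWaves κ) : x ≤ 3 / 10 * κ⁻¹ :=
  hx.2.trans_eq (by rw [div_mul_eq_div_div, div_eq_mul_inv _ κ])

theorem cos_two_pi_mul_nonpos (hκ : 0 < κ) {x : ℝ} (hx : x ∈ quarterWaves κ) :
    Real.cos (2 * Real.pi * κ * x) ≤ 0 := by
  have hπ := Real.pi_pos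
  have hlower : 1 / 4 ≤ κ * x := by
    calc (1 : ℝ) / 4 = κ * (1 / (4 * κ)) := by field_simp
      _ ≤ κ * x := mul_le_mul_of_nonneg_left hx.1 hκ.le
  have hupper : κ * x ≤ 3 / 10 := by
    calc κ * x ≤ κ * (3 / (10 * κ)) := mul_le_mul_of_nonneg_left hx.2 hκ.le
      _ = 3 / 10 := by field_simp
  exact Real.cos_nonpos_of_pi_div_two_le_of_le (by nlinarith) (by nlinarith)

theorem quarterWaves_prod_subset_arcPairs (hκ : 1 ≤ κ) :
    quarterWaves κ ×ˢ quarterWaves κ ⊆ arcPairs := by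
  have hκ0 : 0 < κ := one_pos.trans_le hκ
  have hinv : κ⁻¹ ≤ 1 := inv_le_one_of_one_le₀ hκ
  rintro ⟨x, y⟩ ⟨hx, hy⟩
  have hx1 := le_of_mem_quarterWaves hx
  have hy1 := le_of_mem_quarterWaves hy
  exact ⟨pos_of_mem_quarterWaves hκ0 hx, pos_of_mem_quarterWaves hκ0 hy,
    by simp only at hx1 hy1 ⊢; linarith, by simp only at hx1 hy1 ⊢; linarith⟩

theorem rpow_le_arcDensity {p : ℝ} (hp : 2 ≤ p) (hκ : 0 < κ) {x y : ℝ}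
    (hx : x ∈ quarterWaves κ) (hy : y ∈ quarterWaves κ) :
    κ ^ (3 * p - 4) ≤ arcDensity p (x, y) := by
  have hx0 := pos_of_mem_quarterWaves hκ hx
  have hy0 := pos_of_mem_quarterWaves hκ hy
  have hx1 := le_of_mem_quarterWaves hx
  have hy1 := le_of_mem_quarterWaves hy
  have hrpow : ∀ {t r : ℝ}, 0 < t → t ≤ κ⁻¹ → r ≤ 0 → κ ^ (-r) ≤ t ^ r := fun ht0 ht1 hr => by
    have hle := Real.rpow_le_rpow_of_nonpos ht0 ht1 hr
    rwa [Real.inv_rpow hκ.le, ← Real.rpow_neg hκ.le] at hle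
  calc κ ^ (3 * p - 4) = κ ^ (-(2 - p)) * κ ^ (-(2 - p)) * κ ^ (- -p) := by
        rw [← Real.rpow_add hκ, ← Real.rpow_add hκ]
        ring_nf
    _ ≤ x ^ (2 - p) * y ^ (2 - p) * (x + y) ^ (-p) := by
        gcongr
        · exact hrpow hx0 (by linarith [inv_pos.2 hκ]) (by linarith)
        · exact hrpow hy0 (by linarith [inv_pos.2 hκ]) (by linarith)
        · exact hrpow (add_pos hx0 hy0) (by linarith [inv_pos.2 hκ]) (by linarith)

theorem sq_le_meanDiffSymbol_sq (hκ : 0 < κ) {x y : ℝ} (hx : x ∈ quarterWaves κ)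
    (hy : y ∈ quarterWaves κ) : κ ^ 2 ≤ meanDiffSymbol κ x y ^ 2 := by
  have hcosx := cos_two_pi_mul_nonpos hκ hx
  have hcosy := cos_two_pi_mul_nonpos hκ hy
  have hx0 := pos_of_mem_quarterWaves hκ hx
  have hx1 := le_of_mem_quarterWaves hx
  have hxinv : κ ≤ x⁻¹ := by
    rw [le_inv_comm₀ hκ hx0]
    linarith [inv_pos.2 hκ]
  have hyinv : 0 < y⁻¹ := inv_pos.2 (pos_of_mem_quarterWaves hκ hy)
  rw [← neg_sq (meanDiffSymbol κ x y)]
  refine pow_le_pow_left₀ hκ.le ?_ 2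
  unfold meanDiffSymbol
  nlinarith

theorem volume_quarterWaves_prod (hκ : 0 < κ) :
    volume (quarterWaves κ ×ˢ quarterWaves κ) = ENNReal.ofReal ((κ ^ 2)⁻¹ / 400) := by
  have hlength : 3 / (10 * κ) - 1 / (4 * κ) = κ⁻¹ / 20 := by
    field_simp
    norm_num
  rw [Measure.volume_eq_prod, Measure.prod_prod, quarterWaves, Real.volume_Icc, hlength,
    ← ENNReal.ofReal_mul (by positivity)]
  ring_nf

theorem le_lintegral_arcMeasure_meanDiffSymbol_sq {p : ℝ} (hp : 2 ≤ p) (hκ : 1 ≤ κ) :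
    ENNReal.ofReal (κ ^ (3 * p - 4) / 400) ≤
      ∫⁻ z, ENNReal.ofReal (meanDiffSymbol κ z.1 z.2 ^ 2) ∂arcMeasure p := by
  have hκ0 : 0 < κ := one_pos.trans_le hκ
  have hsymbol := measurable_meanDiffSymbol κ
  rw [lintegral_arcMeasure p (by fun_prop)]
  calc ENNReal.ofReal (κ ^ (3 * p - 4) / 400)
      = ∫⁻ _ in quarterWaves κ ×ˢ quarterWaves κ, ENNReal.ofReal (κ ^ (3 * p - 4) * κ ^ 2) := by
        rw [setLIntegral_const, volume_quarterWaves_prod hκ0,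
          ← ENNReal.ofReal_mul (by positivity)]
        congr 1
        field_simp
    _ ≤ ∫⁻ z in quarterWaves κ ×ˢ quarterWaves κ, ENNReal.ofReal (arcDensity p z) *
          ENNReal.ofReal (meanDiffSymbol κ z.1 z.2 ^ 2) := by
        refine setLIntegral_mono' (measurableSet_Icc.prod measurableSet_Icc) fun z hz => ?_
        rw [ENNReal.ofReal_mul (by positivity)]
        exact mul_le_mul' (ENNReal.ofReal_le_ofReal (rpow_le_arcDensity hp hκ0 hz.1 hz.2))
          (ENNReal.ofReal_le_ofReal (sq_le_meanDiffSymbol_sq hκ0 hz.1 hz.2))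
    _ ≤ _ := lintegral_mono_set (quarterWaves_prod_subset_arcPairs hκ)

end MultiplierLowerBound

theorem le_sobolevWeight_sq {s κ : ℝ} (hs : 0 ≤ s) {k : ℤ} (hκ : κ = |(k : ℝ)|) (hκ1 : 1 ≤ κ) :
    2 ^ (-s) * κ ^ (-(2 * s)) ≤ sobolevWeight s k ^ 2 := by
  have hpow : (2 : ℝ) ^ (-s) * κ ^ (-(2 * s)) = (2 * κ ^ 2) ^ (-s) := by
    rw [Real.mul_rpow (by norm_num) (by positivity), ← Real.rpow_two, ← Real.rpow_mul (by linarith)]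
    ring_nf
  rw [sobolevWeight_sq, ← sq_abs (k : ℝ), ← hκ, hpow]
  exact Real.rpow_le_rpow_of_nonpos (by positivity) (by nlinarith) (by linarith)

/-- The constant in the lower bound of the energy of the difference of mean velocities by the
Sobolev norm of exponent `3p/2 - 2`. -/
def meanDiffConst (p : ℝ) : ℝ := 2 ^ (-(3 * p / 2 - 2)) / 400

theorem meanDiffConst_pos (p : ℝ) : 0 < meanDiffConst p := by
  unfold meanDiffConst
  positivity

theorem meanDiffConst_le_lintegral_symbol {p : ℝ} (hp : 2 ≤ p) {k : ℤ} (hk : k ≠ 0) :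
    ENNReal.ofReal (meanDiffConst p) ≤
      (∫⁻ z, ENNReal.ofReal (meanDiffSymbol k z.1 z.2 ^ 2) ∂arcMeasure p) *
        ENNReal.ofReal (sobolevWeight (3 * p / 2 - 2) k ^ 2) := by
  have hκ1 : 1 ≤ |(k : ℝ)| := by exact_mod_cast Int.one_le_abs hk
  have hκ0 : 0 < |(k : ℝ)| := one_pos.trans_le hκ1
  have hweight := le_sobolevWeight_sq (s := 3 * p / 2 - 2) (by linarith) rfl hκ1
  have hsymbol := le_lintegral_arcMeasure_meanDiffSymbol_sq hp hκ1
  simp_rw [meanDiffSymbol_abs] at hsymbol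
  have hone : |(k : ℝ)| ^ (3 * p - 4) * |(k : ℝ)| ^ (-(2 * (3 * p / 2 - 2))) = 1 := by
    rw [← Real.rpow_add hκ0, ← Real.rpow_zero |(k : ℝ)|]
    ring_nf
  calc ENNReal.ofReal (meanDiffConst p)
      = ENNReal.ofReal (|(k : ℝ)| ^ (3 * p - 4) / 400) *
          ENNReal.ofReal (2 ^ (-(3 * p / 2 - 2)) * |(k : ℝ)| ^ (-(2 * (3 * p / 2 - 2)))) := by
        rw [← ENNReal.ofReal_mul (by positivity), meanDiffConst]
        congr 1
        linear_combination (-(2 ^ (-(3 * p / 2 - 2)) / 400)) * hone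
    _ ≤ _ := by gcongr

theorem le_lintegral_meanDiff_sq {V : Type*} [NormedAddCommGroup V] [InnerProductSpace ℝ V]
    [CompleteSpace V] {p : ℝ} (hs : 3 / 2 < 3 * p / 2 - 2) (a : HartleyCoeff V) :
    ENNReal.ofReal (meanDiffConst p * (‖a‖ ^ 2 - ‖a 0‖ ^ 2)) ≤
      ∫⁻ z, ENNReal.ofReal (‖meanDiff (sobolevVelocity hs a) z‖ ^ 2) ∂configMeasure p := by
  have hmeas : Measurable fun z => ENNReal.ofReal (‖meanDiff (sobolevVelocity hs a) z‖ ^ 2) :=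
    ((continuous_meanDiff (sobolevVelocity hs a).continuous).norm.pow 2).measurable.ennreal_ofReal
  have hsum : HasSum (fun k : ℤ => meanDiffConst p * if k = 0 then 0 else ‖a k‖ ^ 2)
      (meanDiffConst p * (‖a‖ ^ 2 - ‖a 0‖ ^ 2)) := by
    refine HasSum.mul_left _ (((hasSum_norm_sq a).sub
      (hasSum_ite_eq (0 : ℤ) (‖a 0‖ ^ 2))).congr_fun fun k => ?_)
    split_ifs with hk <;> simp [hk]
  have hconst := (meanDiffConst_pos p).le
  calc ENNReal.ofReal (meanDiffConst p * (‖a‖ ^ 2 - ‖a 0‖ ^ 2))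
      = ∑' k : ℤ, ENNReal.ofReal (meanDiffConst p * if k = 0 then 0 else ‖a k‖ ^ 2) := by
        rw [← hsum.tsum_eq, ENNReal.ofReal_tsum_of_nonneg (fun k => by positivity) hsum.summable]
    _ ≤ ∑' k : ℤ, (∫⁻ z, ENNReal.ofReal (meanDiffSymbol k z.1 z.2 ^ 2) ∂arcMeasure p) *
          ENNReal.ofReal (sobolevWeight (3 * p / 2 - 2) k ^ 2 * ‖a k‖ ^ 2) := by
        refine ENNReal.tsum_le_tsum fun k => ?_
        split_ifs with hk
        · simp
        rw [ENNReal.ofReal_mul hconst, ENNReal.ofReal_mul (sq_nonneg _), ← mul_assoc]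
        gcongr
        exact meanDiffConst_le_lintegral_symbol (by linarith) hk
    _ = ∫⁻ z, ∑' k : ℤ, ENNReal.ofReal (meanDiffSymbol k z.1 z.2 ^ 2) *
          ENNReal.ofReal (sobolevWeight (3 * p / 2 - 2) k ^ 2 * ‖a k‖ ^ 2) ∂arcMeasure p := by
        have hsymbol := fun k : ℤ => (measurable_meanDiffSymbol k).pow_const 2 |>.ennreal_ofReal
        rw [lintegral_tsum fun k => ((hsymbol k).mul_const _).aemeasurable]
        exact tsum_congr fun k => (lintegral_mul_const _ (hsymbol k)).symm
    _ ≤ _ := by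
        rw [lintegral_configMeasure p hmeas]
        refine lintegral_mono_ae ?_
        filter_upwards [ae_arcMeasure p] with z hz
        exact tsum_meanDiffSymbol_sq_le_lintegral hs a hz.1.ne' hz.2.1.ne'

/-! ### Symmetric triple integrals over the circle -/

theorem lintegral_Ico_add_of_periodic {g : ℝ → ℝ≥0∞} (hg : Function.Periodic g 1) (c : ℝ) :
    ∫⁻ u in Ico (0 : ℝ) 1, g (u + c) = ∫⁻ u in Ico (0 : ℝ) 1, g u := by
  have hfund := isAddFundamentalDomain_Ioc (μ := volume) one_pos c
  have hfund0 := isAddFundamentalDomain_Ioc (μ := volume) one_pos (0 : ℝ)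
  have hperiod : ∫⁻ u in Ioc c (c + 1), g u = ∫⁻ u in Ioc 0 ((0 : ℝ) + 1), g u := by
    refine hfund.setLIntegral_eq hfund0 g fun k x => ?_
    obtain ⟨k, m, rfl⟩ := k
    simpa [AddSubgroup.vadd_def, add_comm] using hg.zsmul m x
  have htranslate := (measurePreserving_add_right (volume : Measure ℝ)
    c).setLIntegral_comp_preimage_emb (MeasurableEquiv.addRight c).measurableEmbedding g
      (Ioc c (c + 1))
  rw [zero_add] at hperiod
  rw [setLIntegral_congr Ico_ae_eq_Ioc, setLIntegral_congr Ico_ae_eq_Ioc, ← hperiod, ← htranslate]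
  simp

section ArcSymmetries

/-- If `z = (a, b)` are two consecutive arcs of a partition of the circle into arcs `a, b, c`, then
`rotateArcs z = (b, c)`. -/
def rotateArcs (z : ℝ × ℝ) : ℝ × ℝ := (z.2, 1 - z.1 - z.2)

/-- The reflection of the unit square exchanging the cyclically ordered and the anticyclically
ordered triples of points. -/
def reverseArcs (z : ℝ × ℝ) : ℝ × ℝ := (1 - z.2, 1 - z.1)

/-- The pairs of consecutive arcs of the partitions of the circle into three arcs. -/
def arcSimplex : Set (ℝ × ℝ) := {z | 0 < z.1 ∧ 0 < z.2 ∧ 0 < 1 - z.1 - z.2}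

theorem measurableSet_arcSimplex : MeasurableSet arcSimplex :=
  (measurableSet_lt measurable_const measurable_fst).inter
    ((measurableSet_lt measurable_const measurable_snd).inter
      (measurableSet_lt measurable_const ((measurable_fst.const_sub 1).sub measurable_snd)))

theorem measurePreserving_rotateArcs : MeasurePreserving rotateArcs volume volume := by
  have hshear : MeasurePreserving (fun z : ℝ × ℝ => (z.1, 1 - z.1 - z.2))
      ((volume : Measure ℝ).prod volume) ((volume : Measure ℝ).prod volume) := by
    refine (MeasurePreserving.id (volume : Measure ℝ)).skew_product
      (g := fun x y => 1 - x - y) (by fun_prop) (ae_of_all _ fun x => ?_)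
    exact (Measure.measurePreserving_sub_left volume (1 - x)).map_eq
  have hcomp : rotateArcs = (fun z : ℝ × ℝ => (z.1, 1 - z.1 - z.2)) ∘ Prod.swap := by
    funext z
    simp [rotateArcs, sub_right_comm]
  rw [hcomp]
  exact hshear.comp (Measure.measurePreserving_swap (μ := (volume : Measure ℝ)) (ν := volume))

theorem measurePreserving_reverseArcs : MeasurePreserving reverseArcs volume volume := by
  have hsub := Measure.measurePreserving_sub_left (volume : Measure ℝ) 1
  exact (hsub.prod hsub).comp
    (Measure.measurePreserving_swap (μ := (volume : Measure ℝ)) (ν := volume))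

theorem ae_fst_ne (c : ℝ) : ∀ᵐ z : ℝ × ℝ, z.1 ≠ c :=
  Measure.quasiMeasurePreserving_fst.ae (Measure.ae_ne volume c)

theorem ae_snd_ne (c : ℝ) : ∀ᵐ z : ℝ × ℝ, z.2 ≠ c :=
  Measure.quasiMeasurePreserving_snd.ae (Measure.ae_ne volume c)

theorem square_ae_eq_arcSimplex_union : (Ico (0 : ℝ) 1 ×ˢ Ico (0 : ℝ) 1 : Set (ℝ × ℝ))
    =ᵐ[volume] (arcSimplex ∪ reverseArcs ⁻¹' arcSimplex : Set (ℝ × ℝ)) := by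
  have hdiag : ∀ᵐ z : ℝ × ℝ, 1 - z.1 - z.2 ≠ 0 :=
    measurePreserving_rotateArcs.quasiMeasurePreserving.ae (ae_snd_ne 0)
  filter_upwards [ae_fst_ne 0, ae_snd_ne 0, hdiag] with z h1 h2 h3
  refine propext (?_ : z ∈ Ico (0 : ℝ) 1 ×ˢ Ico (0 : ℝ) 1 ↔
    z ∈ arcSimplex ∪ reverseArcs ⁻¹' arcSimplex)
  simp only [mem_prod, mem_Ico, mem_union, mem_preimage, arcSimplex, reverseArcs, mem_ofPred_eq]
  constructor
  · rintro ⟨⟨hz1, hz1'⟩, hz2, hz2'⟩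
    rcases lt_or_gt_of_ne h3 with h | h
    · exact Or.inr ⟨by linarith, by linarith, by linarith⟩
    · exact Or.inl ⟨lt_of_le_of_ne hz1 h1.symm, lt_of_le_of_ne hz2 h2.symm, h⟩
  · rintro (⟨ha, hb, hc⟩ | ⟨ha, hb, hc⟩) <;>
      exact ⟨⟨by linarith, by linarith⟩, by linarith, by linarith⟩

theorem mem_arcPairs_iff {z : ℝ × ℝ} :
    z ∈ arcPairs ↔ 0 < z.1 ∧ 0 < z.2 ∧ z.1 ≤ 1 - z.1 - z.2 ∧ z.2 < 1 - z.1 - z.2 := by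
  refine and_congr_right fun _ => and_congr_right fun _ => and_congr ?_ ?_
  · constructor <;> intro h <;> linarith
  · constructor <;> intro h <;> linarith

theorem rotateArcs_mem_arcPairs_iff {z : ℝ × ℝ} :
    rotateArcs z ∈ arcPairs ↔ 0 < z.2 ∧ 0 < 1 - z.1 - z.2 ∧ z.2 ≤ z.1 ∧ 1 - z.1 - z.2 < z.1 := by
  simp only [mem_arcPairs_iff, rotateArcs, show 1 - z.2 - (1 - z.1 - z.2) = z.1 by ring]

theorem rotateArcs_rotateArcs_mem_arcPairs_iff {z : ℝ × ℝ} : rotateArcs (rotateArcs z) ∈ arcPairs ↔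
    0 < 1 - z.1 - z.2 ∧ 0 < z.1 ∧ 1 - z.1 - z.2 ≤ z.2 ∧ z.1 < z.2 := by
  rw [rotateArcs_mem_arcPairs_iff]
  simp only [rotateArcs, show 1 - z.2 - (1 - z.1 - z.2) = z.1 by ring]

theorem arcSimplex_ae_eq_arcPairs_union : arcSimplex =ᵐ[volume] (arcPairs ∪
    (rotateArcs ⁻¹' arcPairs ∪ rotateArcs ⁻¹' (rotateArcs ⁻¹' arcPairs)) : Set (ℝ × ℝ)) := by
  filter_upwards [ae_fst_ne (1 / 3)] with z hne
  refine propext (?_ : z ∈ arcSimplex ↔ z ∈ arcPairs ∪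
    (rotateArcs ⁻¹' arcPairs ∪ rotateArcs ⁻¹' (rotateArcs ⁻¹' arcPairs)))
  rw [mem_union, mem_union, mem_preimage, mem_preimage, mem_preimage,
    rotateArcs_rotateArcs_mem_arcPairs_iff, rotateArcs_mem_arcPairs_iff, mem_arcPairs_iff]
  constructor
  · rintro ⟨ha, hb, hc⟩
    rcases lt_or_ge z.2 (1 - z.1 - z.2) with hbc | hcb
    · rcases le_or_gt z.1 (1 - z.1 - z.2) with hac | hca
      · exact Or.inl ⟨ha, hb, hac, hbc⟩
      · exact Or.inr (Or.inl ⟨hb, hc, by linarith, hca⟩)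
    · rcases lt_or_ge z.1 z.2 with hab | hba
      · exact Or.inr (Or.inr ⟨hc, ha, hcb, hab⟩)
      · rcases lt_or_ge (1 - z.1 - z.2) z.1 with hca | hac
        · exact Or.inr (Or.inl ⟨hb, hc, hba, hca⟩)
        · exact absurd (by linarith) hne
  · rintro (⟨ha, hb, _, hbc⟩ | ⟨hb, hc, _, hca⟩ | ⟨hc, ha, _, hab⟩) <;>
      exact ⟨by linarith, by linarith, by linarith⟩

theorem setLIntegral_preimage_of_invariant {α : Type*} [MeasurableSpace α] {μ : Measure α}
    {σ : α → α} (hσ : MeasurePreserving σ μ μ) {Φ : α → ℝ≥0∞} (hΦ : Measurable Φ)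
    (hinv : ∀ z, Φ (σ z) = Φ z) {T : Set α} (hT : MeasurableSet T) :
    ∫⁻ z in σ ⁻¹' T, Φ z ∂μ = ∫⁻ z in T, Φ z ∂μ := by
  rw [← hσ.setLIntegral_comp_preimage hT hΦ]
  exact lintegral_congr fun z => (hinv z).symm

variable {Φ : ℝ × ℝ → ℝ≥0∞} (hΦ : Measurable Φ)
include hΦ

theorem lintegral_square_eq (hrev : ∀ z, Φ (reverseArcs z) = Φ z) :
    ∫⁻ z in Ico (0 : ℝ) 1 ×ˢ Ico (0 : ℝ) 1, Φ z = 2 * ∫⁻ z in arcSimplex, Φ z := by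
  have hdisj : Disjoint arcSimplex (reverseArcs ⁻¹' arcSimplex) := by
    rw [Set.disjoint_left]
    rintro z ⟨_, _, hc⟩ ⟨_, _, hc'⟩
    simp only [reverseArcs] at hc'
    linarith
  rw [setLIntegral_congr square_ae_eq_arcSimplex_union,
    lintegral_union (measurePreserving_reverseArcs.measurable measurableSet_arcSimplex) hdisj,
    setLIntegral_preimage_of_invariant measurePreserving_reverseArcs hΦ hrev
      measurableSet_arcSimplex, two_mul]

theorem lintegral_arcSimplex_eq (hrot : ∀ z, Φ (rotateArcs z) = Φ z) :
    ∫⁻ z in arcSimplex, Φ z = 3 * ∫⁻ z in arcPairs, Φ z := by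
  have hrotm := measurePreserving_rotateArcs.measurable
  have hmeas1 := hrotm measurableSet_arcPairs
  have hmeas2 := hrotm hmeas1
  have hdisj1 : Disjoint (rotateArcs ⁻¹' arcPairs)
      (rotateArcs ⁻¹' (rotateArcs ⁻¹' arcPairs)) := by
    rw [Set.disjoint_left]
    intro z hz hz'
    have hz1 := rotateArcs_mem_arcPairs_iff.1 hz
    have hz2 := rotateArcs_rotateArcs_mem_arcPairs_iff.1 hz'
    linarith
  have hdisj2 : Disjoint arcPairs
      (rotateArcs ⁻¹' arcPairs ∪ rotateArcs ⁻¹' (rotateArcs ⁻¹' arcPairs)) := by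
    rw [Set.disjoint_left]
    intro z hz hz'
    have hz0 := mem_arcPairs_iff.1 hz
    rcases hz' with hz' | hz'
    · have hz1 := rotateArcs_mem_arcPairs_iff.1 hz'
      linarith
    · have hz2 := rotateArcs_rotateArcs_mem_arcPairs_iff.1 hz'
      linarith
  rw [setLIntegral_congr arcSimplex_ae_eq_arcPairs_union,
    lintegral_union (hmeas1.union hmeas2) hdisj2, lintegral_union hmeas2 hdisj1,
    setLIntegral_preimage_of_invariant measurePreserving_rotateArcs hΦ hrot hmeas1,
    setLIntegral_preimage_of_invariant measurePreserving_rotateArcs hΦ hrot measurableSet_arcPairs]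
  ring

end ArcSymmetries

section TripleIntegral

/-- The integral of `F` over all the configurations with adjacent arcs `z`. -/
def configIntegral (F : ℝ → ℝ → ℝ → ℝ≥0∞) (z : ℝ × ℝ) : ℝ≥0∞ :=
  ∫⁻ u in Ico (0 : ℝ) 1, F (u - z.1) u (u + z.2)

variable {F : ℝ → ℝ → ℝ → ℝ≥0∞}

theorem measurable_configIntegral (hF : Measurable fun x : ℝ × ℝ × ℝ => F x.1 x.2.1 x.2.2) :
    Measurable (configIntegral F) :=
  Measurable.lintegral_prod_right' (f := fun x : (ℝ × ℝ) × ℝ =>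
      F (x.2 - x.1.1) x.2 (x.2 + x.1.2))
    (hF.comp (g := fun x : ℝ × ℝ × ℝ => F x.1 x.2.1 x.2.2)
      (f := fun x : (ℝ × ℝ) × ℝ => (x.2 - x.1.1, x.2, x.2 + x.1.2)) (by fun_prop))

theorem periodic_snd_of_cyclic (hcyc : ∀ x y z, F x y z = F y z x)
    (hper : ∀ x y z, F (x + 1) y z = F x y z) (x y z : ℝ) : F x (y + 1) z = F x y z := by
  rw [hcyc, hper, ← hcyc]

theorem periodic_trd_of_cyclic (hcyc : ∀ x y z, F x y z = F y z x)
    (hper : ∀ x y z, F (x + 1) y z = F x y z) (x y z : ℝ) : F x y (z + 1) = F x y z := by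
  rw [hcyc, periodic_snd_of_cyclic hcyc hper, ← hcyc]

theorem lintegral_shift_of_periodic (hcyc : ∀ x y z, F x y z = F y z x)
    (hper : ∀ x y z, F (x + 1) y z = F x y z) (a b c d : ℝ) :
    ∫⁻ u in Ico (0 : ℝ) 1, F (u + (a + d)) (u + (b + d)) (u + (c + d)) =
      ∫⁻ u in Ico (0 : ℝ) 1, F (u + a) (u + b) (u + c) := by
  rw [← lintegral_Ico_add_of_periodic (g := fun u => F (u + a) (u + b) (u + c))
    (fun u => by simp only [add_right_comm u 1, hper, periodic_snd_of_cyclic hcyc hper,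
      periodic_trd_of_cyclic hcyc hper]) d]
  refine lintegral_congr fun u => ?_
  simp only [add_assoc, add_comm d]

theorem configIntegral_rotateArcs (hcyc : ∀ x y z, F x y z = F y z x)
    (hper : ∀ x y z, F (x + 1) y z = F x y z) (z : ℝ × ℝ) :
    configIntegral F (rotateArcs z) = configIntegral F z := by
  calc configIntegral F (rotateArcs z)
      = ∫⁻ u in Ico (0 : ℝ) 1, F (u + (-z.1 + -z.2)) (u + (0 + -z.2)) (u + (z.2 + -z.2)) := by
        refine lintegral_congr fun u => ?_
        rw [← hper (u + (-z.1 + -z.2)), hcyc (u + _ + 1)]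
        simp only [rotateArcs]
        ring_nf
    _ = configIntegral F z := by
        rw [lintegral_shift_of_periodic hcyc hper]
        exact lintegral_congr fun u => by ring_nf

theorem configIntegral_reverseArcs (hswap : ∀ x y z, F x y z = F x z y)
    (hcyc : ∀ x y z, F x y z = F y z x) (hper : ∀ x y z, F (x + 1) y z = F x y z) (z : ℝ × ℝ) :
    configIntegral F (reverseArcs z) = configIntegral F z := by
  refine lintegral_congr fun u => ?_
  calc F (u - (1 - z.2)) u (u + (1 - z.1))
      = F (u - (1 - z.2) + 1) u (u - z.1 + 1) := by rw [hper, add_sub_left_comm, add_comm 1]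
    _ = F (u + z.2) u (u - z.1) := by
        rw [periodic_trd_of_cyclic hcyc hper]
        ring_nf
    _ = F (u - z.1) u (u + z.2) := by rw [hcyc, hcyc, hswap]

theorem lintegral_triple_eq_lintegral_square
    (hF : Measurable fun x : ℝ × ℝ × ℝ => F x.1 x.2.1 x.2.2)
    (hcyc : ∀ x y z, F x y z = F y z x) (hper : ∀ x y z, F (x + 1) y z = F x y z) :
    ∫⁻ u in Ico (0 : ℝ) 1, ∫⁻ v in Ico (0 : ℝ) 1, ∫⁻ w in Ico (0 : ℝ) 1, F u v w =
      ∫⁻ z in Ico (0 : ℝ) 1 ×ˢ Ico (0 : ℝ) 1, configIntegral F z := by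
  have hinner : ∀ u : ℝ, ∫⁻ v in Ico (0 : ℝ) 1, ∫⁻ w in Ico (0 : ℝ) 1, F u v w =
      ∫⁻ z in Ico (0 : ℝ) 1 ×ˢ Ico (0 : ℝ) 1, F u (z.1 + u) (z.2 + (z.1 + u)) := fun u => by
    rw [Measure.volume_eq_prod, ← Measure.prod_restrict, lintegral_prod,
      ← lintegral_Ico_add_of_periodic (g := fun v => ∫⁻ w in Ico (0 : ℝ) 1, F u v w)
        (fun v => by simp only [periodic_snd_of_cyclic hcyc hper]) u]
    · refine lintegral_congr fun v => ?_
      rw [← lintegral_Ico_add_of_periodic (g := fun w => F u (v + u) w)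
        (fun w => by simp only [periodic_trd_of_cyclic hcyc hper]) (v + u)]
    · exact (hF.comp (f := fun z : ℝ × ℝ => (u, z.1 + u, z.2 + (z.1 + u)))
        (by fun_prop)).aemeasurable
  simp_rw [hinner]
  rw [lintegral_lintegral_swap]
  · refine lintegral_congr fun z => ?_
    calc ∫⁻ u in Ico (0 : ℝ) 1, F u (z.1 + u) (z.2 + (z.1 + u))
        = ∫⁻ u in Ico (0 : ℝ) 1, F (u + (-z.1 + z.1)) (u + (0 + z.1)) (u + (z.2 + z.1)) :=
          lintegral_congr fun u => by ring_nf
      _ = configIntegral F z := by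
          rw [lintegral_shift_of_periodic hcyc hper]
          exact lintegral_congr fun u => by ring_nf
  · exact (hF.comp (f := fun x : ℝ × ℝ × ℝ => (x.1, x.2.1 + x.1, x.2.2 + (x.2.1 + x.1)))
      (by fun_prop)).aemeasurable

theorem lintegral_triple_eq_lintegral_arcPairs
    (hF : Measurable fun x : ℝ × ℝ × ℝ => F x.1 x.2.1 x.2.2)
    (hswap : ∀ x y z, F x y z = F x z y) (hcyc : ∀ x y z, F x y z = F y z x)
    (hper : ∀ x y z, F (x + 1) y z = F x y z) :
    ∫⁻ u in Ico (0 : ℝ) 1, ∫⁻ v in Ico (0 : ℝ) 1, ∫⁻ w in Ico (0 : ℝ) 1, F u v w =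
      6 * ∫⁻ z in arcPairs, configIntegral F z := by
  have hmeas := measurable_configIntegral hF
  rw [lintegral_triple_eq_lintegral_square hF hcyc hper,
    lintegral_square_eq hmeas (configIntegral_reverseArcs hswap hcyc hper),
    lintegral_arcSimplex_eq hmeas (configIntegral_rotateArcs hcyc hper), ← mul_assoc]
  norm_num

end TripleIntegral

/-! ### The energy in terms of mean velocities -/

section Curvature

variable {n : ℕ}

theorem wedgeNorm_sq (a b : EuclideanSpace ℝ (Fin n)) :
    wedgeNorm a b ^ 2 = ‖a‖ ^ 2 * ‖b‖ ^ 2 - (inner ℝ a b : ℝ) ^ 2 := by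
  refine Real.sq_sqrt (sub_nonneg.2 ?_)
  rw [← mul_pow, sq_le_sq, abs_of_nonneg (mul_nonneg (norm_nonneg a) (norm_nonneg b))]
  exact abs_real_inner_le_norm a b

theorem wedgeNorm_comm (a b : EuclideanSpace ℝ (Fin n)) : wedgeNorm a b = wedgeNorm b a := by
  simp only [wedgeNorm, real_inner_comm, mul_comm]

theorem wedgeNorm_sub_neg (a b : EuclideanSpace ℝ (Fin n)) :
    wedgeNorm (b - a) (-a) = wedgeNorm a b := by
  unfold wedgeNorm
  congr 1
  rw [norm_neg, inner_neg_right, inner_sub_left, norm_sub_sq_real, real_inner_self_eq_norm_sq,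
    real_inner_comm b a]
  ring

theorem wedgeNorm_smul_smul_add_smul_sq (a b c : ℝ) (x y : EuclideanSpace ℝ (Fin n)) :
    wedgeNorm (a • x) (c • x + b • y) ^ 2 =
      a ^ 2 * b ^ 2 * (‖x‖ ^ 2 * ‖y‖ ^ 2 - (inner ℝ x y : ℝ) ^ 2) := by
  rw [wedgeNorm_sq, norm_add_sq_real]
  simp only [norm_smul, Real.norm_eq_abs, inner_add_right, real_inner_smul_left,
    real_inner_smul_right, real_inner_self_eq_norm_sq, mul_pow, sq_abs]
  ring

theorem invR_swap (p q : ℝ) (x y z : EuclideanSpace ℝ (Fin n)) :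
    invR p q x y z = invR p q x z y := by
  simp only [invR, wedgeNorm_comm (y - x), norm_sub_rev y z]
  ring_nf

theorem invR_cyclic (p q : ℝ) (x y z : EuclideanSpace ℝ (Fin n)) :
    invR p q x y z = invR p q y z x := by
  have hwedge : wedgeNorm (z - y) (x - y) = wedgeNorm (y - x) (z - x) := by
    rw [← wedgeNorm_sub_neg (y - x) (z - x)]
    congr 1 <;> abel
  simp only [invR]
  rw [hwedge, norm_sub_rev z x, norm_sub_rev z y, norm_sub_rev x y, norm_sub_rev x z]
  ring_nf

theorem measurable_invR (p q : ℝ) {β : Type*} [MeasurableSpace β]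
    {f g h : β → EuclideanSpace ℝ (Fin n)} (hf : Measurable f) (hg : Measurable g)
    (hh : Measurable h) : Measurable fun t => invR p q (f t) (g t) (h t) := by
  unfold invR wedgeNorm
  fun_prop

theorem invR_of_mean_velocities {p a b : ℝ} (ha : 0 < a) (hb : 0 < b)
    {x y z v w m : EuclideanSpace ℝ (Fin n)} (hv : a • v = y - x) (hw : b • w = z - y)
    (hm : (a + b) • m = z - x) :
    invR p 2 x y z = arcDensity p (a, b) * ((‖v‖ ^ p * ‖w‖ ^ p * ‖m‖ ^ p)⁻¹ *
      (‖v‖ ^ 2 * ‖w - v‖ ^ 2 - (inner ℝ v (w - v) : ℝ) ^ 2)) := by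
  have hab := add_pos ha hb
  have hzx : z - x = (a + b) • v + b • (w - v) := by
    rw [add_smul, smul_sub, hv, hw]
    abel
  have harea : wedgeNorm (y - x) (z - x) ^ 2 =
      a ^ 2 * b ^ 2 * (‖v‖ ^ 2 * ‖w - v‖ ^ 2 - (inner ℝ v (w - v) : ℝ) ^ 2) := by
    rw [hzx, ← hv, wedgeNorm_smul_smul_add_smul_sq]
  have hnorm : (‖y - z‖ * ‖y - x‖ * ‖z - x‖) ^ p =
      b ^ p * ‖w‖ ^ p * (a ^ p * ‖v‖ ^ p) * ((a + b) ^ p * ‖m‖ ^ p) := by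
    rw [norm_sub_rev y z, ← hv, ← hw, ← hm, norm_smul_of_nonneg ha.le, norm_smul_of_nonneg hb.le,
      norm_smul_of_nonneg hab.le, Real.mul_rpow (by positivity) (by positivity),
      Real.mul_rpow (by positivity) (by positivity), Real.mul_rpow hb.le (norm_nonneg w),
      Real.mul_rpow ha.le (norm_nonneg v), Real.mul_rpow hab.le (norm_nonneg m)]
  simp only [invR, arcDensity]
  rw [Real.rpow_ofNat, harea, hnorm, Real.rpow_sub ha, Real.rpow_sub hb, Real.rpow_neg hab.le,
    Real.rpow_ofNat, Real.rpow_ofNat]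
  simp only [div_eq_mul_inv, mul_inv]
  ring

end Curvature

section EnergyDensity

/-- Truncation to the interval `[-2/3, 2/3]`, which contains all the arc lengths occurring in
`arcPairs`. -/
def clip (x : ℝ) : ℝ := max (-(2 / 3)) (min x (2 / 3))

theorem continuous_clip : Continuous clip := by
  unfold clip
  fun_prop

theorem abs_clip_le (x : ℝ) : |clip x| ≤ 2 / 3 :=
  abs_le.2 ⟨le_max_left _ _, max_le (by norm_num) (min_le_right _ _)⟩

theorem clip_of_abs_le {x : ℝ} (hx : |x| ≤ 2 / 3) : clip x = x := by
  rw [clip, min_eq_left (abs_le.1 hx).2, max_eq_right (abs_le.1 hx).1]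

/-- The initial points and increments of the six segments over which the velocity is averaged in the
energy density. The first three segments are single points. Clipping keeps the increments bounded
away from `1` even for the `(u, a, b)` which do not stand for a configuration. -/
def sampleNode (i : Fin 6) (z : ℝ × ℝ × ℝ) : ℝ × ℝ :=
  ![(z.1 - z.2.1, 0), (z.1, 0), (z.1 + z.2.2, 0), (z.1, clip (-z.2.1)), (z.1, clip z.2.2),
    (z.1 - z.2.1, clip (z.2.1 + z.2.2))] i

theorem continuous_sampleNode (i : Fin 6) : Continuous (sampleNode i) := by
  have hclip := continuous_clip
  unfold sampleNode
  fin_cases i <;> simp only [Fin.reduceFinMk, Matrix.cons_val, Fin.zero_eta, Fin.mk_one,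
    Fin.isValue] <;> fun_prop

theorem abs_sampleNode_snd_le (i : Fin 6) (z : ℝ × ℝ × ℝ) : |(sampleNode i z).2| ≤ 2 / 3 := by
  have hzero : |(0 : ℝ)| ≤ 2 / 3 := by norm_num
  fin_cases i
  exacts [hzero, hzero, hzero, abs_clip_le _, abs_clip_le _, abs_clip_le _]

/-- The exponents of the squared norms of the mean velocities in the energy density. -/
def sampleExponent (p : ℝ) (i : Fin 6) : ℝ := ![1 / 2, 1 / 2, 1 / 2, -p / 2, -p / 2, -p / 2] i

section

variable {V : Type*} [NormedAddCommGroup V] [NormedSpace ℝ V]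

/-- The `i`-th mean of the velocity `f` entering the energy density. -/
def sample (i : Fin 6) (f : ℝ → V) (z : ℝ × ℝ × ℝ) : V :=
  segmentMean f (sampleNode i z).1 (sampleNode i z).2

theorem continuous_sample (i : Fin 6) {f : ℝ → V} (hf : Continuous f) : Continuous (sample i f) :=
  (continuous_segmentMean hf).comp (continuous_sampleNode i)

theorem segmentMean_zero [CompleteSpace V] (f : ℝ → V) (u : ℝ) : segmentMean f u 0 = f u := by
  simp [segmentMean]

theorem sample_three_of_mem_arcPairs (f : ℝ → V) (u : ℝ) {a b : ℝ} (h : (a, b) ∈ arcPairs) :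
    sample 3 f (u, a, b) = segmentMean f u (-a) := by
  obtain ⟨ha, hb, hab, -⟩ := h
  have hclip : clip (-a) = -a := clip_of_abs_le (abs_le.2 ⟨by linarith, by linarith⟩)
  simp [sample, sampleNode, hclip]

end

theorem norm_sq_rpow_half {V : Type*} [SeminormedAddGroup V] (v : V) (q : ℝ) :
    (‖v‖ ^ 2) ^ (q / 2) = ‖v‖ ^ q := by
  rw [← Real.rpow_natCast, ← Real.rpow_mul (norm_nonneg v), Nat.cast_ofNat,
    mul_div_cancel₀ _ two_ne_zero]

theorem prod_norm_sq_sample_rpow {V : Type*} [NormedAddCommGroup V] [NormedSpace ℝ V]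
    [CompleteSpace V] (p : ℝ) (f : ℝ → V) (u : ℝ) {a b : ℝ} (h : (a, b) ∈ arcPairs) :
    ∏ i, (‖sample i f (u, a, b)‖ ^ 2) ^ sampleExponent p i =
      ‖f (u - a)‖ * ‖f u‖ * ‖f (u + b)‖ * (‖segmentMean f u (-a)‖ ^ p * ‖segmentMean f u b‖ ^ p *
        ‖segmentMean f (u - a) (a + b)‖ ^ p)⁻¹ := by
  obtain ⟨ha, hb, hab, hab'⟩ := id h
  have hclip : clip b = b := clip_of_abs_le (abs_le.2 ⟨by linarith, by linarith⟩)
  have hclip' : clip (a + b) = a + b := clip_of_abs_le (abs_le.2 ⟨by linarith, by linarith⟩)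
  rw [Fin.prod_univ_six, sample_three_of_mem_arcPairs f u h]
  simp only [sample, sampleNode, sampleExponent, Matrix.cons_val, norm_sq_rpow_half, Real.rpow_one,
    segmentMean_zero, hclip, hclip', Real.rpow_neg (norm_nonneg _), mul_inv]
  ring

variable {n : ℕ}

/-- The density of the Menger energy with respect to `configMeasure p`, as a function of the
velocity: the product of the powers of the norms of its means times the squared area spanned by the
mean over one arc and the difference of the means over the two arcs. -/
def energyDensity (p : ℝ) (f : ℝ → EuclideanSpace ℝ (Fin n)) (z : ℝ × ℝ × ℝ) : ℝ :=
  (∏ i, (‖sample i f z‖ ^ 2) ^ sampleExponent p i) * (‖sample 3 f z‖ ^ 2 * ‖meanDiff f z‖ ^ 2 -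
    (inner ℝ (sample 3 f z) (meanDiff f z) : ℝ) ^ 2)

theorem measurable_energyDensity (p : ℝ) {f : ℝ → EuclideanSpace ℝ (Fin n)} (hf : Continuous f) :
    Measurable (energyDensity p f) := by
  have hsample : ∀ i, Measurable (sample i f) := fun i => (continuous_sample i hf).measurable
  have hsample₃ := hsample 3
  have hdiff := (continuous_meanDiff hf).measurable
  refine Measurable.mul (Finset.measurable_fun_prod _ fun i _ => ?_) (by fun_prop)
  exact ((hsample i).norm.pow_const 2).pow_const _

variable {γ γ' : ℝ → EuclideanSpace ℝ (Fin n)} (hγ' : Continuous γ')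
  (hderiv : ∀ u, HasDerivAt γ (γ' u) u)
include hγ' hderiv

theorem norm_mul_invR_eq_arcDensity_mul_energyDensity (p u : ℝ) {a b : ℝ}
    (h : (a, b) ∈ arcPairs) :
    ‖γ' (u - a)‖ * ‖γ' u‖ * ‖γ' (u + b)‖ * invR p 2 (γ (u - a)) (γ u) (γ (u + b)) =
      arcDensity p (a, b) * energyDensity p γ' (u, a, b) := by
  have hleft : a • segmentMean γ' u (-a) = γ u - γ (u - a) := by
    rw [← neg_neg (a • _), ← neg_smul, smul_segmentMean_deriv hγ' hderiv, neg_sub,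
      ← sub_eq_add_neg]
  have hright := smul_segmentMean_deriv hγ' hderiv u b
  have hlong : (a + b) • segmentMean γ' (u - a) (a + b) = γ (u + b) - γ (u - a) := by
    rw [smul_segmentMean_deriv hγ' hderiv, ← add_assoc, sub_add_cancel]
  rw [invR_of_mean_velocities h.1 h.2.1 hleft hright hlong, energyDensity,
    prod_norm_sq_sample_rpow p γ' u h, sample_three_of_mem_arcPairs γ' u h, meanDiff]
  ring

theorem menger_eq_lintegral_energyDensity (p : ℝ) (hper : Function.Periodic γ 1)
    (hper' : Function.Periodic γ' 1) :
    menger p 2 γ γ' = 6 * ∫⁻ z, ENNReal.ofReal (energyDensity p γ' z) ∂configMeasure p := by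
  have hγ : Measurable γ :=
    (continuous_iff_continuousAt.2 fun u => (hderiv u).continuousAt).measurable
  have hvel := hγ'.measurable
  have hdens : Measurable fun z => ENNReal.ofReal (energyDensity p γ' z) :=
    (measurable_energyDensity p hγ').ennreal_ofReal
  rw [menger, lintegral_triple_eq_lintegral_arcPairs (F := fun u v w =>
    ENNReal.ofReal (‖γ' u‖ * ‖γ' v‖ * ‖γ' w‖ * invR p 2 (γ u) (γ v) (γ w)))]
  · congr 1
    rw [lintegral_configMeasure p hdens, lintegral_arcMeasure p]
    · refine setLIntegral_congr_fun measurableSet_arcPairs fun y hy => ?_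
      have hd : 0 ≤ arcDensity p y := by
        have := hy.1.le
        have := hy.2.1.le
        unfold arcDensity
        positivity
      rw [configIntegral, ← lintegral_const_mul' _ _ ENNReal.ofReal_ne_top]
      refine lintegral_congr fun u => ?_
      rw [← ENNReal.ofReal_mul hd, norm_mul_invR_eq_arcDensity_mul_energyDensity hγ' hderiv p u hy]
    · exact (hdens.comp (f := fun q : (ℝ × ℝ) × ℝ => (q.2, q.1))
        (by fun_prop)).lintegral_prod_right'
  · exact (Measurable.mul (by fun_prop) (measurable_invR p 2 (hγ.comp measurable_fst)
      (hγ.comp measurable_snd.fst) (hγ.comp measurable_snd.snd))).ennreal_ofReal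
  · intro u v w
    rw [invR_swap, mul_right_comm ‖γ' u‖]
  · intro u v w
    rw [invR_cyclic, mul_comm _ ‖γ' u‖, mul_assoc ‖γ' u‖]
  · intro u v w
    rw [hper u, hper' u]

end EnergyDensity

/-! ### Operators on bounded continuous and square integrable functions -/

section MulLp

variable {α : Type*} [TopologicalSpace α] [SecondCountableTopology α] [MeasurableSpace α]
  [BorelSpace α] {E F G : Type*} [NormedAddCommGroup E] [NormedSpace ℝ E]
  [NormedAddCommGroup F] [NormedSpace ℝ F] [NormedAddCommGroup G] [NormedSpace ℝ G]

/-- Bounded continuous functions as essentially bounded functions, for an arbitrary measure. -/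
def bcfToLinf (μ : Measure α) : (α →ᵇ E) →L[ℝ] Lp E ∞ μ :=
  LinearMap.mkContinuous
    { toFun := fun f => (f.memLp_top (μ := μ)).toLp f
      map_add' := fun _ _ => rfl
      map_smul' := fun _ _ => rfl } 1 fun f => by
    rw [one_mul]
    change ‖(f.memLp_top (μ := μ)).toLp f‖ ≤ ‖f‖
    rw [Lp.norm_toLp, eLpNorm_exponent_top]
    refine ENNReal.toReal_le_of_le_ofReal (norm_nonneg _) ?_
    exact eLpNormEssSup_le_of_ae_bound (ae_of_all _ f.norm_coe_le_norm)

/-- The pointwise product, with respect to the bilinear map `B`, of a bounded continuous with a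
square integrable function. -/
def mulLpCLM (B : E →L[ℝ] F →L[ℝ] G) (μ : Measure α) : (α →ᵇ E) →L[ℝ] Lp F 2 μ →L[ℝ] Lp G 2 μ :=
  (B.holderL μ ∞ 2 2).comp (bcfToLinf μ)

theorem coeFn_mulLpCLM (B : E →L[ℝ] F →L[ℝ] G) (μ : Measure α) (f : α →ᵇ E) (g : Lp F 2 μ) :
    mulLpCLM B μ f g =ᵐ[μ] fun x => B (f x) (g x) := by
  have hcoe : bcfToLinf μ f =ᵐ[μ] f := MemLp.coeFn_toLp (f.memLp_top (μ := μ))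
  filter_upwards [B.coeFn_holder (r := 2) (bcfToLinf μ f) g, hcoe] with x hx hfx
  rw [← hfx]
  exact hx

end MulLp

section NormBounds

variable {α E : Type*} [MeasurableSpace α] {μ : Measure α} [NormedAddCommGroup E]

theorem norm_toLp_le_of_norm_le {q : ℝ≥0∞} {f : α → E} (hf : MemLp f q μ) {g : α → ℝ}
    (hfg : ∀ z, ‖f z‖ ≤ g z) {C : ℝ} (hC : 0 ≤ C) (hg : eLpNorm g q μ ≤ ENNReal.ofReal C) :
    ‖hf.toLp f‖ ≤ C := by
  rw [Lp.norm_toLp]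
  exact ENNReal.toReal_le_of_le_ofReal hC ((eLpNorm_mono_real hfg).trans hg)

theorem eLpNorm_two_le_of_lintegral_sq_le {g : α → ℝ} (hg : ∀ z, 0 ≤ g z) {C : ℝ} (hC : 0 ≤ C)
    (h : ∫⁻ z, ENNReal.ofReal (g z ^ 2) ∂μ ≤ ENNReal.ofReal (C ^ 2)) :
    eLpNorm g 2 μ ≤ ENNReal.ofReal C := by
  have hsq : eLpNorm g 2 μ ^ (2 : ℝ) = ∫⁻ z, ENNReal.ofReal (g z ^ 2) ∂μ := by
    refine (eLpNorm_nnreal_pow_eq_lintegral (p := 2) two_ne_zero).trans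
      (lintegral_congr fun z => ?_)
    rw [Real.enorm_eq_ofReal (hg z), ENNReal.ofReal_pow (hg z)]
    exact ENNReal.rpow_natCast _ 2
  rw [← ENNReal.rpow_le_rpow_iff (zero_lt_two (α := ℝ)), hsq, ENNReal.ofReal_rpow_of_nonneg hC
    zero_le_two, Real.rpow_two]
  exact h

end NormBounds

section InnerBCF

variable {α : Type*} [TopologicalSpace α] {V : Type*} [NormedAddCommGroup V]
  [InnerProductSpace ℝ V]

theorem norm_inner_apply_le (f g : α →ᵇ V) (z : α) : ‖(inner ℝ (f z) (g z) : ℝ)‖ ≤ ‖f‖ * ‖g‖ :=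
  (norm_inner_le_norm _ _).trans (mul_le_mul (f.norm_coe_le_norm z)
    (g.norm_coe_le_norm z) (norm_nonneg _) (norm_nonneg _))

/-- The pointwise inner product of bounded continuous functions. -/
def innerBCF : (α →ᵇ V) →L[ℝ] (α →ᵇ V) →L[ℝ] (α →ᵇ ℝ) :=
  LinearMap.mkContinuous₂
    (LinearMap.mk₂ ℝ (fun f g : α →ᵇ V => BoundedContinuousFunction.ofNormedAddCommGroup
      (fun z => (inner ℝ (f z) (g z) : ℝ)) (f.continuous.inner g.continuous) (‖f‖ * ‖g‖)
        (norm_inner_apply_le f g))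
      (fun _ _ _ => by ext z; simp [inner_add_left])
      (fun _ _ _ => by ext z; simp [inner_smul_left])
      (fun _ _ _ => by ext z; simp [inner_add_right])
      (fun _ _ _ => by ext z; simp [inner_smul_right])) 1
    (fun f g => by
      rw [one_mul]
      exact BoundedContinuousFunction.norm_ofNormedAddCommGroup_le _ (by positivity)
        (norm_inner_apply_le f g))

theorem innerBCF_apply (f g : α →ᵇ V) (z : α) : innerBCF f g z = (inner ℝ (f z) (g z) : ℝ) := rfl

theorem innerBCF_comm (f g : α →ᵇ V) : innerBCF f g = innerBCF g f := by
  ext z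
  simp only [innerBCF_apply, real_inner_comm]

theorem meanOsc_innerBCF_le (f g : ℝ →ᵇ V) (u v : ℝ) :
    meanOsc (innerBCF f g) u v ≤ ‖f‖ * meanOsc g u v + ‖g‖ * meanOsc f u v := by
  unfold meanOsc
  rw [← intervalIntegral.integral_const_mul, ← intervalIntegral.integral_const_mul,
    ← intervalIntegral.integral_add (Continuous.intervalIntegrable (by fun_prop) _ _)
      (Continuous.intervalIntegrable (by fun_prop) _ _)]
  refine intervalIntegral.integral_mono_on zero_le_one
    (Continuous.intervalIntegrable (by fun_prop) _ _)
    (Continuous.intervalIntegrable (by fun_prop) _ _) fun t _ => ?_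
  have hsplit : innerBCF f g (u + t * v) - innerBCF f g u =
      (inner ℝ (f (u + t * v)) (g (u + t * v) - g u) : ℝ) +
        (inner ℝ (f (u + t * v) - f u) (g u) : ℝ) := by
    simp only [innerBCF_apply, inner_sub_left, inner_sub_right]
    ring
  rw [hsplit]
  refine (norm_add_le _ _).trans (add_le_add ?_ ?_)
  · exact (norm_inner_le_norm _ _).trans
      (mul_le_mul_of_nonneg_right (f.norm_coe_le_norm _) (norm_nonneg _))
  · rw [mul_comm ‖g‖]
    exact (norm_inner_le_norm _ _).trans
      (mul_le_mul_of_nonneg_left (g.norm_coe_le_norm _) (norm_nonneg _))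

end InnerBCF

section SegmentMeans

variable {V : Type*} [NormedAddCommGroup V]

/-- The sum of the mean oscillations of `f` to the right and to the left of a point. -/
def oscSum (f : ℝ → V) (z : ℝ × ℝ × ℝ) : ℝ := meanOsc f z.1 z.2.2 + meanOsc f z.1 (-z.2.1)

theorem continuous_oscSum {f : ℝ → V} (hf : Continuous f) : Continuous (oscSum f) := by
  have hosc := continuous_meanOsc hf
  exact (hosc.comp (continuous_fst.prodMk continuous_snd.snd)).add
    (hosc.comp (continuous_fst.prodMk continuous_snd.fst.neg))

variable [NormedSpace ℝ V]

theorem norm_segmentMean_le (f : ℝ →ᵇ V) (u v : ℝ) : ‖segmentMean f u v‖ ≤ ‖f‖ := by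
  have hle := intervalIntegral.norm_integral_le_of_norm_le_const (a := (0 : ℝ)) (b := 1) (C := ‖f‖)
    (f := fun t => f (u + t * v)) fun t _ => f.norm_coe_le_norm _
  simpa only [segmentMean, sub_zero, abs_one, mul_one] using hle

theorem segmentMean_add {f g : ℝ → V} (hf : Continuous f) (hg : Continuous g) (u v : ℝ) :
    segmentMean (f + g) u v = segmentMean f u v + segmentMean g u v :=
  intervalIntegral.integral_add (Continuous.intervalIntegrable (by fun_prop) _ _)
    (Continuous.intervalIntegrable (by fun_prop) _ _)

theorem segmentMean_smul (c : ℝ) (f : ℝ → V) (u v : ℝ) :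
    segmentMean (c • f) u v = c • segmentMean f u v :=
  intervalIntegral.integral_smul _ _

theorem meanDiff_add {f g : ℝ → V} (hf : Continuous f) (hg : Continuous g) :
    meanDiff (f + g) = meanDiff f + meanDiff g := by
  funext z
  simp only [meanDiff, segmentMean_add hf hg, Pi.add_apply]
  abel

theorem meanDiff_smul (c : ℝ) (f : ℝ → V) : meanDiff (c • f) = c • meanDiff f := by
  funext z
  simp only [meanDiff, segmentMean_smul, smul_sub, Pi.smul_apply]

/-- The `i`-th mean of the velocity entering the energy density, as a bounded operator. -/
def sampleCLM (i : Fin 6) : (ℝ →ᵇ V) →L[ℝ] ((ℝ × ℝ × ℝ) →ᵇ V) :=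
  LinearMap.mkContinuous
    { toFun := fun f => BoundedContinuousFunction.ofNormedAddCommGroup (sample i f)
        (continuous_sample i f.continuous) ‖f‖ fun _ => norm_segmentMean_le f _ _
      map_add' := fun f g => by ext z; exact segmentMean_add f.continuous g.continuous _ _
      map_smul' := fun c f => by ext z; exact segmentMean_smul c f _ _ } 1 fun f => by
    rw [one_mul]
    exact BoundedContinuousFunction.norm_ofNormedAddCommGroup_le _ (norm_nonneg _)
      fun _ => norm_segmentMean_le f _ _

theorem sampleCLM_apply (i : Fin 6) (f : ℝ →ᵇ V) (z : ℝ × ℝ × ℝ) :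
    sampleCLM i f z = sample i f z := rfl

end SegmentMeans

theorem oscSum_innerBCF_le {V : Type*} [NormedAddCommGroup V] [InnerProductSpace ℝ V]
    (f g : ℝ →ᵇ V) (z : ℝ × ℝ × ℝ) :
    oscSum (innerBCF f g) z ≤ ‖f‖ * oscSum g z + ‖g‖ * oscSum f z := by
  have hright := meanOsc_innerBCF_le f g z.1 z.2.2
  have hleft := meanOsc_innerBCF_le f g z.1 (-z.2.1)
  unfold oscSum
  linarith

section SobolevMeanDiff

variable {p : ℝ} (hp : p < 8 / 3) (hs : 3 / 2 < 3 * p / 2 - 2) {V : Type*} [NormedAddCommGroup V]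
  [InnerProductSpace ℝ V] [CompleteSpace V]
include hp

theorem eLpNorm_oscSum_le (a : HartleyCoeff V) :
    eLpNorm (oscSum (sobolevVelocity hs a)) 2 (configMeasure p) ≤
      ENNReal.ofReal (2 * √(oscConst p) * ‖a‖) := by
  have hC : oscConst p * ‖a‖ ^ 2 = (√(oscConst p) * ‖a‖) ^ 2 := by
    rw [mul_pow, Real.sq_sqrt (oscConst_nonneg (by linarith) hp)]
  have hright := lintegral_meanOsc_right_sq_le hp hs a
  have hleft := lintegral_meanOsc_left_sq_le hp hs a
  rw [hC] at hright hleft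
  have hosc := continuous_meanOsc (sobolevVelocity hs a).continuous
  refine (eLpNorm_add_le
    (f := fun z : ℝ × ℝ × ℝ => meanOsc (sobolevVelocity hs a) z.1 z.2.2)
    (g := fun z : ℝ × ℝ × ℝ => meanOsc (sobolevVelocity hs a) z.1 (-z.2.1))
    (hosc.comp (continuous_fst.prodMk continuous_snd.snd)).aestronglyMeasurable
    (hosc.comp (continuous_fst.prodMk continuous_snd.fst.neg)).aestronglyMeasurable
    one_le_two).trans ?_
  rw [mul_assoc, two_mul, ENNReal.ofReal_add (by positivity) (by positivity)]
  exact add_le_add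
    (eLpNorm_two_le_of_lintegral_sq_le (fun _ => meanOsc_nonneg _ _ _) (by positivity) hright)
    (eLpNorm_two_le_of_lintegral_sq_le (fun _ => meanOsc_nonneg _ _ _) (by positivity) hleft)

theorem memLp_oscSum (a : HartleyCoeff V) :
    MemLp (oscSum (sobolevVelocity hs a)) 2 (configMeasure p) :=
  ⟨(continuous_oscSum (sobolevVelocity hs a).continuous).aestronglyMeasurable,
    (eLpNorm_oscSum_le hp hs a).trans_lt ENNReal.ofReal_lt_top⟩

theorem memLp_meanDiff_sobolevVelocity (a : HartleyCoeff V) :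
    MemLp (meanDiff (sobolevVelocity hs a)) 2 (configMeasure p) :=
  (memLp_oscSum hp hs a).mono'
    (continuous_meanDiff (sobolevVelocity hs a).continuous).aestronglyMeasurable
    (ae_of_all _ (norm_meanDiff_le (sobolevVelocity hs a).continuous))

/-- The difference of mean velocities as a bounded operator into `L²`. -/
def meanDiffCLM : HartleyCoeff V →L[ℝ] Lp V 2 (configMeasure p) :=
  LinearMap.mkContinuous
    { toFun := fun a => (memLp_meanDiff_sobolevVelocity hp hs a).toLp
      map_add' := fun a b => by
        rw [← MemLp.toLp_add]
        refine MemLp.toLp_congr _ _ (EventuallyEq.of_eq ?_)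
        rw [map_add]
        exact meanDiff_add (sobolevVelocity hs a).continuous (sobolevVelocity hs b).continuous
      map_smul' := fun c a => by
        rw [RingHom.id_apply, ← MemLp.toLp_const_smul]
        refine MemLp.toLp_congr _ _ (EventuallyEq.of_eq ?_)
        rw [map_smul]
        exact meanDiff_smul c _ }
    (2 * √(oscConst p)) fun a => norm_toLp_le_of_norm_le
      (memLp_meanDiff_sobolevVelocity hp hs a) (norm_meanDiff_le (sobolevVelocity hs a).continuous)
      (by positivity) (eLpNorm_oscSum_le hp hs a)

theorem coeFn_meanDiffCLM (a : HartleyCoeff V) :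
    meanDiffCLM hp hs a =ᵐ[configMeasure p] meanDiff (sobolevVelocity hs a) :=
  MemLp.coeFn_toLp (memLp_meanDiff_sobolevVelocity hp hs a)

omit hp in
theorem norm_meanDiff_innerBCF_le (a b : HartleyCoeff V) (z : ℝ × ℝ × ℝ) :
    ‖meanDiff (innerBCF (sobolevVelocity hs a) (sobolevVelocity hs b)) z‖ ≤
      ‖sobolevVelocity hs a‖ * oscSum (sobolevVelocity hs b) z +
        ‖sobolevVelocity hs b‖ * oscSum (sobolevVelocity hs a) z :=
  (norm_meanDiff_le (innerBCF _ _).continuous z).trans (oscSum_innerBCF_le _ _ z)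

theorem memLp_meanDiff_innerBCF (a b : HartleyCoeff V) :
    MemLp (meanDiff (innerBCF (sobolevVelocity hs a) (sobolevVelocity hs b))) 2
      (configMeasure p) :=
  (((memLp_oscSum hp hs b).const_mul _).add ((memLp_oscSum hp hs a).const_mul _)).mono'
    (continuous_meanDiff (innerBCF _ _).continuous).aestronglyMeasurable
    (ae_of_all _ (norm_meanDiff_innerBCF_le hs a b))

theorem eLpNorm_norm_smul_oscSum_le (a b : HartleyCoeff V) :
    eLpNorm (‖sobolevVelocity hs a‖ • oscSum (sobolevVelocity hs b)) 2 (configMeasure p) ≤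
      ENNReal.ofReal (2 * √(oscConst p) * ‖sobolevVelocity (V := V) hs‖ * ‖a‖ * ‖b‖) := by
  rw [eLpNorm_const_smul, Real.enorm_eq_ofReal (norm_nonneg _)]
  refine (mul_le_mul_right (eLpNorm_oscSum_le hp hs b) _).trans ?_
  rw [← ENNReal.ofReal_mul (norm_nonneg _)]
  refine ENNReal.ofReal_le_ofReal ?_
  calc ‖sobolevVelocity hs a‖ * (2 * √(oscConst p) * ‖b‖)
      ≤ ‖sobolevVelocity (V := V) hs‖ * ‖a‖ * (2 * √(oscConst p) * ‖b‖) :=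
        mul_le_mul_of_nonneg_right ((sobolevVelocity hs).le_opNorm a) (by positivity)
    _ = 2 * √(oscConst p) * ‖sobolevVelocity (V := V) hs‖ * ‖a‖ * ‖b‖ := by ring

theorem norm_toLp_meanDiff_innerBCF_le (a b : HartleyCoeff V) :
    ‖(memLp_meanDiff_innerBCF hp hs a b).toLp‖ ≤
      4 * √(oscConst p) * ‖sobolevVelocity (V := V) hs‖ * ‖a‖ * ‖b‖ := by
  refine norm_toLp_le_of_norm_le _ (norm_meanDiff_innerBCF_le hs a b) (by positivity) ?_
  have hmeas : ∀ c d : HartleyCoeff V, AEStronglyMeasurable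
      (‖sobolevVelocity hs c‖ • oscSum (sobolevVelocity hs d)) (configMeasure p) := fun c d =>
    ((continuous_oscSum (sobolevVelocity hs d).continuous).const_smul _).aestronglyMeasurable
  refine (eLpNorm_add_le (hmeas a b) (hmeas b a) one_le_two).trans ((add_le_add
    (eLpNorm_norm_smul_oscSum_le hp hs a b) (eLpNorm_norm_smul_oscSum_le hp hs b a)).trans_eq ?_)
  rw [← ENNReal.ofReal_add (by positivity) (by positivity)]
  ring_nf

/-- The difference of the means of the inner product of two velocities, as a bounded bilinear
map into `L²`. -/
def gramCLM : HartleyCoeff V →L[ℝ] HartleyCoeff V →L[ℝ] Lp ℝ 2 (configMeasure p) :=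
  LinearMap.mkContinuous₂
    (LinearMap.mk₂ ℝ (fun a b => (memLp_meanDiff_innerBCF hp hs a b).toLp)
      (fun a b c => by
        rw [← MemLp.toLp_add]
        refine MemLp.toLp_congr _ _ (EventuallyEq.of_eq ?_)
        rw [map_add, map_add]
        exact meanDiff_add (innerBCF _ _).continuous (innerBCF _ _).continuous)
      (fun r a b => by
        rw [← MemLp.toLp_const_smul]
        refine MemLp.toLp_congr _ _ (EventuallyEq.of_eq ?_)
        rw [map_smul, map_smul]
        exact meanDiff_smul r _)
      (fun a b c => by
        rw [← MemLp.toLp_add]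
        refine MemLp.toLp_congr _ _ (EventuallyEq.of_eq ?_)
        rw [map_add, map_add]
        exact meanDiff_add (innerBCF _ _).continuous (innerBCF _ _).continuous)
      (fun r a b => by
        rw [← MemLp.toLp_const_smul]
        refine MemLp.toLp_congr _ _ (EventuallyEq.of_eq ?_)
        rw [map_smul, map_smul]
        exact meanDiff_smul r _))
    (4 * √(oscConst p) * ‖sobolevVelocity (V := V) hs‖) (norm_toLp_meanDiff_innerBCF_le hp hs)

theorem coeFn_gramCLM (a b : HartleyCoeff V) : gramCLM hp hs a b =ᵐ[configMeasure p]
    meanDiff (innerBCF (sobolevVelocity hs a) (sobolevVelocity hs b)) :=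
  MemLp.coeFn_toLp (memLp_meanDiff_innerBCF hp hs a b)

theorem gramCLM_comm (a b : HartleyCoeff V) : gramCLM hp hs a b = gramCLM hp hs b a := by
  refine Lp.ext ?_
  filter_upwards [coeFn_gramCLM hp hs a b, coeFn_gramCLM hp hs b a] with z hab hba
  rw [hab, hba, innerBCF_comm]

end SobolevMeanDiff

/-! ### The energy as a smooth functional -/

section Chords

theorem periodic_segmentMean {V : Type*} [NormedAddCommGroup V] [NormedSpace ℝ V] {f : ℝ → V}
    (hf : Function.Periodic f 1) (v : ℝ) : Function.Periodic (fun u => segmentMean f u v) 1 := by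
  intro u
  simp only [segmentMean, add_right_comm u 1, hf _]

variable {n : ℕ} {γ γ' : ℝ → EuclideanSpace ℝ (Fin n)} (hγ' : Continuous γ')
  (hderiv : ∀ u, HasDerivAt γ (γ' u) u) (hinj : InjCircle γ) (hne : ∀ u, γ' u ≠ 0)
include hγ' hderiv hinj hne

theorem segmentMean_ne_zero_of_injCircle (u : ℝ) {v : ℝ} (hv : |v| < 1) :
    segmentMean γ' u v ≠ 0 := by
  intro hzero
  rcases eq_or_ne v 0 with rfl | hv0
  · exact hne u ((segmentMean_zero γ' u).symm.trans hzero)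
  · have hchord := smul_segmentMean_deriv hγ' hderiv u v
    rw [hzero, smul_zero, eq_comm, sub_eq_zero] at hchord
    obtain ⟨k, hk⟩ := hinj u (u + v) hchord.symm
    rw [add_right_inj] at hk
    subst hk
    have hk : |k| < 1 := by exact_mod_cast hv
    exact hv0 (by rw [Int.abs_lt_one_iff.mp hk, Int.cast_zero])

theorem exists_pos_le_norm_segmentMean (hper : Function.Periodic γ' 1) {r : ℝ} (hr : r < 1) :
    ∃ c > 0, ∀ u v : ℝ, |v| ≤ r → c ≤ ‖segmentMean γ' u v‖ := by
  obtain ⟨c, hc, hmin⟩ := (isCompact_Icc.prod isCompact_Icc :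
      IsCompact (Icc (0 : ℝ) 1 ×ˢ Icc (-r) r)).exists_forall_le'
    (continuous_segmentMean hγ').norm.continuousOn (a := 0) fun w hw => norm_pos_iff.mpr
      (segmentMean_ne_zero_of_injCircle hγ' hderiv hinj hne w.1 ((abs_le.mpr hw.2).trans_lt hr))
  refine ⟨c, hc, fun u v hv => ?_⟩
  obtain ⟨w, hw, hu⟩ := (periodic_segmentMean hper v).exists_mem_Ico₀ one_pos u
  rw [hu]
  exact hmin (w, v) ⟨Ico_subset_Icc_self hw, abs_le.mp hv⟩

end Chords

theorem contDiffAt_clm_apply₂ {E F G Z : Type*} [NormedAddCommGroup E] [NormedSpace ℝ E]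
    [NormedAddCommGroup F] [NormedSpace ℝ F] [NormedAddCommGroup G] [NormedSpace ℝ G]
    [NormedAddCommGroup Z] [NormedSpace ℝ Z] (B : E →L[ℝ] F →L[ℝ] G) {m : WithTop ℕ∞} {f : Z → E}
    {g : Z → F} {z : Z} (hf : ContDiffAt ℝ m f z) (hg : ContDiffAt ℝ m g z) :
    ContDiffAt ℝ m (fun z => B (f z) (g z)) z :=
  (hf.continuousLinearMap_comp B).clm_apply hg

section SampleFactor

variable {V : Type*} [NormedAddCommGroup V] [InnerProductSpace ℝ V]

theorem contDiff_innerBCF_self {α Y : Type*} [TopologicalSpace α] [NormedAddCommGroup Y]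
    [NormedSpace ℝ Y] {r : WithTop ℕ∞} (S : Y →L[ℝ] (α →ᵇ V)) :
    ContDiff ℝ r fun y => innerBCF (S y) (S y) :=
  (innerBCF.comp S).contDiff.clm_apply S.contDiff

theorem contDiff_innerBCF_sampleCLM (i : Fin 6) :
    ContDiff ℝ (⊤ : ℕ∞) fun y : ℝ →ᵇ V => innerBCF (sampleCLM i y) (sampleCLM i y) :=
  contDiff_innerBCF_self (Y := ℝ →ᵇ V) (sampleCLM i)

theorem innerBCF_sampleCLM_self_apply (i : Fin 6) (y : ℝ →ᵇ V) (z : ℝ × ℝ × ℝ) :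
    innerBCF (sampleCLM i y) (sampleCLM i y) z = ‖sample i y z‖ ^ 2 := by
  rw [innerBCF_apply, real_inner_self_eq_norm_sq, sampleCLM_apply]

theorem exists_contDiffAt_prod_sample_rpow (p : ℝ) (y₀ : ℝ →ᵇ V) {c : ℝ} (hc : 0 < c)
    (hy₀ : ∀ i z, c ≤ ‖sample i y₀ z‖) :
    ∃ m : (ℝ →ᵇ V) → ((ℝ × ℝ × ℝ) →ᵇ ℝ), ContDiffAt ℝ (⊤ : ℕ∞) m y₀ ∧
      ∀ᶠ y in 𝓝 y₀, ∀ z, m y z = ∏ i, (‖sample i y z‖ ^ 2) ^ sampleExponent p i := by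
  have hpow := fun i => exists_contDiffAt_rpow (innerBCF (sampleCLM i y₀) (sampleCLM i y₀))
    (pow_pos hc 2) (fun z => by
      rw [innerBCF_sampleCLM_self_apply]
      exact pow_le_pow_left₀ hc.le (hy₀ i z) 2) (sampleExponent p i)
  choose ρ hρ hρpow using hpow
  refine ⟨fun y => ∏ i, ρ i (innerBCF (sampleCLM i y) (sampleCLM i y)), contDiffAt_prod fun i _ =>
    ContDiffAt.comp (g := ρ i) y₀ (hρ i) (contDiff_innerBCF_sampleCLM i).contDiffAt, ?_⟩
  have hev : ∀ᶠ y in 𝓝 y₀, ∀ i z, ρ i (innerBCF (sampleCLM i y) (sampleCLM i y)) z =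
      innerBCF (sampleCLM i y) (sampleCLM i y) z ^ sampleExponent p i :=
    eventually_all.mpr fun i =>
      (contDiff_innerBCF_sampleCLM i).continuous.continuousAt.eventually (hρpow i)
  filter_upwards [hev] with y hy z
  simp only [Fin.prod_univ_six, BoundedContinuousFunction.coe_mul, Pi.mul_apply, hy,
    innerBCF_sampleCLM_self_apply]

end SampleFactor

section NormSq

variable {α : Type*} [MeasurableSpace α] {μ : Measure α} {V : Type*} [NormedAddCommGroup V]

theorem integrable_norm_sq_lp (l : Lp V 2 μ) :
    Integrable (fun z => ‖l z‖ ^ 2) μ :=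
  (Lp.memLp l).integrable_norm_pow two_ne_zero

variable [InnerProductSpace ℝ V]

theorem norm_sq_lp_eq_integral (l : Lp V 2 μ) : ‖l‖ ^ 2 = ∫ z, ‖l z‖ ^ 2 ∂μ := by
  rw [← real_inner_self_eq_norm_sq, L2.inner_def]
  simp only [real_inner_self_eq_norm_sq]

theorem sq_real_inner_le (x y : V) : (inner ℝ x y : ℝ) ^ 2 ≤ ‖x‖ ^ 2 * ‖y‖ ^ 2 := by
  rw [← mul_pow]
  exact sq_le_sq' (neg_le_of_abs_le (abs_real_inner_le_norm x y)) (real_inner_le_norm x y)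

end NormSq

section AreaForm

variable {α : Type*} [TopologicalSpace α] [SecondCountableTopology α] [MeasurableSpace α]
  [BorelSpace α] {V : Type*} [NormedAddCommGroup V] [InnerProductSpace ℝ V]

/-- The pointwise inner product of a bounded continuous and a square integrable function. -/
def innerLp (μ : Measure α) : (α →ᵇ V) →L[ℝ] Lp V 2 μ →L[ℝ] Lp ℝ 2 μ :=
  mulLpCLM (innerSL ℝ) μ

theorem coeFn_innerLp (μ : Measure α) (Q : α →ᵇ V) (l : Lp V 2 μ) :
    innerLp μ Q l =ᵐ[μ] fun z => (inner ℝ (Q z) (l z) : ℝ) := coeFn_mulLpCLM _ μ Q l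

/-- The integral, with weight `m`, of the squared area of the parallelogram spanned by `Q` and `l`;
it is written through bounded operators to make its smoothness evident. -/
def areaForm (μ : Measure α) (m : α →ᵇ ℝ) (Q : α →ᵇ V) (l : Lp V 2 μ) : ℝ :=
  (inner ℝ (mulLpCLM (ContinuousLinearMap.lsmul ℝ ℝ) μ (m * innerBCF Q Q) l) l : ℝ) -
    (inner ℝ (mulLpCLM (ContinuousLinearMap.mul ℝ ℝ) μ m (innerLp μ Q l)) (innerLp μ Q l) : ℝ)

theorem areaForm_integrand_ae_eq (μ : Measure α) (m : α →ᵇ ℝ) (Q : α →ᵇ V) (l : Lp V 2 μ) :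
    (fun z =>
      (inner ℝ (mulLpCLM (ContinuousLinearMap.lsmul ℝ ℝ) μ (m * innerBCF Q Q) l z) (l z) : ℝ) -
        (inner ℝ (mulLpCLM (ContinuousLinearMap.mul ℝ ℝ) μ m (innerLp μ Q l) z)
          (innerLp μ Q l z) : ℝ)) =ᵐ[μ]
      fun z => m z * (‖Q z‖ ^ 2 * ‖l z‖ ^ 2 - (inner ℝ (Q z) (l z) : ℝ) ^ 2) := by
  filter_upwards [coeFn_mulLpCLM (ContinuousLinearMap.lsmul ℝ ℝ) μ (m * innerBCF Q Q) l,
    coeFn_mulLpCLM (ContinuousLinearMap.mul ℝ ℝ) μ m (innerLp μ Q l), coeFn_innerLp μ Q l]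
    with z hscaled hweighted hinner
  rw [hscaled, hweighted, hinner]
  simp only [ContinuousLinearMap.lsmul_apply, inner_smul_left, BoundedContinuousFunction.coe_mul,
    Pi.mul_apply, innerBCF_apply, real_inner_self_eq_norm_sq, RCLike.conj_to_real,
    ContinuousLinearMap.mul_apply', RCLike.inner_apply]
  ring

theorem integrable_areaForm (μ : Measure α) (m : α →ᵇ ℝ) (Q : α →ᵇ V) (l : Lp V 2 μ) :
    Integrable (fun z => m z * (‖Q z‖ ^ 2 * ‖l z‖ ^ 2 - (inner ℝ (Q z) (l z) : ℝ) ^ 2)) μ :=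
  ((L2.integrable_inner _ _).sub (L2.integrable_inner _ _)).congr
    (areaForm_integrand_ae_eq μ m Q l)

theorem areaForm_eq_integral (μ : Measure α) (m : α →ᵇ ℝ) (Q : α →ᵇ V) (l : Lp V 2 μ) :
    areaForm μ m Q l =
      ∫ z, m z * (‖Q z‖ ^ 2 * ‖l z‖ ^ 2 - (inner ℝ (Q z) (l z) : ℝ) ^ 2) ∂μ := by
  rw [areaForm, L2.inner_def, L2.inner_def,
    ← integral_sub (L2.integrable_inner _ _) (L2.integrable_inner _ _)]
  exact integral_congr_ae (areaForm_integrand_ae_eq μ m Q l)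

theorem le_areaForm (μ : Measure α) {m : α →ᵇ ℝ} {Q : α →ᵇ V} (hm : ∀ z, 1 ≤ m z) {c : ℝ}
    (hc : 0 ≤ c) (hQ : ∀ z, c ≤ ‖Q z‖) (l : Lp V 2 μ) :
    c ^ 2 * ‖l‖ ^ 2 - ‖innerLp μ Q l‖ ^ 2 ≤ areaForm μ m Q l := by
  rw [areaForm_eq_integral, norm_sq_lp_eq_integral, norm_sq_lp_eq_integral, ← integral_const_mul,
    ← integral_sub ((integrable_norm_sq_lp l).const_mul _) (integrable_norm_sq_lp _)]
  refine integral_mono_ae (((integrable_norm_sq_lp l).const_mul _).sub (integrable_norm_sq_lp _))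
    (integrable_areaForm μ m Q l) ?_
  filter_upwards [coeFn_innerLp μ Q l] with z hz
  rw [hz, Real.norm_eq_abs, sq_abs]
  have hlow : c ^ 2 * ‖l z‖ ^ 2 ≤ ‖Q z‖ ^ 2 * ‖l z‖ ^ 2 :=
    mul_le_mul_of_nonneg_right (pow_le_pow_left₀ hc (hQ z) 2) (sq_nonneg _)
  calc c ^ 2 * ‖l z‖ ^ 2 - (inner ℝ (Q z) (l z) : ℝ) ^ 2
      ≤ ‖Q z‖ ^ 2 * ‖l z‖ ^ 2 - (inner ℝ (Q z) (l z) : ℝ) ^ 2 := by linarith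
    _ ≤ m z * (‖Q z‖ ^ 2 * ‖l z‖ ^ 2 - (inner ℝ (Q z) (l z) : ℝ) ^ 2) :=
        le_mul_of_one_le_left (sub_nonneg.mpr (sq_real_inner_le _ _)) (hm z)

theorem contDiffAt_areaForm (μ : Measure α) {Z : Type*} [NormedAddCommGroup Z] [NormedSpace ℝ Z]
    {r : WithTop ℕ∞} {m : Z → (α →ᵇ ℝ)} {Q : Z → (α →ᵇ V)} {l : Z → Lp V 2 μ} {z : Z}
    (hm : ContDiffAt ℝ r m z) (hQ : ContDiffAt ℝ r Q z) (hl : ContDiffAt ℝ r l z) :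
    ContDiffAt ℝ r (fun z => areaForm μ (m z) (Q z) (l z)) z := by
  have hinner := contDiffAt_clm_apply₂ (innerLp μ) hQ hl
  have hscaled := contDiffAt_clm_apply₂
    (mulLpCLM (ContinuousLinearMap.lsmul ℝ ℝ : ℝ →L[ℝ] V →L[ℝ] V) μ)
    (hm.mul (contDiffAt_clm_apply₂ innerBCF hQ hQ)) hl
  have hweighted := contDiffAt_clm_apply₂ (mulLpCLM (ContinuousLinearMap.mul ℝ ℝ) μ) hm hinner
  exact (hscaled.inner ℝ hl).sub (hweighted.inner ℝ hinner)

end AreaForm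

theorem toReal_menger_eq_areaForm {n : ℕ} {p : ℝ} (hp : p < 8 / 3) (hs : 3 / 2 < 3 * p / 2 - 2)
    (x : HartleyCoeff (EuclideanSpace ℝ (Fin n))) (m : (ℝ × ℝ × ℝ) →ᵇ ℝ)
    (hm : ∀ z, m z = ∏ i, (‖sample i (sobolevVelocity hs x) z‖ ^ 2) ^ sampleExponent p i) :
    (menger p 2 (sobolevCurve hs x) (sobolevVelocity hs x)).toReal =
      6 * areaForm (configMeasure p) m (sampleCLM 3 (sobolevVelocity hs x))
        (meanDiffCLM hp hs x) := by
  have hdens : (fun z => m z * (‖sampleCLM 3 (sobolevVelocity hs x) z‖ ^ 2 *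
      ‖meanDiffCLM hp hs x z‖ ^ 2 - (inner ℝ (sampleCLM 3 (sobolevVelocity hs x) z)
        (meanDiffCLM hp hs x z) : ℝ) ^ 2)) =ᵐ[configMeasure p]
      energyDensity p (sobolevVelocity hs x) := by
    filter_upwards [coeFn_meanDiffCLM hp hs x] with z hz
    rw [hz, sampleCLM_apply, hm, energyDensity]
  have hnonneg : ∀ z, 0 ≤ energyDensity p (sobolevVelocity hs x) z := fun z =>
    mul_nonneg (Finset.prod_nonneg fun i _ => by positivity)
      (sub_nonneg.mpr (sq_real_inner_le _ _))
  have hint := integrable_areaForm (configMeasure p) m (sampleCLM 3 (sobolevVelocity hs x))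
    (meanDiffCLM hp hs x)
  rw [menger_eq_lintegral_energyDensity (sobolevVelocity hs x).continuous
      (hasDerivAt_sobolevCurve hs x) p (sobolevCurve_periodic _ x) (sobolevVelocity_periodic hs x),
    areaForm_eq_integral, integral_congr_ae hdens,
    ← ofReal_integral_eq_lintegral_ofReal (hint.congr hdens) (ae_of_all _ hnonneg),
    ENNReal.toReal_mul, ENNReal.toReal_ofReal (integral_nonneg hnonneg), ENNReal.toReal_ofNat]

/-! ### The Gårding inequality -/

section Penalty

variable {X H : Type*} [NormedAddCommGroup X] [NormedSpace ℝ X] [NormedAddCommGroup H]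
  [InnerProductSpace ℝ H] (Γ : X →L[ℝ] X →L[ℝ] H)

theorem contDiff_norm_sq_bilinear {r : WithTop ℕ∞} : ContDiff ℝ r fun x => ‖Γ x x‖ ^ 2 :=
  (Γ.contDiff.clm_apply contDiff_id).norm_sq ℝ

theorem fderiv_norm_sq_bilinear_eq_zero {x : X} (hx : Γ x x = 0) :
    fderiv ℝ (fun x => ‖Γ x x‖ ^ 2) x = 0 :=
  IsLocalMin.fderiv_eq_zero (Eventually.of_forall fun y => by
    simp only [hx, norm_zero, zero_pow two_ne_zero, sq_nonneg])

theorem hasDerivAt_norm_sq_bilinear_line {x : X} (hx : Γ x x = 0) (h : X) :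
    HasDerivAt (fun t : ℝ => ‖Γ (x + t • h) (x + t • h)‖ ^ 2) 0 0 := by
  have hline := hasDerivAt_comp_line_zero
    ((contDiff_norm_sq_bilinear Γ (r := 1)).differentiable one_ne_zero x) h
  rwa [fderiv_norm_sq_bilinear_eq_zero Γ hx] at hline

theorem fderiv_fderiv_norm_sq_bilinear (hsymm : ∀ a b, Γ a b = Γ b a) {x : X} (hx : Γ x x = 0)
    (h : X) : fderiv ℝ (fderiv ℝ fun x => ‖Γ x x‖ ^ 2) x h h = 8 * ‖Γ x h‖ ^ 2 := by
  have hline : ∀ t : ℝ, Γ (x + t • h) (x + t • h) = (2 * t) • Γ x h + t ^ 2 • Γ h h := fun t => by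
    simp only [map_add, map_smul, add_apply, smul_apply, hx, hsymm h x]
    module
  rw [fderiv_fderiv_apply_self_of_eq_eval (contDiff_norm_sq_bilinear Γ).contDiffAt
    (.C (4 * ‖Γ x h‖ ^ 2) * .X ^ 2 + .C (4 * inner ℝ (Γ x h) (Γ h h)) * .X ^ 3 +
      .C (‖Γ h h‖ ^ 2) * .X ^ 4) fun t => ?_]
  · simp only [Polynomial.coeff_add, Polynomial.coeff_C_mul_X_pow]
    norm_num
    ring
  · simp only [hline, norm_add_sq_real, norm_smul, inner_smul_left, inner_smul_right, mul_pow,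
      Real.norm_eq_abs, sq_abs, RCLike.conj_to_real, Polynomial.eval_add, Polynomial.eval_mul,
      Polynomial.eval_C, Polynomial.eval_pow, Polynomial.eval_X]
    ring

end Penalty

section AbstractGarding

variable {X Y H H' : Type*} [NormedAddCommGroup X] [NormedSpace ℝ X]
  [NormedAddCommGroup Y] [NormedSpace ℝ Y] [NormedAddCommGroup H] [NormedSpace ℝ H]
  [NormedAddCommGroup H'] [InnerProductSpace ℝ H']

/- Young's inequality absorbs the mixed terms. -/
theorem exists_le_bilinear_prod (B : (Y × H) →L[ℝ] (Y × H) →L[ℝ] ℝ) {d : ℝ} (hd : 0 < d) :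
    ∃ K ≥ 0, ∀ y k, B (0, k) (0, k) - d * ‖k‖ ^ 2 - K * ‖y‖ ^ 2 ≤ B (y, k) (y, k) := by
  refine ⟨‖B‖ + ‖B‖ ^ 2 / d, by positivity, fun y k => ?_⟩
  have hsplit : B (y, k) (y, k) =
      B (0, k) (0, k) + B (0, k) (y, 0) + B (y, 0) (0, k) + B (y, 0) (y, 0) := by
    rw [show (y, k) = ((0, k) : Y × H) + (y, 0) by simp]
    simp only [map_add, add_apply]
    ring
  have hk : ‖((0, k) : Y × H)‖ = ‖k‖ := by simp [Prod.norm_def]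
  have hy : ‖((y, 0) : Y × H)‖ = ‖y‖ := by simp [Prod.norm_def]
  have hky := (abs_le.mp (B.le_opNorm₂ (0, k) (y, 0))).1
  have hyk := (abs_le.mp (B.le_opNorm₂ (y, 0) (0, k))).1
  have hyy := (abs_le.mp (B.le_opNorm₂ (y, 0) (y, 0))).1
  rw [hk, hy] at hky hyk
  rw [hy] at hyy
  have hyoung : 2 * (‖B‖ * ‖k‖ * ‖y‖) ≤ d * ‖k‖ ^ 2 + ‖B‖ ^ 2 / d * ‖y‖ ^ 2 := by
    have hsq : d * ‖k‖ ^ 2 + ‖B‖ ^ 2 / d * ‖y‖ ^ 2 - 2 * (‖B‖ * ‖k‖ * ‖y‖) =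
        (d * ‖k‖ - ‖B‖ * ‖y‖) ^ 2 / d := by
      field_simp
      ring
    have : 0 ≤ (d * ‖k‖ - ‖B‖ * ‖y‖) ^ 2 / d := by positivity
    linarith
  rw [hsplit]
  linarith

theorem fderiv_fderiv_add_norm_sq_bilinear (V : X →L[ℝ] Y) (Γ : X →L[ℝ] X →L[ℝ] H')
    (hsymm : ∀ a b, Γ a b = Γ b a) {x : X} (hx : Γ x x = 0) {g : Y → ℝ}
    (hg : ContDiffAt ℝ 2 g (V x)) (σ : ℝ) (h : X) :
    fderiv ℝ (fderiv ℝ fun x => g (V x) + σ * ‖Γ x x‖ ^ 2) x h h =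
      fderiv ℝ (fderiv ℝ g) (V x) (V h) (V h) + 8 * σ * ‖Γ x h‖ ^ 2 := by
  have hgV : ContDiffAt ℝ 2 (fun x => g (V x)) x := hg.comp x V.contDiff.contDiffAt
  rw [fderiv_fderiv_add_const_mul hgV (contDiff_norm_sq_bilinear Γ).contDiffAt, add_apply,
    add_apply, fderiv_fderiv_comp_clm V hg, smul_apply, smul_apply,
    fderiv_fderiv_norm_sq_bilinear Γ hsymm hx, smul_eq_mul]
  ring

theorem exists_le_fderiv_fderiv_add_norm_sq_bilinear (V : X →L[ℝ] Y) (L : X →L[ℝ] H)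
    (Γ : X →L[ℝ] X →L[ℝ] H') (hsymm : ∀ a b, Γ a b = Γ b a) {x : X} (hx : Γ x x = 0)
    {g : Y × H → ℝ} (hg : ContDiffAt ℝ 2 g (V x, L x)) (T : H →L[ℝ] H') {d σ C : ℝ} (hd : 0 < d)
    (hσ : 0 ≤ σ) (hT : ∀ h, ‖T (L h)‖ ≤ ‖Γ x h‖ + C * ‖V h‖)
    (hpos : ∀ k, 2 * d * ‖k‖ ^ 2 - 4 * σ * ‖T k‖ ^ 2 ≤
      fderiv ℝ (fderiv ℝ g) (V x, L x) (0, k) (0, k)) :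
    ∃ K ≥ 0, ∀ h, d * ‖L h‖ ^ 2 - K * ‖V h‖ ^ 2 ≤
      fderiv ℝ (fderiv ℝ fun x => g (V x, L x) + σ * ‖Γ x x‖ ^ 2) x h h := by
  obtain ⟨K, hK, hB⟩ := exists_le_bilinear_prod (fderiv ℝ (fderiv ℝ g) (V x, L x)) hd
  refine ⟨K + 8 * σ * C ^ 2, by positivity, fun h => ?_⟩
  have hhess := fderiv_fderiv_add_norm_sq_bilinear (V.prod L) Γ hsymm hx hg σ h
  simp only [ContinuousLinearMap.prod_apply] at hhess
  have hTsq : ‖T (L h)‖ ^ 2 ≤ 2 * ‖Γ x h‖ ^ 2 + 2 * C ^ 2 * ‖V h‖ ^ 2 := by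
    have hsq := pow_le_pow_left₀ (norm_nonneg _) (hT h) 2
    linarith [add_sq_le (a := ‖Γ x h‖) (b := C * ‖V h‖), mul_pow C ‖V h‖ 2]
  rw [hhess]
  linarith [hpos (L h), hB (V h) (L h), mul_le_mul_of_nonneg_left hTsq hσ]

end AbstractGarding

section InnerMean

variable {V : Type*} [NormedAddCommGroup V] [InnerProductSpace ℝ V] [CompleteSpace V]

theorem inner_segmentMean_sub (f h : ℝ →ᵇ V) (q : V) (u v : ℝ) :
    (inner ℝ q (segmentMean h u v) : ℝ) - segmentMean (innerBCF f h) u v =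
      ∫ t in (0 : ℝ)..1, (inner ℝ (q - f (u + t * v)) (h (u + t * v)) : ℝ) := by
  have hinner : (∫ t in (0 : ℝ)..1, (inner ℝ q (h (u + t * v)) : ℝ)) =
      inner ℝ q (segmentMean h u v) :=
    (innerSL ℝ q).intervalIntegral_comp_comm (Continuous.intervalIntegrable (by fun_prop) _ _)
  rw [← hinner, segmentMean, ← intervalIntegral.integral_sub
    (Continuous.intervalIntegrable (by fun_prop) _ _)
    (Continuous.intervalIntegrable (by fun_prop) _ _)]
  simp only [innerBCF_apply, inner_sub_left]

theorem abs_inner_segmentMean_sub_le (f h : ℝ →ᵇ V) (q : V) (u v : ℝ) :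
    |(inner ℝ q (segmentMean h u v) : ℝ) - segmentMean (innerBCF f h) u v| ≤
      ‖h‖ * (‖q - f u‖ + meanOsc f u v) := by
  have hpointwise : ∀ t, ‖(inner ℝ (q - f (u + t * v)) (h (u + t * v)) : ℝ)‖ ≤
      ‖h‖ * (‖q - f u‖ + ‖f (u + t * v) - f u‖) := fun t =>
    calc ‖(inner ℝ (q - f (u + t * v)) (h (u + t * v)) : ℝ)‖
        ≤ ‖q - f (u + t * v)‖ * ‖h (u + t * v)‖ := norm_inner_le_norm _ _
      _ ≤ (‖q - f u‖ + ‖f (u + t * v) - f u‖) * ‖h‖ := by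
          rw [norm_sub_rev (f (u + t * v))]
          gcongr
          · exact norm_sub_le_norm_sub_add_norm_sub _ _ _
          · exact h.norm_coe_le_norm _
      _ = ‖h‖ * (‖q - f u‖ + ‖f (u + t * v) - f u‖) := mul_comm _ _
  rw [inner_segmentMean_sub, ← Real.norm_eq_abs]
  refine (intervalIntegral.norm_integral_le_of_norm_le zero_le_one
    (ae_of_all _ fun t _ => hpointwise t)
    (Continuous.intervalIntegrable (by fun_prop) _ _)).trans_eq ?_
  rw [intervalIntegral.integral_const_mul, intervalIntegral.integral_add
    (Continuous.intervalIntegrable (by fun_prop) _ _)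
    (Continuous.intervalIntegrable (by fun_prop) _ _), intervalIntegral.integral_const,
    sub_zero, one_smul, meanOsc]

theorem abs_inner_meanDiff_sub_le (f h : ℝ →ᵇ V) {z : ℝ × ℝ × ℝ} (hz : z.2 ∈ arcPairs) :
    |(inner ℝ (sample 3 f z) (meanDiff h z) : ℝ) - meanDiff (innerBCF f h) z| ≤
      3 * ‖h‖ * oscSum f z := by
  obtain ⟨u, a, b⟩ := z
  rw [sample_three_of_mem_arcPairs f u hz]
  set q := segmentMean f u (-a)
  have hq := mul_le_mul_of_nonneg_left (norm_segmentMean_sub_le f.continuous u (-a))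
    (norm_nonneg h)
  have hosc := mul_nonneg (norm_nonneg h) (meanOsc_nonneg f u b)
  have hright := abs_le.mp (abs_inner_segmentMean_sub_le f h q u b)
  have hleft := abs_le.mp (abs_inner_segmentMean_sub_le f h q u (-a))
  unfold meanDiff oscSum
  rw [inner_sub_right, abs_le]
  constructor <;> linarith

end InnerMean

section MeanDiffBounds

variable {V : Type*} [NormedAddCommGroup V] [InnerProductSpace ℝ V] [CompleteSpace V] {p : ℝ}
  (hp : p < 8 / 3) (hs : 3 / 2 < 3 * p / 2 - 2)

theorem norm_innerLp_meanDiffCLM_sub_le (x h : HartleyCoeff V) :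
    ‖innerLp (configMeasure p) (sampleCLM 3 (sobolevVelocity hs x)) (meanDiffCLM hp hs h) -
      gramCLM hp hs x h‖ ≤ 3 * (2 * √(oscConst p) * ‖x‖) * ‖sobolevVelocity hs h‖ := by
  set f := innerLp (configMeasure p) (sampleCLM 3 (sobolevVelocity hs x)) (meanDiffCLM hp hs h)
    with hf
  have hle : eLpNorm (f - gramCLM hp hs x h : Lp ℝ 2 (configMeasure p)) 2 (configMeasure p) ≤
      eLpNorm ((3 * ‖sobolevVelocity hs h‖) • oscSum (sobolevVelocity hs x)) 2
        (configMeasure p) := by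
    refine eLpNorm_mono_ae_real ?_
    filter_upwards [Lp.coeFn_sub f (gramCLM hp hs x h), coeFn_innerLp (configMeasure p)
      (sampleCLM 3 (sobolevVelocity hs x)) (meanDiffCLM hp hs h), coeFn_meanDiffCLM hp hs h,
      coeFn_gramCLM hp hs x h, ae_configMeasure p] with z hsub hinner hdiff hgram hz
    rw [hsub, Pi.sub_apply, hf, hinner, hdiff, hgram, Real.norm_eq_abs, sampleCLM_apply]
    exact abs_inner_meanDiff_sub_le _ _ hz
  rw [Lp.norm_def]
  refine ENNReal.toReal_le_of_le_ofReal (by positivity) (hle.trans ?_)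
  rw [eLpNorm_const_smul, Real.enorm_eq_ofReal (by positivity),
    mul_right_comm 3 (2 * √(oscConst p) * ‖x‖),
    ENNReal.ofReal_mul (p := 3 * ‖sobolevVelocity hs h‖) (by positivity)]
  exact mul_le_mul_right (eLpNorm_oscSum_le hp hs x) _

theorem norm_innerLp_meanDiffCLM_le (x h : HartleyCoeff V) :
    ‖innerLp (configMeasure p) (sampleCLM 3 (sobolevVelocity hs x)) (meanDiffCLM hp hs h)‖ ≤
      ‖gramCLM hp hs x h‖ + 3 * (2 * √(oscConst p) * ‖x‖) * ‖sobolevVelocity hs h‖ := by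
  linarith [norm_innerLp_meanDiffCLM_sub_le hp hs x h, norm_sub_norm_le
    (innerLp (configMeasure p) (sampleCLM 3 (sobolevVelocity hs x)) (meanDiffCLM hp hs h))
    (gramCLM hp hs x h)]

theorem le_norm_meanDiffCLM_sq (h : HartleyCoeff V) :
    meanDiffConst p * (‖h‖ ^ 2 - ‖h 0‖ ^ 2) ≤ ‖meanDiffCLM hp hs h‖ ^ 2 := by
  have hlint : ENNReal.ofReal (‖meanDiffCLM hp hs h‖ ^ 2) =
      ∫⁻ z, ENNReal.ofReal (‖meanDiff (sobolevVelocity hs h) z‖ ^ 2) ∂configMeasure p := by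
    rw [norm_sq_lp_eq_integral, ofReal_integral_eq_lintegral_ofReal (integrable_norm_sq_lp _)
      (ae_of_all _ fun _ => sq_nonneg _)]
    refine lintegral_congr_ae ?_
    filter_upwards [coeFn_meanDiffCLM hp hs h] with z hz
    rw [hz]
  refine (ENNReal.ofReal_le_ofReal_iff (sq_nonneg _)).mp ?_
  rw [hlint]
  exact le_lintegral_meanDiff_sq hs h

end MeanDiffBounds

section LowFrequencies

variable {ι V : Type*} [NormedAddCommGroup V]

theorem tsum_mul_norm_sq_le {c : ι → ℝ} (hc : Summable fun k => c k ^ 2) (F : Finset ι)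
    (a : lp (fun _ : ι => V) 2) :
    (∑' k, |c k| * ‖a k‖) ^ 2 ≤ 2 * (∑' k : ↥(F : Set ι)ᶜ, c k ^ 2) * ‖a‖ ^ 2 +
      2 * (∑ k ∈ F, c k ^ 2) * ∑ k ∈ F, ‖a k‖ ^ 2 := by
  classical
  set tail : ι → ℝ := (F : Set ι)ᶜ.indicator c
  have htail_sq : ∀ k, tail k ^ 2 = (F : Set ι)ᶜ.indicator (fun k => c k ^ 2) k := fun k => by
    by_cases hk : k ∈ F <;> simp [tail, hk]
  obtain ⟨-, htail⟩ := summable_mul_norm (c := tail) (by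
    simp only [htail_sq]
    exact hc.indicator _) a
  simp only [htail_sq, ← tsum_subtype (F : Set ι)ᶜ (fun k => c k ^ 2)] at htail
  have hhead : (∑ k ∈ F, |c k| * ‖a k‖) ^ 2 ≤ (∑ k ∈ F, c k ^ 2) * ∑ k ∈ F, ‖a k‖ ^ 2 := by
    simpa only [sq_abs] using F.sum_mul_sq_le_sq_mul_sq (fun k => |c k|) fun k => ‖a k‖
  have hsplit : ∑' k, |c k| * ‖a k‖ = ∑ k ∈ F, |c k| * ‖a k‖ + ∑' k, |tail k| * ‖a k‖ := by
    rw [← (summable_mul_norm hc a).1.sum_add_tsum_compl (s := F),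
      tsum_subtype _ fun k => |c k| * ‖a k‖]
    refine congrArg _ (tsum_congr fun k => ?_)
    by_cases hk : k ∈ F <;> simp [tail, hk]
  have htail_le := pow_le_pow_left₀ (tsum_nonneg fun k => by positivity) htail 2
  rw [mul_pow, Real.sq_sqrt (tsum_nonneg fun k => sq_nonneg _)] at htail_le
  rw [hsplit]
  linarith [add_sq_le (a := ∑ k ∈ F, |c k| * ‖a k‖) (b := ∑' k, |tail k| * ‖a k‖)]

theorem exists_norm_seriesCLM_sq_le {α : Type*} [TopologicalSpace α] [InnerProductSpace ℝ V]
    [CompleteSpace V] {e : ι → α → ℝ} {c : ι → ℝ} (he : ∀ k, Continuous (e k))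
    (hec : ∀ k u, |e k u| ≤ |c k|) (hc : Summable fun k => c k ^ 2) {ε : ℝ} (hε : 0 < ε) :
    ∃ (F : Finset ι), ∃ C ≥ 0, ∀ a : lp (fun _ : ι => V) 2,
      ‖seriesCLM e c he hec hc a‖ ^ 2 ≤ ε * ‖a‖ ^ 2 + C * ∑ k ∈ F, ‖a k‖ ^ 2 := by
  obtain ⟨F, hF⟩ := ((tendsto_order.mp (tendsto_tsum_compl_atTop_zero fun k => c k ^ 2)).2 (ε / 2)
    (half_pos hε)).exists
  refine ⟨F, 2 * ∑ k ∈ F, c k ^ 2, by positivity, fun a => ?_⟩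
  have hnorm : ‖seriesCLM e c he hec hc a‖ ≤ ∑' k, |c k| * ‖a k‖ :=
    (BoundedContinuousFunction.norm_le (tsum_nonneg fun k => by positivity)).mpr fun u => by
      rw [seriesCLM_apply]
      refine tsum_of_norm_bounded (summable_mul_norm hc a).1.hasSum fun k => ?_
      rw [norm_smul]
      exact mul_le_mul_of_nonneg_right (hec k u) (norm_nonneg _)
  calc ‖seriesCLM e c he hec hc a‖ ^ 2 ≤ (∑' k, |c k| * ‖a k‖) ^ 2 := by gcongr
    _ ≤ 2 * (∑' k : ↥(F : Set ι)ᶜ, c k ^ 2) * ‖a‖ ^ 2 +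
        2 * (∑ k ∈ F, c k ^ 2) * ∑ k ∈ F, ‖a k‖ ^ 2 := tsum_mul_norm_sq_le hc F a
    _ ≤ ε * ‖a‖ ^ 2 + 2 * (∑ k ∈ F, c k ^ 2) * ∑ k ∈ F, ‖a k‖ ^ 2 := by
        have htail : ∑' k : ↥(F : Set ι)ᶜ, c k ^ 2 < ε / 2 := hF
        gcongr
        linarith

end LowFrequencies

section Lagrangian

/-- The mean over a period as a continuous linear functional. -/
def meanCLM : (ℝ →ᵇ ℝ) →L[ℝ] ℝ :=
  LinearMap.mkContinuous
    { toFun := fun f => ∫ u in (0 : ℝ)..1, f u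
      map_add' := fun f g => intervalIntegral.integral_add (f.continuous.intervalIntegrable _ _)
        (g.continuous.intervalIntegrable _ _)
      map_smul' := fun c f => intervalIntegral.integral_const_mul c f } 1 fun f => by
    have hle := intervalIntegral.norm_integral_le_of_norm_le_const (a := (0 : ℝ)) (b := 1) (f := f)
      (C := ‖f‖) fun u _ => f.norm_coe_le_norm u
    rwa [sub_zero, abs_one, mul_one, ← one_mul ‖f‖] at hle

theorem meanCLM_apply (f : ℝ →ᵇ ℝ) : meanCLM f = ∫ u in (0 : ℝ)..1, f u := rfl

variable {V : Type*} [NormedAddCommGroup V] [InnerProductSpace ℝ V]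

theorem exists_areaForm_add_smul {α : Type*} [TopologicalSpace α] [SecondCountableTopology α]
    [MeasurableSpace α] [BorelSpace α] (μ : Measure α) (m : α →ᵇ ℝ) (Q : α →ᵇ V) (l k : Lp V 2 μ) :
    ∃ c, ∀ t : ℝ, areaForm μ m Q (l + t • k) =
      areaForm μ m Q l + c * t + areaForm μ m Q k * t ^ 2 := by
  unfold areaForm
  generalize mulLpCLM (ContinuousLinearMap.lsmul ℝ ℝ : ℝ →L[ℝ] V →L[ℝ] V) μ (m * innerBCF Q Q) = A
  generalize mulLpCLM (ContinuousLinearMap.mul ℝ ℝ) μ m = B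
  generalize innerLp μ Q = T
  refine ⟨inner ℝ (A l) k + inner ℝ (A k) l - inner ℝ (B (T l)) (T k) - inner ℝ (B (T k)) (T l),
    fun t => ?_⟩
  simp only [map_add, map_smul, inner_add_left, inner_add_right, inner_smul_left, inner_smul_right,
    RCLike.conj_to_real]
  ring

/-- The integral Menger curvature with the length constraint added with multiplier `lam`, as a
function of the velocity and its mean differences; `m` stands for the powers of the chord lengths
in the integrand. -/
def lagrangian (p lam : ℝ) (m : (ℝ →ᵇ V) → ((ℝ × ℝ × ℝ) →ᵇ ℝ))
    (w : (ℝ →ᵇ V) × Lp V 2 (configMeasure p)) : ℝ :=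
  6 * areaForm (configMeasure p) (m w.1) (sampleCLM 3 w.1) w.2 +
    lam / 2 * meanCLM (innerBCF w.1 w.1)

variable (p lam : ℝ) {m : (ℝ →ᵇ V) → ((ℝ × ℝ × ℝ) →ᵇ ℝ)}

theorem contDiffAt_lagrangian {r : WithTop ℕ∞} {w : (ℝ →ᵇ V) × Lp V 2 (configMeasure p)}
    (hm : ContDiffAt ℝ r m w.1) : ContDiffAt ℝ r (lagrangian p lam m) w := by
  have hfst : ContDiffAt ℝ r
      (fun w : (ℝ →ᵇ V) × Lp V 2 (configMeasure p) => w.1) w := contDiffAt_fst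
  have hweight : ContDiffAt ℝ r
      (fun w : (ℝ →ᵇ V) × Lp V 2 (configMeasure p) => m w.1) w :=
    ContDiffAt.comp (g := m) w hm hfst
  have hchord : ContDiffAt ℝ r
      (fun w : (ℝ →ᵇ V) × Lp V 2 (configMeasure p) => sampleCLM 3 w.1) w :=
    ContDiffAt.continuousLinearMap_comp (sampleCLM (V := V) 3) hfst
  have harea := contDiffAt_areaForm (configMeasure p) hweight hchord contDiffAt_snd
  have hspeed : ContDiffAt ℝ r
      (fun w : (ℝ →ᵇ V) × Lp V 2 (configMeasure p) => innerBCF w.1 w.1) w :=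
    contDiffAt_clm_apply₂ innerBCF hfst hfst
  have hmean : ContDiffAt ℝ r
      (fun w : (ℝ →ᵇ V) × Lp V 2 (configMeasure p) => meanCLM (innerBCF w.1 w.1)) w :=
    ContDiffAt.continuousLinearMap_comp meanCLM hspeed
  exact (contDiffAt_const.mul harea).add (contDiffAt_const.mul hmean)

theorem le_fderiv_fderiv_lagrangian {y : ℝ →ᵇ V} {l : Lp V 2 (configMeasure p)}
    (hm : ContDiffAt ℝ 2 m y) (hm1 : ∀ z, 1 ≤ m y z) {c : ℝ} (hc : 0 ≤ c)
    (hQ : ∀ z, c ≤ ‖sampleCLM 3 y z‖) (k : Lp V 2 (configMeasure p)) :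
    12 * (c ^ 2 * ‖k‖ ^ 2 - ‖innerLp (configMeasure p) (sampleCLM 3 y) k‖ ^ 2) ≤
      fderiv ℝ (fderiv ℝ (lagrangian p lam m)) (y, l) (0, k) (0, k) := by
  obtain ⟨c₁, hc₁⟩ := exists_areaForm_add_smul (configMeasure p) (m y) (sampleCLM 3 y) l k
  have hline : ∀ t : ℝ, (y, l) + t • ((0, k) : (ℝ →ᵇ V) × Lp V 2 (configMeasure p)) =
      (y, l + t • k) := fun t => by
    rw [Prod.smul_mk, smul_zero, Prod.mk_add_mk, add_zero]
  rw [fderiv_fderiv_apply_self_of_eq_eval (contDiffAt_lagrangian p lam (w := (y, l)) hm)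
    (.C (lagrangian p lam m (y, l)) * .X ^ 0 + .C (6 * c₁) * .X ^ 1 +
      .C (6 * areaForm (configMeasure p) (m y) (sampleCLM 3 y) k) * .X ^ 2) fun t => ?_]
  · simp only [Polynomial.coeff_add, Polynomial.coeff_C_mul_X_pow]
    norm_num
    linarith [le_areaForm (configMeasure p) hm1 hc hQ k]
  · simp only [hline, lagrangian, hc₁, Polynomial.eval_add, Polynomial.eval_mul,
      Polynomial.eval_C, Polynomial.eval_pow, Polynomial.eval_X]
    ring

end Lagrangian

section Energy

variable {p : ℝ} (hp : p < 8 / 3) (hs : 3 / 2 < 3 * p / 2 - 2)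

theorem gramCLM_self_eq_zero {V : Type*} [NormedAddCommGroup V] [InnerProductSpace ℝ V]
    [CompleteSpace V] {x : HartleyCoeff V} (hunit : ∀ u, ‖sobolevVelocity hs x u‖ = 1) :
    gramCLM hp hs x x = 0 := by
  refine Lp.ext ?_
  filter_upwards [coeFn_gramCLM hp hs x x, Lp.coeFn_zero ℝ 2 (configMeasure p)] with z hgram hzero
  rw [hgram, hzero]
  simp [meanDiff, segmentMean, innerBCF_apply, hunit]

theorem one_le_prod_sample_rpow {V : Type*} [NormedAddCommGroup V] [NormedSpace ℝ V]
    [CompleteSpace V] {f : ℝ →ᵇ V} (hunit : ∀ u, ‖f u‖ = 1) (hp0 : 0 ≤ p)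
    (hne : ∀ i z, 0 < ‖sample i f z‖) (z : ℝ × ℝ × ℝ) :
    1 ≤ ∏ i, (‖sample i f z‖ ^ 2) ^ sampleExponent p i := by
  have hle : ∀ i, ‖sample i f z‖ ≤ 1 := fun i => (norm_segmentMean_le _ _ _).trans
    ((BoundedContinuousFunction.norm_le zero_le_one).mpr fun u => (hunit u).le)
  have hbase : ∀ i, (sampleNode i z).2 = 0 → 1 ≤ (‖sample i f z‖ ^ 2) ^ sampleExponent p i :=
    fun i hi => by
      rw [sample, hi, segmentMean_zero, hunit, one_pow, Real.one_rpow]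
  have hchord : ∀ i, sampleExponent p i ≤ 0 → 1 ≤ (‖sample i f z‖ ^ 2) ^ sampleExponent p i :=
    fun i hi => Real.one_le_rpow_of_pos_of_le_one_of_nonpos (pow_pos (hne i z) 2)
      (pow_le_one₀ (norm_nonneg _) (hle i)) hi
  have hexp : -p / 2 ≤ 0 := by linarith
  exact Finset.prod_induction _ (1 ≤ ·) (fun _ _ => one_le_mul_of_one_le_of_one_le) le_rfl
    fun i _ => by
      fin_cases i
      exacts [hbase 0 rfl, hbase 1 rfl, hbase 2 rfl, hchord 3 hexp, hchord 4 hexp, hchord 5 hexp]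

variable {n : ℕ}

/-- The integral Menger curvature of a Sobolev curve with the length constraint added with
multiplier `lam`, and a penalty for varying speed that vanishes to second order at curves of
constant speed. -/
def energy (lam : ℝ) (x : HartleyCoeff (EuclideanSpace ℝ (Fin n))) : ℝ :=
  (menger p 2 (sobolevCurve hs x) (sobolevVelocity hs x)).toReal +
    lam / 2 * (∫ u in (0 : ℝ)..1, ‖sobolevVelocity hs x u‖ ^ 2) + 3 * ‖gramCLM hp hs x x‖ ^ 2

variable (lam : ℝ) {x : HartleyCoeff (EuclideanSpace ℝ (Fin n))}
  (hinj : InjCircle (sobolevCurve hs x)) (hunit : ∀ u, ‖sobolevVelocity hs x u‖ = 1)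
include hinj hunit

theorem exists_energy_eventuallyEq_lagrangian :
    ∃ c > 0, ∃ m : (ℝ →ᵇ EuclideanSpace ℝ (Fin n)) → ((ℝ × ℝ × ℝ) →ᵇ ℝ),
      ContDiffAt ℝ (⊤ : ℕ∞) m (sobolevVelocity hs x) ∧
      (∀ z, 1 ≤ m (sobolevVelocity hs x) z) ∧
      (∀ z, c ≤ ‖sampleCLM 3 (sobolevVelocity hs x) z‖) ∧
      energy hp hs lam =ᶠ[𝓝 x] fun y =>
        lagrangian p lam m (sobolevVelocity hs y, meanDiffCLM hp hs y) +
          3 * ‖gramCLM hp hs y y‖ ^ 2 := by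
  obtain ⟨c, hc, hmean⟩ := exists_pos_le_norm_segmentMean (sobolevVelocity hs x).continuous
    (hasDerivAt_sobolevCurve hs x) hinj (fun u => norm_ne_zero_iff.mp (by simp [hunit]))
    (sobolevVelocity_periodic hs x) (r := 2 / 3) (by norm_num)
  have hsample : ∀ i z, c ≤ ‖sample i (sobolevVelocity hs x) z‖ :=
    fun i z => hmean _ _ (abs_sampleNode_snd_le i z)
  obtain ⟨m, hm, hmeq⟩ := exists_contDiffAt_prod_sample_rpow p (sobolevVelocity hs x) hc hsample
  refine ⟨c, hc, m, hm, fun z => ?_, hsample 3, ?_⟩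
  · rw [hmeq.self_of_nhds z]
    exact one_le_prod_sample_rpow hunit (by linarith) (fun i z => hc.trans_le (hsample i z)) z
  · filter_upwards [(sobolevVelocity hs).continuous.continuousAt.eventually hmeq] with y hy
    simp only [energy, toReal_menger_eq_areaForm hp hs y _ hy, lagrangian, meanCLM_apply,
      innerBCF_apply, real_inner_self_eq_norm_sq]

theorem contDiffAt_energy : ContDiffAt ℝ (⊤ : ℕ∞) (energy hp hs lam) x := by
  obtain ⟨-, -, m, hm, -, -, henergy⟩ := exists_energy_eventuallyEq_lagrangian hp hs lam hinj hunit
  refine ContDiffAt.congr_of_eventuallyEq ?_ henergy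
  exact ((contDiffAt_lagrangian p lam (w := (sobolevVelocity hs x, meanDiffCLM hp hs x)) hm).comp x
    ((sobolevVelocity hs).prod (meanDiffCLM hp hs)).contDiff.contDiffAt).add
    (contDiffAt_const.mul (contDiff_norm_sq_bilinear (gramCLM hp hs)).contDiffAt)

theorem exists_le_fderiv_fderiv_energy : ∃ d > 0, ∃ K ≥ 0, ∀ h,
    d * ‖meanDiffCLM hp hs h‖ ^ 2 - K * ‖sobolevVelocity hs h‖ ^ 2 ≤
      fderiv ℝ (fderiv ℝ (energy hp hs lam)) x h h := by
  obtain ⟨c, hc, m, hm, hm1, hQ, henergy⟩ :=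
    exists_energy_eventuallyEq_lagrangian hp hs lam hinj hunit
  have hm2 : ContDiffAt ℝ 2 m (sobolevVelocity hs x) :=  hm.of_le ENat.LEInfty.out
  have hhess : ∀ k, 2 * (6 * c ^ 2) * ‖k‖ ^ 2 -
      4 * 3 * ‖innerLp (configMeasure p) (sampleCLM 3 (sobolevVelocity hs x)) k‖ ^ 2 ≤
      fderiv ℝ (fderiv ℝ (lagrangian p lam m)) (sobolevVelocity hs x, meanDiffCLM hp hs x)
        (0, k) (0, k) := fun k => by
    linarith [le_fderiv_fderiv_lagrangian p lam (l := meanDiffCLM hp hs x) hm2 hm1 hc.le hQ k]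
  obtain ⟨K, hK, hle⟩ := exists_le_fderiv_fderiv_add_norm_sq_bilinear (g := lagrangian p lam m)
    (sobolevVelocity hs) (meanDiffCLM hp hs) (gramCLM hp hs) (gramCLM_comm hp hs)
    (gramCLM_self_eq_zero hp hs hunit)
    (contDiffAt_lagrangian p lam (w := (sobolevVelocity hs x, meanDiffCLM hp hs x)) hm2)
    (innerLp (configMeasure p) (sampleCLM 3 (sobolevVelocity hs x))) (by positivity) (by norm_num)
    (norm_innerLp_meanDiffCLM_le hp hs x) hhess
  refine ⟨6 * c ^ 2, by positivity, K, hK, ?_⟩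
  rw [henergy.fderiv.fderiv_eq]
  exact hle

theorem exists_coercive_fderiv_fderiv_energy : ∃ (F : Finset ℤ) (K c : ℝ), 0 < c ∧ ∀ h,
    c * ‖h‖ ^ 2 ≤ fderiv ℝ (fderiv ℝ (energy hp hs lam)) x h h + K * ∑ k ∈ F, ‖h k‖ ^ 2 := by
  classical
  obtain ⟨d, hd, K, hK, hhess⟩ := exists_le_fderiv_fderiv_energy hp hs lam hinj hunit
  have hc : 0 < d * meanDiffConst p := mul_pos hd (meanDiffConst_pos p)
  set c := d * meanDiffConst p
  obtain ⟨F, C, hC, hvel⟩ : ∃ F : Finset ℤ, ∃ C ≥ 0, ∀ h : HartleyCoeff (EuclideanSpace ℝ (Fin n)),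
      ‖sobolevVelocity hs h‖ ^ 2 ≤ c / (2 * (K + 1)) * ‖h‖ ^ 2 + C * ∑ k ∈ F, ‖h k‖ ^ 2 :=
    exists_norm_seriesCLM_sq_le _ _ _ (by positivity)
  refine ⟨insert 0 F, c + K * C, c / 2, half_pos hc, fun h => ?_⟩
  have hF : ∑ k ∈ F, ‖h k‖ ^ 2 ≤ ∑ k ∈ insert 0 F, ‖h k‖ ^ 2 :=
    Finset.sum_le_sum_of_subset_of_nonneg (Finset.subset_insert _ _) fun _ _ _ => sq_nonneg _
  have hzero : ‖h 0‖ ^ 2 ≤ ∑ k ∈ insert 0 F, ‖h k‖ ^ 2 :=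
    Finset.single_le_sum (f := fun k => ‖h k‖ ^ 2) (fun _ _ => sq_nonneg _)
      (Finset.mem_insert_self _ _)
  have hε : K * (c / (2 * (K + 1))) ≤ c / 2 := by
    rw [← mul_div_assoc, div_le_div_iff₀ (by positivity) two_pos]
    linarith
  calc c / 2 * ‖h‖ ^ 2
      ≤ c * ‖h‖ ^ 2 - K * (c / (2 * (K + 1)) * ‖h‖ ^ 2) := by
        linarith [mul_le_mul_of_nonneg_right hε (sq_nonneg ‖h‖)]
    _ ≤ d * ‖meanDiffCLM hp hs h‖ ^ 2 + c * ‖h 0‖ ^ 2 -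
          K * (‖sobolevVelocity hs h‖ ^ 2 - C * ∑ k ∈ F, ‖h k‖ ^ 2) := by
        linarith [mul_le_mul_of_nonneg_left (le_norm_meanDiffCLM_sq hp hs h) hd.le,
          mul_le_mul_of_nonneg_left (hvel h) hK]
    _ ≤ fderiv ℝ (fderiv ℝ (energy hp hs lam)) x h h +
          (c + K * C) * ∑ k ∈ insert 0 F, ‖h k‖ ^ 2 := by
        linarith [hhess h, mul_le_mul_of_nonneg_left hF (mul_nonneg hK hC),
          mul_le_mul_of_nonneg_left hzero hc.le]

end Energy

/-! ### Translation of the parameter -/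

section Translation

variable {V : Type*} [NormedAddCommGroup V] [InnerProductSpace ℝ V]

theorem hasSum_norm_sq_hartleyMultiplier_cos_sin (τ : ℝ) (a : HartleyCoeff V) :
    HasSum (fun k => ‖hartleyMultiplier (fun k => Real.cos (2 * Real.pi * k * τ))
      (fun k => Real.sin (2 * Real.pi * k * τ)) a k‖ ^ 2) (‖a‖ ^ 2) := by
  have hsum := hasSum_norm_sq_hartleyMultiplier (b := a)
    (α := fun k : ℤ => Real.cos (2 * Real.pi * k * τ))
    (β := fun k : ℤ => Real.sin (2 * Real.pi * k * τ)) (fun k => by simp) (fun k => by simp)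
  simp only [Real.cos_sq_add_sin_sq, one_mul, (hasSum_norm_sq a).tsum_eq] at hsum
  exact hsum (hasSum_norm_sq a).summable

/-- The action of the translation `u ↦ u + τ` of the parameter on Hartley coefficients. -/
def translateCoeff (τ : ℝ) : HartleyCoeff V →ₗᵢ[ℝ] HartleyCoeff V where
  toFun a := ⟨hartleyMultiplier (fun k => Real.cos (2 * Real.pi * k * τ))
      (fun k => Real.sin (2 * Real.pi * k * τ)) a, by
    refine memℓp_gen ?_
    simpa only [ENNReal.toReal_ofNat, Real.rpow_ofNat] using
      (hasSum_norm_sq_hartleyMultiplier_cos_sin τ a).summable⟩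
  map_add' a b := by
    ext1
    funext k
    simp only [hartleyMultiplier, lp.coeFn_add, Pi.add_apply, smul_add]
    abel
  map_smul' r a := by
    ext1
    funext k
    simp only [hartleyMultiplier, lp.coeFn_smul, Pi.smul_apply, RingHom.id_apply, smul_sub,
      smul_comm r]
  norm_map' a := (sq_eq_sq₀ (norm_nonneg _) (norm_nonneg _)).mp
    ((hasSum_norm_sq _).unique (hasSum_norm_sq_hartleyMultiplier_cos_sin τ a))

theorem translateCoeff_apply (τ : ℝ) (a : HartleyCoeff V) (k : ℤ) : translateCoeff τ a k =
    Real.cos (2 * Real.pi * k * τ) • a k - Real.sin (2 * Real.pi * k * τ) • a (-k) := rfl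

theorem translateCoeff_neg_translateCoeff (τ : ℝ) (a : HartleyCoeff V) :
    translateCoeff (-τ) (translateCoeff τ a) = a := by
  ext1
  funext k
  simp only [translateCoeff_apply, neg_neg, mul_neg, neg_mul, Int.cast_neg, Real.cos_neg,
    Real.sin_neg, neg_smul, smul_sub, smul_smul]
  calc _ = (Real.cos (2 * Real.pi * k * τ) ^ 2 + Real.sin (2 * Real.pi * k * τ) ^ 2) • a k := by
        module
    _ = a k := by rw [Real.cos_sq_add_sin_sq, one_smul]

theorem translateCoeff_zero (a : HartleyCoeff V) : translateCoeff 0 a = a := by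
  ext1
  funext k
  simp [translateCoeff_apply]

theorem norm_two_sub_two_mul_cos_le (x : ℝ) : ‖2 - 2 * Real.cos x‖ ≤ 4 := by
  rw [Real.norm_eq_abs, abs_le]
  constructor <;> linarith [Real.neg_one_le_cos x, Real.cos_le_one x]

theorem norm_translateCoeff_sub_sq (τ : ℝ) (a : HartleyCoeff V) :
    ‖translateCoeff τ a - a‖ ^ 2 =
      ∑' k : ℤ, (2 - 2 * Real.cos (2 * Real.pi * k * τ)) * ‖a k‖ ^ 2 := by
  have hsum := hasSum_norm_sq_hartleyMultiplier (b := a)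
    (α := fun k : ℤ => Real.cos (2 * Real.pi * k * τ) - 1)
    (β := fun k : ℤ => Real.sin (2 * Real.pi * k * τ)) (fun k => by simp) (fun k => by simp)
  simp only [cos_sub_one_sq_add_sin_sq] at hsum
  refine (hasSum_norm_sq _).unique ((hsum ?_).congr_fun fun k => ?_)
  · refine Summable.of_norm_bounded ((hasSum_norm_sq a).summable.mul_left 4) fun k => ?_
    rw [norm_mul, norm_pow, norm_norm]
    exact mul_le_mul_of_nonneg_right (norm_two_sub_two_mul_cos_le _) (sq_nonneg _)
  · rw [lp.coeFn_sub, Pi.sub_apply, translateCoeff_apply, hartleyMultiplier, sub_smul, one_smul,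
      sub_right_comm]

theorem continuousAt_translateCoeff (a : HartleyCoeff V) :
    ContinuousAt (fun τ => translateCoeff τ a) 0 := by
  have hcont : Continuous fun τ : ℝ =>
      ∑' k : ℤ, (2 - 2 * Real.cos (2 * Real.pi * k * τ)) * ‖a k‖ ^ 2 := by
    refine continuous_tsum (fun k => by fun_prop)
      ((hasSum_norm_sq a).summable.mul_left 4) fun k τ => ?_
    rw [norm_mul, norm_pow, norm_norm]
    exact mul_le_mul_of_nonneg_right (norm_two_sub_two_mul_cos_le _) (sq_nonneg _)
  have hlim : Tendsto (fun τ => ‖translateCoeff τ a - a‖ ^ 2) (𝓝 0) (𝓝 0) := by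
    simp_rw [norm_translateCoeff_sub_sq]
    simpa using hcont.tendsto 0
  rw [ContinuousAt, translateCoeff_zero, tendsto_iff_norm_sub_tendsto_zero]
  simpa [Real.sqrt_sq] using hlim.sqrt

section Curves

variable [CompleteSpace V] {s : ℝ} (hs : 3 / 2 < s)

theorem sobolevCurve_translateCoeff (τ : ℝ) (a : HartleyCoeff V) (u : ℝ) :
    sobolevCurve hs (translateCoeff τ a) u = sobolevCurve hs a (u + τ) := by
  rw [sobolevCurve_apply, sobolevCurve_apply,
    hartleySeries_add (summable_norm_positionCoeff (by linarith) a)]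
  congr 1
  funext k
  rw [positionCoeff, translateCoeff_apply, hartleyMultiplier, positionCoeff, positionCoeff,
    sobolevWeight_neg, smul_sub, smul_comm (sobolevWeight s k), smul_comm (sobolevWeight s k)]

theorem sobolevVelocity_translateCoeff (τ : ℝ) (a : HartleyCoeff V) (u : ℝ) :
    sobolevVelocity hs (translateCoeff τ a) u = sobolevVelocity hs a (u + τ) := by
  have hderiv := hasDerivAt_sobolevCurve hs (translateCoeff τ a) u
  rw [funext (sobolevCurve_translateCoeff hs τ a)] at hderiv
  exact hderiv.unique ((hasDerivAt_sobolevCurve hs a (u + τ)).comp_add_const u τ)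

end Curves

theorem norm_gramCLM_translateCoeff [CompleteSpace V] {p : ℝ} (hp : p < 8 / 3)
    (hs : 3 / 2 < 3 * p / 2 - 2) (τ : ℝ) (x : HartleyCoeff V) :
    ‖gramCLM hp hs (translateCoeff τ x) (translateCoeff τ x)‖ = ‖gramCLM hp hs x x‖ := by
  set g := innerBCF (sobolevVelocity hs x) (sobolevVelocity hs x) with hg
  have hper : ∀ u y, meanDiff g (u + 1, y) = meanDiff g (u, y) := fun u y => by
    simp only [g, meanDiff, segmentMean, add_right_comm _ (1 : ℝ), innerBCF_apply,
      sobolevVelocity_periodic hs x _]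
  have htranslate : ∀ u y, meanDiff (innerBCF (sobolevVelocity hs (translateCoeff τ x))
      (sobolevVelocity hs (translateCoeff τ x))) (u, y) = meanDiff g (u + τ, y) := fun u y => by
    simp only [g, meanDiff, segmentMean, innerBCF_apply, sobolevVelocity_translateCoeff,
      add_right_comm _ τ]
  have hmeas : ∀ f : ℝ →ᵇ ℝ, Measurable fun z => ‖meanDiff f z‖ₑ ^ (2 : ℝ) := fun f =>
    (continuous_meanDiff f.continuous).measurable.enorm.pow_const _
  rw [Lp.norm_def, Lp.norm_def,
    eLpNorm_congr_ae (coeFn_gramCLM hp hs (translateCoeff τ x) (translateCoeff τ x)),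
    eLpNorm_congr_ae (coeFn_gramCLM hp hs x x), ← hg,
    eLpNorm_eq_lintegral_rpow_enorm_toReal two_ne_zero ENNReal.ofNat_ne_top,
    eLpNorm_eq_lintegral_rpow_enorm_toReal two_ne_zero ENNReal.ofNat_ne_top, ENNReal.toReal_ofNat,
    lintegral_configMeasure p (hmeas _), lintegral_configMeasure p (hmeas _)]
  simp only [htranslate]
  congr 3
  funext y
  exact lintegral_Ico_add_of_periodic (g := fun u => ‖meanDiff g (u, y)‖ₑ ^ (2 : ℝ))
    (fun u => by simp only [hper]) τ

end Translation

theorem menger_comp_add {n : ℕ} (p q τ : ℝ) {f f' : ℝ → EuclideanSpace ℝ (Fin n)}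
    (hf : Function.Periodic f 1) (hf' : Function.Periodic f' 1) :
    menger p q (fun u => f (u + τ)) (fun u => f' (u + τ)) = menger p q f f' := by
  set F : ℝ → ℝ → ℝ → ℝ≥0∞ := fun u v w =>
    ENNReal.ofReal (‖f' u‖ * ‖f' v‖ * ‖f' w‖ * invR p q (f u) (f v) (f w))
  calc menger p q (fun u => f (u + τ)) (fun u => f' (u + τ))
      = ∫⁻ u in Ico (0 : ℝ) 1, ∫⁻ v in Ico (0 : ℝ) 1, ∫⁻ w in Ico (0 : ℝ) 1,
          F (u + τ) (v + τ) (w + τ) := rfl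
    _ = ∫⁻ u in Ico (0 : ℝ) 1, ∫⁻ v in Ico (0 : ℝ) 1, ∫⁻ w in Ico (0 : ℝ) 1,
          F (u + τ) (v + τ) w := by
        refine lintegral_congr fun u => lintegral_congr fun v => ?_
        exact lintegral_Ico_add_of_periodic (g := F (u + τ) (v + τ))
          (fun w => by simp only [F, hf w, hf' w]) τ
    _ = ∫⁻ u in Ico (0 : ℝ) 1, ∫⁻ v in Ico (0 : ℝ) 1, ∫⁻ w in Ico (0 : ℝ) 1, F (u + τ) v w := by
        refine lintegral_congr fun u => ?_
        exact lintegral_Ico_add_of_periodic (g := fun v => ∫⁻ w in Ico (0 : ℝ) 1, F (u + τ) v w)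
          (fun v => by simp only [F, hf v, hf' v]) τ
    _ = menger p q f f' := lintegral_Ico_add_of_periodic
        (g := fun u => ∫⁻ v in Ico (0 : ℝ) 1, ∫⁻ w in Ico (0 : ℝ) 1, F u v w)
        (fun u => by simp only [F, hf u, hf' u]) τ

section Truncation

variable {V : Type*} [NormedAddCommGroup V] [InnerProductSpace ℝ V] (F : Finset ℤ) (K : ℝ)

/-- Truncation of the coefficients to a finite set of frequencies, multiplied by `K`. -/
def truncateCoeff : HartleyCoeff V →L[ℝ] HartleyCoeff V :=
  K • ∑ k ∈ F, (lp.singleContinuousLinearMap ℝ (fun _ : ℤ => V) 2 k).comp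
    (lp.evalCLM ℝ (fun _ : ℤ => V) 2 k)

theorem truncateCoeff_apply (h : HartleyCoeff V) : truncateCoeff F K h =
    K • ∑ k ∈ F, lp.singleContinuousLinearMap ℝ (fun _ : ℤ => V) 2 k (h k) := by
  simp only [truncateCoeff, smul_apply, sum_apply]
  rfl

theorem inner_truncateCoeff (h : HartleyCoeff V) :
    inner ℝ (truncateCoeff F K h) h = K * ∑ k ∈ F, ‖h k‖ ^ 2 := by
  rw [truncateCoeff_apply, real_inner_smul_left, sum_inner]
  simp only [lp.singleContinuousLinearMap_apply, lp.inner_single_left, real_inner_self_eq_norm_sq]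

theorem contDiff_truncateCoeff_translateCoeff {r : WithTop ℕ∞} (x : HartleyCoeff V) :
    ContDiff ℝ r fun τ => truncateCoeff F K (translateCoeff τ x) := by
  simp_rw [truncateCoeff_apply, translateCoeff_apply]
  refine ContDiff.const_smul K (ContDiff.sum fun k _ => ContDiff.continuousLinearMap_comp
    (lp.singleContinuousLinearMap ℝ (fun _ : ℤ => V) 2 k) (ContDiff.sub ?_ ?_))
  · exact (Real.contDiff_cos.comp (contDiff_const.mul contDiff_id)).smul contDiff_const
  · exact (Real.contDiff_sin.comp (contDiff_const.mul contDiff_id)).smul contDiff_const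

end Truncation

section CriticalPoints

variable {p : ℝ} (hp : p < 8 / 3) (hs : 3 / 2 < 3 * p / 2 - 2) {n : ℕ}

theorem energy_translateCoeff (lam τ : ℝ) (x : HartleyCoeff (EuclideanSpace ℝ (Fin n))) :
    energy hp hs lam (translateCoeff τ x) = energy hp hs lam x := by
  have hspeed : ∫ u in (0 : ℝ)..1, ‖sobolevVelocity hs x (u + τ)‖ ^ 2 =
      ∫ u in (0 : ℝ)..1, ‖sobolevVelocity hs x u‖ ^ 2 := by
    have hper : Function.Periodic (fun u => ‖sobolevVelocity hs x u‖ ^ 2) 1 := fun u => by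
      simp only [sobolevVelocity_periodic hs x u]
    rw [intervalIntegral.integral_comp_add_right fun u => ‖sobolevVelocity hs x u‖ ^ 2, zero_add,
      add_comm 1 τ, hper.intervalIntegral_add_eq τ 0, zero_add]
  rw [energy, energy, norm_gramCLM_translateCoeff, funext (sobolevCurve_translateCoeff hs τ x),
    funext (sobolevVelocity_translateCoeff hs τ x), hspeed,
    menger_comp_add p 2 τ (sobolevCurve_periodic hs x) (sobolevVelocity_periodic hs x)]

variable {lam : ℝ} {x : HartleyCoeff (EuclideanSpace ℝ (Fin n))}

theorem fderiv_energy_translateCoeff_eq_zero (τ : ℝ)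
    (hd : DifferentiableAt ℝ (energy hp hs lam) x) (hx : fderiv ℝ (energy hp hs lam) x = 0) :
    fderiv ℝ (energy hp hs lam) (translateCoeff τ x) = 0 := by
  have hcrit : HasFDerivAt (energy hp hs lam)
      (0 : HartleyCoeff (EuclideanSpace ℝ (Fin n)) →L[ℝ] ℝ)
      (translateCoeff (-τ) (translateCoeff τ x)) := by
    rw [translateCoeff_neg_translateCoeff, ← hx]
    exact hd.hasFDerivAt
  have hcomp := hcrit.comp (translateCoeff τ x)
    (translateCoeff (-τ)).toContinuousLinearMap.hasFDerivAt
  rw [ContinuousLinearMap.zero_comp] at hcomp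
  exact (hcomp.congr_of_eventuallyEq (Eventually.of_forall fun y =>
    (energy_translateCoeff hp hs lam (-τ) y).symm)).fderiv

variable (hinj : InjCircle (sobolevCurve hs x)) (hunit : ∀ u, ‖sobolevVelocity hs x u‖ = 1)
  (hcrit : fderiv ℝ (energy hp hs lam) x = 0)
include hinj hunit hcrit

theorem contDiffAt_translateCoeff_of_fderiv_energy_eq_zero :
    ContDiffAt ℝ (⊤ : ℕ∞) (fun τ => translateCoeff τ x) 0 := by
  have hsmooth := contDiffAt_energy hp hs lam hinj hunit
  obtain ⟨F, K, c, hc, hco⟩ := exists_coercive_fderiv_fderiv_energy hp hs lam hinj hunit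
  refine contDiffAt_orbit_of_coercive (G := energy hp hs lam) (by rwa [translateCoeff_zero])
    (continuousAt_translateCoeff x) (Eventually.of_forall fun τ =>
      fderiv_energy_translateCoeff_eq_zero hp hs τ (hsmooth.differentiableAt (by simp)) hcrit)
    (truncateCoeff F K) (contDiff_truncateCoeff_translateCoeff F K x).contDiffAt
    ⟨c, hc, fun h => ?_⟩
  rw [translateCoeff_zero, inner_truncateCoeff]
  exact hco h

theorem contDiff_sobolevCurve_of_fderiv_energy_eq_zero :
    ContDiff ℝ (⊤ : ℕ∞) (sobolevCurve hs x) := by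
  have horbit := contDiffAt_translateCoeff_of_fderiv_energy_eq_zero hp hs hinj hunit hcrit
  refine contDiff_iff_contDiffAt.mpr fun u => ?_
  let eval : HartleyCoeff (EuclideanSpace ℝ (Fin n)) →L[ℝ] EuclideanSpace ℝ (Fin n) :=
    (BoundedContinuousFunction.evalCLM ℝ u).comp (sobolevCurve hs)
  have hshift : ContDiffAt ℝ (⊤ : ℕ∞) (fun τ => sobolevCurve hs x (u + τ)) 0 := by
    simp_rw [← sobolevCurve_translateCoeff]
    exact eval.contDiff.contDiffAt.comp (0 : ℝ) horbit
  have hcomp := ContDiffAt.comp (f := fun v : ℝ => v - u) u (by rwa [sub_self])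
    (contDiffAt_id.sub contDiffAt_const)
  simpa only [Function.comp_def, add_sub_cancel] using hcomp

end CriticalPoints

/-! ### Stationary curves are critical points -/

section SingleFrequency

variable {V : Type*} [NormedAddCommGroup V] [NormedSpace ℝ V] [CompleteSpace V] {s : ℝ}
  (hs : 3 / 2 < s) (k : ℤ) (v : V)

theorem sobolevCurve_single (u : ℝ) :
    sobolevCurve hs (lp.single 2 k v) u = hartley k u • sobolevWeight s k • v := by
  rw [sobolevCurve_apply, hartleySeries, tsum_eq_single k]
  · rw [positionCoeff, lp.single_apply_self]
  · intro j hj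
    rw [positionCoeff, lp.single_apply_ne _ _ _ hj, smul_zero, smul_zero]

theorem contDiff_sobolevCurve_single {r : WithTop ℕ∞} :
    ContDiff ℝ r (sobolevCurve hs (lp.single 2 k v)) := by
  rw [funext (sobolevCurve_single hs k v)]
  unfold hartley
  exact ((Real.contDiff_cos.comp (contDiff_const.mul contDiff_id)).add
    (Real.contDiff_sin.comp (contDiff_const.mul contDiff_id))).smul contDiff_const

end SingleFrequency

theorem hasDerivAt_meanCLM_innerBCF {V : Type*} [NormedAddCommGroup V] [InnerProductSpace ℝ V]
    (f g : ℝ →ᵇ V) : HasDerivAt (fun τ : ℝ => meanCLM (innerBCF (f + τ • g) (f + τ • g)))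
      (2 * meanCLM (innerBCF f g)) 0 := by
  have hexpand : ∀ τ : ℝ, meanCLM (innerBCF (f + τ • g) (f + τ • g)) =
      meanCLM (innerBCF f f) + τ * (2 * meanCLM (innerBCF f g)) +
        τ ^ 2 * meanCLM (innerBCF g g) := fun τ => by
    simp only [map_add, map_smul, add_apply, smul_apply, smul_eq_mul, innerBCF_comm g f]
    ring
  rw [funext hexpand]
  refine ((((hasDerivAt_id (0 : ℝ)).mul_const (2 * meanCLM (innerBCF f g))).const_add
    (meanCLM (innerBCF f f))).add
      ((hasDerivAt_pow 2 (0 : ℝ)).mul_const (meanCLM (innerBCF g g)))).congr_deriv ?_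
  simp

/-- Stationarity of a curve `γ` with derivative `γ'` for the energy `E_{p,2}` with respect to fixed
length, with Lagrange multiplier `lam`. -/
def IsStationaryAtFixedLength {n : ℕ} (p lam : ℝ) (γ γ' : ℝ → EuclideanSpace ℝ (Fin n)) : Prop :=
  ∀ h : ℝ → EuclideanSpace ℝ (Fin n), ContDiff ℝ (⊤ : ℕ∞) h → Function.Periodic h 1 →
    ∃ L : ℝ,
      Tendsto (fun τ : ℝ =>
          ((menger p 2 (fun u => γ u + τ • h u) (fun u => γ' u + τ • deriv h u)).toReal
            - (menger p 2 γ γ').toReal) / τ) (𝓝[≠] (0 : ℝ)) (𝓝 L) ∧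
      L + lam * ∫ u in Ico (0 : ℝ) 1, (inner ℝ (γ' u) (deriv h u) : ℝ) = 0

theorem menger_congr_ae {n : ℕ} (p q : ℝ) (f : ℝ → EuclideanSpace ℝ (Fin n))
    {g g' : ℝ → EuclideanSpace ℝ (Fin n)} (h : g =ᵐ[volume] g') :
    menger p q f g = menger p q f g' := by
  have hrestrict : ∀ᵐ u ∂(volume.restrict (Ico (0 : ℝ) 1)), g u = g' u := ae_restrict_of_ae h
  unfold menger
  refine lintegral_congr_ae (hrestrict.mono fun u hu => ?_)
  refine lintegral_congr_ae (hrestrict.mono fun v hv => ?_)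
  refine lintegral_congr_ae (hrestrict.mono fun w hw => ?_)
  simp only [hu, hv, hw]

theorem IsStationaryAtFixedLength.congr_ae {n : ℕ} {p lam : ℝ}
    {γ γ' v : ℝ → EuclideanSpace ℝ (Fin n)} (hγ : IsStationaryAtFixedLength p lam γ γ')
    (hv : γ' =ᵐ[volume] v) : IsStationaryAtFixedLength p lam γ v := by
  intro h hh hper
  obtain ⟨L, hL, hL0⟩ := hγ h hh hper
  refine ⟨L, hL.congr fun τ => ?_, ?_⟩
  · have hvar : (fun u => γ' u + τ • deriv h u) =ᵐ[volume] fun u => v u + τ • deriv h u :=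
      hv.mono fun u hu => by simp only [hu]
    rw [menger_congr_ae p 2 _ hvar, menger_congr_ae p 2 _ hv]
  · have hpairing : ∫ u in Ico (0 : ℝ) 1, (inner ℝ (v u) (deriv h u) : ℝ) =
        ∫ u in Ico (0 : ℝ) 1, (inner ℝ (γ' u) (deriv h u) : ℝ) :=
      integral_congr_ae ((ae_restrict_of_ae hv).mono fun u hu => by simp only [hu])
    rw [hpairing, hL0]

section CriticalPoint

variable {p : ℝ} (hp : p < 8 / 3) (hs : 3 / 2 < 3 * p / 2 - 2) {n : ℕ}
  {x : HartleyCoeff (EuclideanSpace ℝ (Fin n))} (hinj : InjCircle (sobolevCurve hs x))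
  (hunit : ∀ u, ‖sobolevVelocity hs x u‖ = 1)
include hinj hunit

theorem hasDerivAt_toReal_menger (lam : ℝ) (d : HartleyCoeff (EuclideanSpace ℝ (Fin n))) :
    HasDerivAt (fun τ : ℝ => (menger p 2 (fun u => sobolevCurve hs x u + τ • sobolevCurve hs d u)
      (fun u => sobolevVelocity hs x u + τ • sobolevVelocity hs d u)).toReal)
      (fderiv ℝ (energy hp hs lam) x d -
        lam * meanCLM (innerBCF (sobolevVelocity hs x) (sobolevVelocity hs d))) 0 := by
  have henergy := hasDerivAt_comp_line_zero
    ((contDiffAt_energy hp hs lam hinj hunit).differentiableAt (by simp)) d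
  have hlength := (hasDerivAt_meanCLM_innerBCF (sobolevVelocity hs x)
    (sobolevVelocity hs d)).const_mul (lam / 2)
  have hpenalty := (hasDerivAt_norm_sq_bilinear_line (gramCLM hp hs)
    (gramCLM_self_eq_zero hp hs hunit) d).const_mul 3
  refine (((henergy.sub hlength).sub hpenalty).congr_deriv ?_).congr_of_eventuallyEq
    (Eventually.of_forall fun τ => ?_)
  · ring
  · have hcurve : ⇑(sobolevCurve hs (x + τ • d)) =
        fun u => sobolevCurve hs x u + τ • sobolevCurve hs d u := by
      rw [map_add, map_smul]
      rfl
    have hvelocity : ⇑(sobolevVelocity hs (x + τ • d)) =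
        fun u => sobolevVelocity hs x u + τ • sobolevVelocity hs d u := by
      rw [map_add, map_smul]
      rfl
    simp only [Pi.sub_apply, energy, hcurve, hvelocity, meanCLM_apply, innerBCF_apply,
      real_inner_self_eq_norm_sq, BoundedContinuousFunction.coe_add,
      BoundedContinuousFunction.coe_smul, Pi.add_apply]
    ring

theorem fderiv_energy_eq_zero_of_isStationaryAtFixedLength {lam : ℝ}
    (hstat : IsStationaryAtFixedLength p lam (sobolevCurve hs x) (sobolevVelocity hs x)) :
    fderiv ℝ (energy hp hs lam) x = 0 := by
  refine lp.ext_continuousLinearMap (by simp) fun k => ContinuousLinearMap.ext fun v => ?_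
  set d : HartleyCoeff (EuclideanSpace ℝ (Fin n)) := lp.single 2 k v
  change fderiv ℝ (energy hp hs lam) x d = 0
  obtain ⟨L, hL, hL0⟩ := hstat (sobolevCurve hs d) (contDiff_sobolevCurve_single hs k v)
    (sobolevCurve_periodic hs d)
  have hderiv : deriv (sobolevCurve hs d) = sobolevVelocity hs d :=
    funext fun u => (hasDerivAt_sobolevCurve hs d u).deriv
  rw [hderiv] at hL hL0
  have hslope := hasDerivAt_iff_tendsto_slope_zero.mp
    (hasDerivAt_toReal_menger hp hs hinj hunit lam d)
  have hL_eq := tendsto_nhds_unique hslope (hL.congr fun τ => by simp [div_eq_inv_mul])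
  rw [← hL_eq, integral_Ico_eq_integral_Ioc,
    ← intervalIntegral.integral_of_le zero_le_one] at hL0
  simp only [meanCLM_apply, innerBCF_apply] at hL0
  linarith

end CriticalPoint

/-! ### Hartley coefficients of a Sobolev curve -/

section HartleyCoef

variable {n : ℕ} {f : ℝ → EuclideanSpace ℝ (Fin n)}

theorem fourier_coe_eq_exp (k : ℤ) (u : ℝ) : fourier k (u : AddCircle (1 : ℝ)) =
    Complex.exp (((2 * Real.pi * (k : ℝ) * u : ℝ) : ℂ) * Complex.I) := by
  rw [fourier_coe_apply]
  congr 1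
  push_cast
  ring

theorem fourierCoeff_eq_fourierCoef {F : AddCircle (1 : ℝ) → ℂ} {j : Fin n}
    (hF : ∀ u : ℝ, F u = (f u j : ℂ)) (k : ℤ) : fourierCoeff F k = fourierCoef f k j := by
  rw [fourierCoeff_eq_intervalIntegral _ k 0, zero_add,
    intervalIntegral.integral_of_le zero_le_one, ← integral_Ico_eq_integral_Ioc, div_one, one_smul]
  refine integral_congr_ae (ae_of_all _ fun u => ?_)
  simp only [hF, fourier_coe_eq_exp, smul_eq_mul]
  rw [mul_comm]
  congr 2
  push_cast
  ring

theorem hasSum_fourierCoef (hf : Continuous f) (hper : Function.Periodic f 1)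
    (hsum : Summable fun k => ‖fourierCoef f k‖) (j : Fin n) (u : ℝ) :
    HasSum (fun k : ℤ => fourierCoef f k j *
      Complex.exp (((2 * Real.pi * (k : ℝ) * u : ℝ) : ℂ) * Complex.I)) (f u j : ℂ) := by
  have hperj : Function.Periodic (fun u => (f u j : ℂ)) 1 := fun u => by simp only [hper u]
  have hcont : Continuous fun u => (f u j : ℂ) :=
    Complex.continuous_ofReal.comp ((EuclideanSpace.proj (𝕜 := ℝ) j).continuous.comp hf)
  let F : C(AddCircle (1 : ℝ), ℂ) := ⟨hperj.lift, continuous_coinduced_dom.mpr hcont⟩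
  have hF : ∀ u : ℝ, F u = (f u j : ℂ) := hperj.lift_coe
  have hcoeff := fourierCoeff_eq_fourierCoef hF
  have hsummable : Summable (fourierCoeff F) := Summable.of_norm_bounded hsum fun k => by
    rw [hcoeff]
    exact PiLp.norm_apply_le (fourierCoef f k) j
  have hseries := has_pointwise_sum_fourier_series_of_summable hsummable (u : AddCircle (1 : ℝ))
  simpa only [hF, hcoeff, fourier_coe_eq_exp, smul_eq_mul] using hseries

/-- The coefficients of a `1`-periodic function with respect to the Hartley basis: the real part of
`e^{-iθ}` minus its imaginary part is `cas θ`. -/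
def hartleyCoef (f : ℝ → EuclideanSpace ℝ (Fin n)) (k : ℤ) : EuclideanSpace ℝ (Fin n) :=
  WithLp.toLp 2 fun j => (fourierCoef f k j).re - (fourierCoef f k j).im

theorem norm_hartleyCoef_sq_le (f : ℝ → EuclideanSpace ℝ (Fin n)) (k : ℤ) :
    ‖hartleyCoef f k‖ ^ 2 ≤ 2 * ‖fourierCoef f k‖ ^ 2 := by
  rw [EuclideanSpace.real_norm_sq_eq, EuclideanSpace.norm_sq_eq, Finset.mul_sum]
  refine Finset.sum_le_sum fun j _ => ?_
  rw [← Complex.normSq_eq_norm_sq, Complex.normSq_apply, hartleyCoef]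
  nlinarith [sq_nonneg ((fourierCoef f k j).re + (fourierCoef f k j).im)]

theorem hasSum_hartleyCoef (hf : Continuous f) (hper : Function.Periodic f 1)
    (hsum : Summable fun k => ‖fourierCoef f k‖) (j : Fin n) (u : ℝ) :
    HasSum (fun k : ℤ => hartley k u * hartleyCoef f k j) (f u j) := by
  -- The Hartley series at `u` is `Re` of the Fourier series at `u` minus `Im` of that at `-u`.
  have hre := Complex.hasSum_re (hasSum_fourierCoef hf hper hsum j u)
  have him := Complex.hasSum_im (hasSum_fourierCoef hf hper hsum j (-u))
  have hsub := hre.sub him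
  rw [Complex.ofReal_re, Complex.ofReal_im, sub_zero] at hsub
  refine hsub.congr_fun fun k => ?_
  simp only [hartley, hartleyCoef, Complex.mul_re, Complex.mul_im, Complex.exp_ofReal_mul_I_re,
    Complex.exp_ofReal_mul_I_im, mul_neg, Real.cos_neg, Real.sin_neg]
  ring

theorem summable_norm_of_summable_one_add_sq_rpow_mul {E : Type*} [SeminormedAddCommGroup E]
    {s : ℝ} (hs : 1 / 2 < s) {c : ℤ → E}
    (hc : Summable fun k : ℤ => (1 + (k : ℝ) ^ 2) ^ s * ‖c k‖ ^ 2) :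
    Summable fun k => ‖c k‖ := by
  refine Summable.of_nonneg_of_le (fun _ => norm_nonneg _) (fun k => ?_)
    ((summable_one_add_sq_rpow hs).add hc)
  have hpos : 0 < (1 + (k : ℝ) ^ 2) ^ s := by positivity
  rw [Real.rpow_neg (by positivity)]
  set A := (1 + (k : ℝ) ^ 2) ^ s
  have hsq : 0 ≤ A * (‖c k‖ - A⁻¹) ^ 2 := by positivity
  have hexpand : A * (‖c k‖ - A⁻¹) ^ 2 = A * ‖c k‖ ^ 2 - 2 * ‖c k‖ + A⁻¹ := by
    field_simp
    ring
  linarith [norm_nonneg (c k)]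

theorem memℓp_inv_sobolevWeight_smul_hartleyCoef {s : ℝ}
    (hsob : Summable fun k : ℤ => (1 + (k : ℝ) ^ 2) ^ s * ‖fourierCoef f k‖ ^ 2) :
    Memℓp (fun k => (sobolevWeight s k)⁻¹ • hartleyCoef f k) 2 := by
  refine memℓp_gen ?_
  simp only [ENNReal.toReal_ofNat, Real.rpow_ofNat]
  refine Summable.of_nonneg_of_le (fun _ => by positivity) (fun k => ?_) (hsob.mul_left 2)
  rw [norm_smul, mul_pow, norm_inv, Real.norm_of_nonneg (sobolevWeight_pos s k).le, inv_pow,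
    sobolevWeight_sq, Real.rpow_neg (by positivity), inv_inv, mul_left_comm]
  exact mul_le_mul_of_nonneg_left (norm_hartleyCoef_sq_le f k) (by positivity)

theorem exists_sobolevCurve_eq {s : ℝ} (hs : 3 / 2 < s) (hf : Continuous f)
    (hper : Function.Periodic f 1)
    (hsob : Summable fun k : ℤ => (1 + (k : ℝ) ^ 2) ^ s * ‖fourierCoef f k‖ ^ 2) :
    ∃ a : HartleyCoeff (EuclideanSpace ℝ (Fin n)), ⇑(sobolevCurve hs a) = f := by
  let a : HartleyCoeff (EuclideanSpace ℝ (Fin n)) :=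
    ⟨_, memℓp_inv_sobolevWeight_smul_hartleyCoef hsob⟩
  have ha : positionCoeff s a = hartleyCoef f := funext fun k =>
    smul_inv_smul₀ (sobolevWeight_pos s k).ne' _
  have hsummable := summable_norm_positionCoeff (show 1 / 2 < s by linarith) a
  refine ⟨a, funext fun u => ?_⟩
  rw [sobolevCurve_apply]
  rw [ha] at hsummable ⊢
  ext j
  exact ((EuclideanSpace.proj (𝕜 := ℝ) j).hasSum
    (summable_hartley_smul hsummable u).hasSum).unique
    (hasSum_hartleyCoef hf hper
      (summable_norm_of_summable_one_add_sq_rpow_mul (by linarith) hsob) j u)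

end HartleyCoef

namespace CurvePair

variable {n : ℕ} {γ γ' : ℝ → EuclideanSpace ℝ (Fin n)} (hγ : CurvePair γ γ')
include hγ

theorem locallyIntegrable {C : ℝ} (hC : ∀ᵐ u, ‖γ' u‖ ≤ C) : LocallyIntegrable γ' volume :=
  (locallyIntegrable_const C).mono hγ.meas'.aestronglyMeasurable
    (hC.mono fun _ hu => hu.trans (Real.le_norm_self C))

theorem continuous (hint : LocallyIntegrable γ' volume) : Continuous γ := by
  rw [funext hγ.primitive]
  exact continuous_const.add (intervalIntegral.continuous_primitive
    (fun _ _ => (hint.integrableOn_isCompact isCompact_uIcc).intervalIntegrable) 0)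

theorem ae_hasDerivAt (hint : LocallyIntegrable γ' volume) : ∀ᵐ u, HasDerivAt γ (γ' u) u := by
  filter_upwards [LocallyIntegrable.ae_hasDerivAt_integral hint] with u hu
  rw [funext hγ.primitive]
  exact (hu 0).const_add _

end CurvePair

/-- **Regularity of stationary points.** For `p ∈ (7/3, 8/3)`, any injective
arc-length parametrized curve `γ ∈ W^{3p/2-2,2}(ℝ/ℤ,ℝⁿ)` that is a
stationary point of `E_{p,2}` with respect to fixed length — i.e. there is a
Lagrange multiplier `λ ∈ ℝ` with
`δE_{p,2}(γ;h) + λ ∫ ⟨γ',h'⟩ = 0` for all smooth periodic `h` — is `C^∞`. -/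
theorem regularity_of_stationary_points (n : ℕ) (p : ℝ)
    (hp : p ∈ Ioo (7/3 : ℝ) (8/3))
    (γ γ' : ℝ → EuclideanSpace ℝ (Fin n))
    (hγ : CurvePair γ γ') (harc : ∀ᵐ u : ℝ, ‖γ' u‖ = 1) (hinj : InjCircle γ)
    (hsob : Summable (fun k : ℤ =>
      (1 + (k:ℝ)^2) ^ (3*p/2 - 2) * ‖fourierCoef γ k‖^2))
    (hstat : ∃ lam : ℝ, ∀ h : ℝ → EuclideanSpace ℝ (Fin n),
      ContDiff ℝ (⊤ : ℕ∞) h → Function.Periodic h 1 →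
      ∃ L : ℝ,
        Tendsto (fun τ : ℝ =>
            ((menger p 2 (fun u => γ u + τ • h u)
                (fun u => γ' u + τ • deriv h u)).toReal
              - (menger p 2 γ γ').toReal) / τ)
          (𝓝[≠] (0:ℝ)) (𝓝 L) ∧
        L + lam * ∫ u in Ico (0:ℝ) 1, (inner ℝ (γ' u) (deriv h u) : ℝ) = 0) :
    ContDiff ℝ (⊤ : ℕ∞) γ := by
  have hs : 3 / 2 < 3 * p / 2 - 2 := by linarith [hp.1]
  have hint : LocallyIntegrable γ' volume := hγ.locallyIntegrable (harc.mono fun _ hu => hu.le)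
  obtain ⟨x, rfl⟩ := exists_sobolevCurve_eq hs (hγ.continuous hint) hγ.periodic hsob
  have hvelocity : γ' =ᵐ[volume] sobolevVelocity hs x :=
    (hγ.ae_hasDerivAt hint).mono fun u hu => hu.unique (hasDerivAt_sobolevCurve hs x u)
  have hunit : ∀ u, ‖sobolevVelocity hs x u‖ = 1 := by
    refine congr_fun ((Continuous.ae_eq_iff_eq volume (sobolevVelocity hs x).continuous.norm
      (continuous_const (y := (1 : ℝ)))).mp ?_)
    filter_upwards [hvelocity, harc] with u hu hone
    rw [← hu, hone]
  obtain ⟨lam, hlam⟩ := hstat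
  have hstationary : IsStationaryAtFixedLength p lam (sobolevCurve hs x) (sobolevVelocity hs x) :=
    IsStationaryAtFixedLength.congr_ae hlam hvelocity
  exact contDiff_sobolevCurve_of_fderiv_energy_eq_zero hp.2 hs hinj hunit
    (fderiv_energy_eq_zero_of_isStationaryAtFixedLength hp.2 hs hinj hunit hstationary)
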